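/- Let N ≥ 2. There exists a one-parameter family Ω(t) of open bounded sets of ℝ^N smoothly converging to the unit ball as t → 0, with δP(Ω(t)) > 0 and δλ(Ω(t)) > 0 for all small t > 0, such that lim_{t→0} δP(Ω(t))/δλ(Ω(t)) = C_N; that is, the constant C_N in the lower bound liminf_{t→0} δP(Ω(t))/δλ(Ω(t)) ≥ C_N is optimal. -/

import Mathlib

open MeasureTheory Metric Set Filter Topology
open scoped RealInnerProductSpace

noncomputable section

abbrev euc (N : ℕ) := EuclideanSpace ℝ (Fin N)

/-- Bessel function of the first kind of order `ν`, via its power series. -/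
def besselJ (ν : ℝ) (x : ℝ) : ℝ :=
  ∑' m : ℕ, ((-1 : ℝ) ^ m / (m.factorial * Real.Gamma (m + ν + 1))) *
    (x / 2) ^ (2 * (m : ℝ) + ν)

/-- First positive zero of the Bessel function `J_ν`. -/
def besselJzero (ν : ℝ) : ℝ := sInf {x : ℝ | 0 < x ∧ besselJ ν x = 0}

/-- Volume of the unit ball of `ℝ^N`. -/
def ballVol (N : ℕ) : ℝ := (volume (ball (0 : euc N) 1)).toReal

/-- Perimeter: `(N-1)`-dimensional Hausdorff measure of the topological boundary. -/
def perim (N : ℕ) (Ω : Set (euc N)) : ℝ := (μH[(N : ℝ) - 1] (frontier Ω)).toReal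

/-- First Dirichlet Laplacian eigenvalue: infimum of Rayleigh quotients over nonzero
smooth functions compactly supported in `Ω`. -/
def firstEigenvalue (N : ℕ) (Ω : Set (euc N)) : ℝ :=
  sInf { R : ℝ | ∃ u : euc N → ℝ, ContDiff ℝ (⊤ : ℕ∞) u ∧ HasCompactSupport u ∧
    tsupport u ⊆ Ω ∧ u ≠ 0 ∧
    R = (∫ x, ‖gradient u x‖ ^ 2) / (∫ x, u x ^ 2) }

/-- Radius of the ball `Ω♯` with the same Lebesgue measure as `Ω`. -/
def sharpRadius (N : ℕ) (Ω : Set (euc N)) : ℝ :=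
  ((volume Ω).toReal / ballVol N) ^ ((1 : ℝ) / N)

/-- Isoperimetric deficit `δP(Ω) = Per(Ω)/Per(Ω♯) - 1`. -/
def perDeficit (N : ℕ) (Ω : Set (euc N)) : ℝ :=
  perim N Ω / perim N (ball (0 : euc N) (sharpRadius N Ω)) - 1

/-- Faber-Krahn deficit `δλ(Ω) = λ(Ω)/λ(Ω♯) - 1`. -/
def fkDeficit (N : ℕ) (Ω : Set (euc N)) : ℝ :=
  firstEigenvalue N Ω / firstEigenvalue N (ball (0 : euc N) (sharpRadius N Ω)) - 1

/-- A one-parameter family `Ω t` of subsets of `ℝ^N` smoothly converges to `Ω₀` as `t → 0`. -/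
structure SmoothlyConverges (N : ℕ) (Ω : ℝ → Set (euc N)) (Ω₀ : Set (euc N)) where
  δ : ℝ
  δ_pos : 0 < δ
  Φ : ℝ → euc N → euc N
  Φinv : ℝ → euc N → euc N
  left_inv : ∀ t ∈ Ico (0 : ℝ) δ, Function.LeftInverse (Φinv t) (Φ t)
  right_inv : ∀ t ∈ Ico (0 : ℝ) δ, Function.RightInverse (Φinv t) (Φ t)
  smooth_x : ∀ t ∈ Ico (0 : ℝ) δ, ContDiff ℝ (⊤ : ℕ∞) (Φ t)
  smooth_x_inv : ∀ t ∈ Ico (0 : ℝ) δ, ContDiff ℝ (⊤ : ℕ∞) (Φinv t)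
  smooth_t : ∀ x, ContDiffOn ℝ (⊤ : ℕ∞) (fun t => Φ t x) (Ico (0 : ℝ) δ)
  smooth_t_inv : ∀ x, ContDiffOn ℝ (⊤ : ℕ∞) (fun t => Φinv t x) (Ico (0 : ℝ) δ)
  init : Ω 0 = Ω₀
  image : ∀ t ∈ Ico (0 : ℝ) δ, Ω t = Φ t '' Ω₀

/-- The Laplacian of `f : ℝ^N → ℝ`, as the trace of the second derivative. -/
def lap (N : ℕ) (f : euc N → ℝ) (x : euc N) : ℝ :=
  ∑ i : Fin N,
    iteratedFDeriv ℝ 2 f x ![EuclideanSpace.single i 1, EuclideanSpace.single i 1]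

/-- The divergence of a vector field on `ℝ^N`. -/
def diver (N : ℕ) (f : euc N → euc N) (x : euc N) : ℝ :=
  ∑ i : Fin N, ⟪fderiv ℝ f x (EuclideanSpace.single i 1), (EuclideanSpace.single i 1 : euc N)⟫

/-- The constant `G_N`: the modulus of the gradient on the boundary of the normalized first
eigenfunction of the unit ball. -/
def GN (N : ℕ) : ℝ :=
  (besselJzero ((N : ℝ) / 2 - 1)) ^ 2 *
      deriv (besselJ ((N : ℝ) / 2 - 1)) (besselJzero ((N : ℝ) / 2 - 1)) /
    Real.sqrt (N * ballVol N *
      ∫ r in (0 : ℝ)..(besselJzero ((N : ℝ) / 2 - 1)), r * besselJ ((N : ℝ) / 2 - 1) r ^ 2)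

/-- The optimal constant `C_N` of the paper. -/
def CN (N : ℕ) : ℝ :=
  (N * (N + 1) *
      ∫ r in (0 : ℝ)..(besselJzero ((N : ℝ) / 2 - 1)), r * besselJ ((N : ℝ) / 2 - 1) r ^ 2) /
    (2 * (besselJzero ((N : ℝ) / 2 - 1) *
        deriv (besselJ ((N : ℝ) / 2 - 1)) (besselJzero ((N : ℝ) / 2 - 1))) ^ 2 *
      ((besselJzero ((N : ℝ) / 2 - 1)) ^ 2 - N))

end

/-!
The optimal family consists of the ellipsoids `‖x‖² + t (x₀² - x₁²) < 1`: to first order in `t` they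
perturb the ball by a spherical harmonic of degree two, the lowest degree that is not accounted for
by dilations and translations.

The perimeter of the ellipsoid is given by the area formula for linear maps as a multiple of the
mean of `√(1 + t (x₀² - x₁²))` over the unit sphere, and is expanded to order `t²` with the second
and fourth moments of the sphere.

The first eigenvalue is found to order `t²` by comparison with exact solutions of `Δv + lam v = 0`.
For a radial solution `F`, the functions `D F`, `D² F` and `D' F`, where `D = ∂₀² - ∂₁²` and
`D' = ∂₀² + ∂₁²`, are solutions too, and some combination `v` of the four takes, on the boundary of
the ellipsoid, values that are constant up to `o(t²)`. For `lam = λ(ball) (1 + m t²)` that constant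
is a multiple of `t²` which changes sign at one value of `m`. When it is positive, `v > 0` on the
ellipsoid and the eigenvalue is at least `lam` (Barta's principle); when it is negative, the
positive part of `v` is an admissible test function and the eigenvalue is at most `lam`.
-/

/-! ### The Bessel–Clifford function -/

/-- Coefficients of the entire function `besselClifford μ`. -/
noncomputable def besselCliffordCoeff (μ : ℝ) (m : ℕ) : ℝ :=
  (-1 : ℝ) ^ m / (m.factorial * Real.Gamma (m + μ + 1))

/-- The Bessel–Clifford function, the entire function `g_μ` with
`J_μ(x) = (x / 2) ^ μ * g_μ(x ^ 2 / 4)`. -/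
noncomputable def besselClifford (μ z : ℝ) : ℝ :=
  ∑' m : ℕ, besselCliffordCoeff μ m * z ^ m

section BesselClifford

variable {μ : ℝ}

lemma gamma_add_one_le_gamma_natCast_add (hμ : 0 ≤ μ) (m : ℕ) :
    Real.Gamma (μ + 1) ≤ Real.Gamma (m + μ + 1) := by
  induction m with
  | zero => simp
  | succ k ih =>
    have hshift : ((k + 1 : ℕ) : ℝ) + μ + 1 = (k + μ + 1) + 1 := by push_cast; ring
    have hpos : 0 < Real.Gamma (k + μ + 1) := Real.Gamma_pos_of_pos (by positivity)
    have : (0 : ℝ) ≤ k + μ := by positivity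
    rw [hshift, Real.Gamma_add_one (s := k + μ + 1) (by positivity)]
    nlinarith

lemma abs_besselCliffordCoeff_le (hμ : 0 ≤ μ) (m : ℕ) :
    |besselCliffordCoeff μ m| ≤ (Real.Gamma (μ + 1))⁻¹ * (1 / m.factorial) := by
  have : 0 < Real.Gamma (μ + 1) := Real.Gamma_pos_of_pos (by positivity)
  have hle := gamma_add_one_le_gamma_natCast_add hμ m
  have : (0 : ℝ) < m.factorial := by positivity
  unfold besselCliffordCoeff
  rw [abs_div, abs_pow, abs_neg, abs_one, one_pow, abs_of_pos (by positivity), one_div, mul_inv,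
    one_div, mul_comm]
  gcongr

lemma summable_besselCliffordCoeff_mul_pow (hμ : 0 ≤ μ) (z : ℝ) :
    Summable fun m => besselCliffordCoeff μ m * z ^ m := by
  refine .of_norm_bounded
    ((Real.summable_pow_div_factorial |z|).mul_left (Real.Gamma (μ + 1))⁻¹) fun m => ?_
  rw [norm_mul, norm_pow, Real.norm_eq_abs, Real.norm_eq_abs]
  calc |besselCliffordCoeff μ m| * |z| ^ m
      ≤ (Real.Gamma (μ + 1))⁻¹ * (1 / m.factorial) * |z| ^ m := by
        gcongr; exact abs_besselCliffordCoeff_le hμ m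
    _ = (Real.Gamma (μ + 1))⁻¹ * (|z| ^ m / m.factorial) := by ring

lemma besselCliffordCoeff_succ_mul (m : ℕ) :
    besselCliffordCoeff μ (m + 1) * ((m : ℝ) + 1) = -besselCliffordCoeff (μ + 1) m := by
  have hshift : ((m + 1 : ℕ) : ℝ) + μ + 1 = m + (μ + 1) + 1 := by push_cast; ring
  unfold besselCliffordCoeff
  rw [Nat.factorial_succ, hshift, pow_succ]
  push_cast
  by_cases hG : Real.Gamma (m + (μ + 1) + 1) = 0
  · simp [hG]
  · field_simp

lemma summable_besselCliffordCoeff_deriv_bound (μ R : ℝ) :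
    Summable fun m : ℕ =>
      (Real.Gamma (μ + 1))⁻¹ * (1 / m.factorial) * (m * R ^ (m - 1)) := by
  rw [← summable_nat_add_iff 1]
  refine ((Real.summable_pow_div_factorial R).mul_left (Real.Gamma (μ + 1))⁻¹).congr fun m => ?_
  rw [Nat.factorial_succ]
  push_cast
  field_simp

lemma tsum_besselCliffordCoeff_deriv (hμ : 0 ≤ μ) (z : ℝ) :
    ∑' m : ℕ, besselCliffordCoeff μ m * (m * z ^ (m - 1)) = -besselClifford (μ + 1) z := by
  have hterm (m : ℕ) : besselCliffordCoeff μ (m + 1) * ((m + 1 : ℕ) * z ^ (m + 1 - 1)) =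
      -(besselCliffordCoeff (μ + 1) m * z ^ m) := by
    rw [Nat.add_sub_cancel, Nat.cast_succ, ← mul_assoc, besselCliffordCoeff_succ_mul, neg_mul]
  have hsum : Summable fun m : ℕ => besselCliffordCoeff μ m * (m * z ^ (m - 1)) := by
    rw [← summable_nat_add_iff 1]
    exact (summable_besselCliffordCoeff_mul_pow (by positivity) z).neg.congr
      fun m => (hterm m).symm
  rw [hsum.tsum_eq_zero_add, besselClifford, ← tsum_neg]
  simp only [hterm, Nat.cast_zero, zero_mul, mul_zero, zero_add]

lemma hasDerivAt_besselClifford (hμ : 0 ≤ μ) (z : ℝ) :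
    HasDerivAt (besselClifford μ) (-besselClifford (μ + 1) z) z := by
  have hR : 0 < |z| + 1 := by positivity
  have hbound (m : ℕ) (y : ℝ) (hy : y ∈ ball (0 : ℝ) (|z| + 1)) :
      ‖besselCliffordCoeff μ m * (m * y ^ (m - 1))‖ ≤
        (Real.Gamma (μ + 1))⁻¹ * (1 / m.factorial) * (m * (|z| + 1) ^ (m - 1)) := by
    have hy' : |y| ≤ |z| + 1 := by simpa using (mem_ball_zero_iff.1 hy).le
    have hcoeff := abs_besselCliffordCoeff_le hμ m
    rw [norm_mul, norm_mul, norm_pow, Real.norm_eq_abs, Real.norm_eq_abs, Real.norm_eq_abs,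
      Nat.abs_cast]
    gcongr
  rw [← tsum_besselCliffordCoeff_deriv hμ]
  exact hasDerivAt_tsum_of_isPreconnected (summable_besselCliffordCoeff_deriv_bound μ (|z| + 1))
    isOpen_ball (convex_ball _ _).isPreconnected
    (fun m y _ => (hasDerivAt_pow m y).const_mul _) hbound (mem_ball_self hR)
    (summable_besselCliffordCoeff_mul_pow hμ 0) (by simp)

lemma differentiable_besselClifford (hμ : 0 ≤ μ) : Differentiable ℝ (besselClifford μ) :=
  fun z => (hasDerivAt_besselClifford hμ z).differentiableAt

lemma deriv_besselClifford (hμ : 0 ≤ μ) :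
    deriv (besselClifford μ) = fun z => -besselClifford (μ + 1) z :=
  funext fun z => (hasDerivAt_besselClifford hμ z).deriv

lemma continuous_besselClifford (hμ : 0 ≤ μ) : Continuous (besselClifford μ) :=
  (differentiable_besselClifford hμ).continuous

lemma contDiff_besselClifford (hμ : 0 ≤ μ) : ContDiff ℝ (⊤ : ℕ∞) (besselClifford μ) := by
  refine contDiff_infty.2 fun n => ?_
  induction n generalizing μ with
  | zero => exact contDiff_zero.2 (continuous_besselClifford hμ)
  | succ k ih =>
    rw [Nat.cast_succ, contDiff_succ_iff_deriv, deriv_besselClifford hμ]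
    exact ⟨differentiable_besselClifford hμ, by simp, (ih (by positivity)).neg⟩

lemma besselCliffordCoeff_zero_eq (hμ : 0 ≤ μ) :
    besselCliffordCoeff μ 0 = (μ + 1) * besselCliffordCoeff (μ + 1) 0 := by
  have hrec : Real.Gamma (μ + 1 + 1) = (μ + 1) * Real.Gamma (μ + 1) :=
    Real.Gamma_add_one (by positivity)
  have : 0 < Real.Gamma (μ + 1) := Real.Gamma_pos_of_pos (by positivity)
  simp only [besselCliffordCoeff, pow_zero, Nat.factorial_zero, Nat.cast_one, one_mul,
    CharP.cast_eq_zero, zero_add, hrec]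
  field_simp

lemma besselCliffordCoeff_succ_eq (hμ : 0 ≤ μ) (m : ℕ) :
    besselCliffordCoeff μ (m + 1) =
      (μ + 1) * besselCliffordCoeff (μ + 1) (m + 1) - besselCliffordCoeff (μ + 2) m := by
  have : 0 < Real.Gamma (m + μ + 2) := Real.Gamma_pos_of_pos (by positivity)
  have hrec : Real.Gamma (m + μ + 3) = (m + μ + 2) * Real.Gamma (m + μ + 2) := by
    rw [← Real.Gamma_add_one (by positivity)]; congr 1; ring
  have h₀ : ((m + 1 : ℕ) : ℝ) + μ + 1 = m + μ + 2 := by push_cast; ring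
  have h₁ : ((m + 1 : ℕ) : ℝ) + (μ + 1) + 1 = m + μ + 3 := by push_cast; ring
  have h₂ : (m : ℝ) + (μ + 2) + 1 = m + μ + 3 := by ring
  have hne : (m : ℝ) + μ + 2 ≠ 0 := by positivity
  unfold besselCliffordCoeff
  rw [h₀, h₁, h₂, hrec, Nat.factorial_succ]
  push_cast
  field_simp
  ring

lemma besselClifford_eq_coeff_zero_add (hμ : 0 ≤ μ) (z : ℝ) :
    besselClifford μ z =
      besselCliffordCoeff μ 0 + ∑' m : ℕ, besselCliffordCoeff μ (m + 1) * z ^ (m + 1) := by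
  rw [besselClifford, (summable_besselCliffordCoeff_mul_pow hμ z).tsum_eq_zero_add, pow_zero,
    mul_one]

lemma besselClifford_recurrence (hμ : 0 ≤ μ) (z : ℝ) :
    besselClifford μ z = (μ + 1) * besselClifford (μ + 1) z - z * besselClifford (μ + 2) z := by
  have hsum₁ := (summable_nat_add_iff 1).2
    (summable_besselCliffordCoeff_mul_pow (μ := μ + 1) (by positivity) z)
  have hsum₂ := summable_besselCliffordCoeff_mul_pow (μ := μ + 2) (by positivity) z
  rw [besselClifford_eq_coeff_zero_add hμ,
    besselClifford_eq_coeff_zero_add (μ := μ + 1) (by positivity), besselClifford, mul_add,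
    ← besselCliffordCoeff_zero_eq hμ, ← tsum_mul_left, ← tsum_mul_left, add_sub_assoc,
    ← (hsum₁.mul_left _).tsum_sub (hsum₂.mul_left _)]
  congr 2
  ext m
  rw [besselCliffordCoeff_succ_eq hμ]
  ring

lemma besselClifford_zero_pos (hμ : 0 ≤ μ) : 0 < besselClifford μ 0 := by
  have hpos : 0 < Real.Gamma (μ + 1) := Real.Gamma_pos_of_pos (by positivity)
  rw [besselClifford, tsum_eq_single 0 (by intro b hb; simp [hb])]
  simpa [besselCliffordCoeff] using hpos

lemma hasDerivAt_rpow_mul_besselClifford {z : ℝ} (hμ : 0 ≤ μ) (hz : 0 < z) :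
    HasDerivAt (fun z => z ^ (μ + 1) * besselClifford (μ + 1) z)
      (z ^ μ * besselClifford μ z) z := by
  have hd := (Real.hasDerivAt_rpow_const (p := μ + 1) (Or.inl hz.ne')).mul
    (hasDerivAt_besselClifford (μ := μ + 1) (by positivity) z)
  refine hd.congr_deriv ?_
  rw [besselClifford_recurrence hμ, add_sub_cancel_right, Real.rpow_add_one hz.ne',
    show μ + 1 + 1 = μ + 2 by ring]
  ring

-- Positivity is inherited because `z ^ (μ + 1) * g_{μ+1}` is increasing where `0 < g_μ`.
lemma besselClifford_add_one_pos {Z : ℝ} (hμ : 0 ≤ μ)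
    (h : ∀ z ∈ Ioo 0 Z, 0 < besselClifford μ z) :
    ∀ z ∈ Icc 0 Z, 0 < besselClifford (μ + 1) z := by
  intro z hz
  rcases hz.1.eq_or_lt with rfl | hz0
  · exact besselClifford_zero_pos (by positivity)
  have hmono : StrictMonoOn (fun z => z ^ (μ + 1) * besselClifford (μ + 1) z) (Icc 0 Z) := by
    refine strictMonoOn_of_deriv_pos (convex_Icc _ _) (ContinuousOn.mul ?_
      (continuous_besselClifford (by positivity)).continuousOn) fun y hy => ?_
    · exact (Real.continuous_rpow_const (by positivity)).continuousOn
    · rw [interior_Icc] at hy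
      rw [(hasDerivAt_rpow_mul_besselClifford hμ hy.1).deriv]
      exact mul_pos (Real.rpow_pos_of_pos hy.1 μ) (h y hy)
  have hlt := hmono (left_mem_Icc.2 (hz.1.trans hz.2)) hz hz0
  simp only [Real.zero_rpow (by positivity : μ + 1 ≠ 0), zero_mul] at hlt
  exact (mul_pos_iff_of_pos_left (Real.rpow_pos_of_pos hz0 _)).1 hlt

-- At `z = (μ + 1) (μ + 2)` the recurrences give `g_μ = -(μ + 1) z g_{μ+3}`.
lemma exists_besselClifford_nonpos (hμ : 0 ≤ μ) : ∃ z : ℝ, 0 < z ∧ besselClifford μ z ≤ 0 := by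
  by_contra! hcon
  set Z := (μ + 1) * (μ + 2) with hZdef
  have hZ : 0 < Z := by positivity
  have h₁ := besselClifford_add_one_pos hμ (Z := Z) fun z hz => hcon z hz.1
  have h₂ := besselClifford_add_one_pos (μ := μ + 1) (by positivity)
    fun z hz => h₁ z (Ioo_subset_Icc_self hz)
  have h₃ := besselClifford_add_one_pos (μ := μ + 1 + 1) (by positivity)
    (fun z hz => h₂ z (Ioo_subset_Icc_self hz)) Z (right_mem_Icc.2 hZ.le)
  have hrec := besselClifford_recurrence (μ := μ + 1) (by positivity) Z
  rw [show μ + 1 + 1 = μ + 2 by ring] at h₃ hrec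
  rw [show μ + 1 + 2 = μ + 2 + 1 by ring] at hrec
  have heq : besselClifford μ Z = -((μ + 1) * (Z * besselClifford (μ + 2 + 1) Z)) := by
    rw [besselClifford_recurrence hμ, hrec, hZdef]; ring
  have hneg : 0 < (μ + 1) * (Z * besselClifford (μ + 2 + 1) Z) := by positivity
  have hpos := hcon Z hZ
  linarith

/-- `z` is the first positive zero of `f`, and `f` is positive on `[0, z)`. -/
structure IsFirstZero (f : ℝ → ℝ) (z : ℝ) : Prop where
  pos : 0 < z
  eq_zero : f z = 0
  pos_of_lt : ∀ y ∈ Ico 0 z, 0 < f y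

lemma exists_isFirstZero {f : ℝ → ℝ} (hf : Continuous f) (h0 : 0 < f 0)
    (hex : ∃ z, 0 < z ∧ f z ≤ 0) : ∃ z, IsFirstZero f z := by
  obtain ⟨z₁, hz₁, hle⟩ := hex
  set S := {z : ℝ | 0 ≤ z ∧ f z ≤ 0}
  have hclosed : IsClosed S := isClosed_Ici.inter (isClosed_le hf continuous_const)
  have hbdd : BddBelow S := ⟨0, fun z hz => hz.1⟩
  obtain ⟨hnonneg, hnonpos⟩ : sInf S ∈ S := hclosed.csInf_mem ⟨z₁, hz₁.le, hle⟩ hbdd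
  have hlt (z) (hz : z ∈ Ico 0 (sInf S)) : 0 < f z := by
    by_contra! hc
    exact (csInf_le hbdd ⟨hz.1, hc⟩).not_gt hz.2
  have hpos : 0 < sInf S := hnonneg.lt_of_ne fun h => by
    rw [← h] at hnonpos; exact hnonpos.not_gt h0
  refine ⟨sInf S, hpos, hnonpos.antisymm ?_, hlt⟩
  refine ge_of_tendsto (hf.continuousWithinAt (s := Iio (sInf S))) ?_
  filter_upwards [Ioo_mem_nhdsLT hpos] with z hz using (hlt z ⟨hz.1.le, hz.2⟩).le

lemma exists_isFirstZero_besselClifford (hμ : 0 ≤ μ) : ∃ z, IsFirstZero (besselClifford μ) z :=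
  exists_isFirstZero (continuous_besselClifford hμ) (besselClifford_zero_pos hμ)
    (exists_besselClifford_nonpos hμ)

variable {z : ℝ}

lemma IsFirstZero.besselClifford_add_one_pos (hz : IsFirstZero (besselClifford μ) z)
    (hμ : 0 ≤ μ) : ∀ y ∈ Icc 0 z, 0 < besselClifford (μ + 1) y :=
  _root_.besselClifford_add_one_pos hμ fun y hy => hz.pos_of_lt y ⟨hy.1.le, hy.2⟩

lemma IsFirstZero.antitoneOn_besselClifford_add_one (hz : IsFirstZero (besselClifford μ) z)
    (hμ : 0 ≤ μ) : AntitoneOn (besselClifford (μ + 1)) (Icc 0 z) := by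
  have hμ1 : 0 ≤ μ + 1 := by positivity
  have hpos := _root_.besselClifford_add_one_pos hμ1
    fun y hy => hz.besselClifford_add_one_pos hμ y (Ioo_subset_Icc_self hy)
  refine antitoneOn_of_deriv_nonpos (convex_Icc _ _)
    (continuous_besselClifford hμ1).continuousOn
    (differentiable_besselClifford hμ1).differentiableOn fun y hy => ?_
  rw [deriv_besselClifford hμ1]
  exact neg_nonpos.2 (hpos y (interior_subset hy)).le

lemma IsFirstZero.add_one_le (hz : IsFirstZero (besselClifford μ) z) (hμ : 0 ≤ μ) :
    μ + 1 ≤ z := by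
  obtain ⟨c, hc, hslope⟩ := exists_hasDerivAt_eq_slope _ _ hz.pos
    (continuous_besselClifford hμ).continuousOn fun x _ => hasDerivAt_besselClifford hμ x
  have hle := hz.antitoneOn_besselClifford_add_one hμ (left_mem_Icc.2 hz.pos.le)
    (Ioo_subset_Icc_self hc) hc.1.le
  have hpos := besselClifford_zero_pos (μ := μ + 1) (by positivity)
  have hrec := besselClifford_recurrence hμ 0
  rw [zero_mul, sub_zero] at hrec
  have heq : besselClifford (μ + 1) c * z = (μ + 1) * besselClifford (μ + 1) 0 := by
    rw [hz.eq_zero, hrec, sub_zero, eq_div_iff hz.pos.ne'] at hslope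
    linarith
  have hmul : besselClifford (μ + 1) c * z ≤ besselClifford (μ + 1) 0 * z :=
    mul_le_mul_of_nonneg_right hle hz.pos.le
  exact le_of_mul_le_mul_right (by linarith) hpos

end BesselClifford

/-! ### The Bessel function and the constant `C_N` -/

section BesselFunction

variable {ν z r : ℝ}

lemma besselJ_eq_rpow_mul (hr : 0 < r) :
    besselJ ν r = (r / 2) ^ ν * besselClifford ν (r ^ 2 / 4) := by
  unfold besselJ besselClifford
  rw [← tsum_mul_left]
  congr 1
  ext m
  rw [Real.rpow_add (by positivity), show r ^ 2 / 4 = (r / 2) ^ 2 by ring, ← pow_mul,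
    show 2 * (m : ℝ) = ((2 * m : ℕ) : ℝ) by push_cast; ring, Real.rpow_natCast,
    besselCliffordCoeff]
  ring

lemma besselJ_pos (hz : IsFirstZero (besselClifford ν) z) (hr : 0 < r) (hrz : r ^ 2 / 4 < z) :
    0 < besselJ ν r := by
  rw [besselJ_eq_rpow_mul hr]
  exact mul_pos (Real.rpow_pos_of_pos (half_pos hr) ν) (hz.pos_of_lt _ ⟨by positivity, hrz⟩)

lemma two_mul_sqrt_sq_div_four (hz : 0 ≤ z) : (2 * √z) ^ 2 / 4 = z := by
  rw [mul_pow, Real.sq_sqrt hz]; ring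

lemma besselJzero_eq (hz : IsFirstZero (besselClifford ν) z) : besselJzero ν = 2 * √z := by
  have hj : 0 < 2 * √z := mul_pos two_pos (Real.sqrt_pos.2 hz.pos)
  refine IsLeast.csInf_eq ⟨⟨hj, ?_⟩, fun x ⟨hx, hJ⟩ => ?_⟩
  · rw [besselJ_eq_rpow_mul hj, two_mul_sqrt_sq_div_four hz.pos.le, hz.eq_zero, mul_zero]
  · by_contra! hlt
    have hxz : x ^ 2 / 4 < z := by
      rw [← two_mul_sqrt_sq_div_four hz.pos.le]; gcongr
    exact (besselJ_pos hz hx hxz).ne' hJ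

lemma hasDerivAt_sq_div_four (r : ℝ) : HasDerivAt (fun r : ℝ => r ^ 2 / 4) (r / 2) r :=
  ((hasDerivAt_pow 2 r).div_const 4).congr_deriv (by push_cast; ring)

lemma hasDerivAt_besselClifford_sq_div_four (hν : 0 ≤ ν) (r : ℝ) :
    HasDerivAt (fun r => besselClifford ν (r ^ 2 / 4))
      (-besselClifford (ν + 1) (r ^ 2 / 4) * (r / 2)) r :=
  HasDerivAt.comp (h₂ := besselClifford ν) r (hasDerivAt_besselClifford hν _)
    (hasDerivAt_sq_div_four r)

lemma deriv_besselJ_besselJzero (hz : IsFirstZero (besselClifford ν) z) (hν : 0 ≤ ν) :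
    deriv (besselJ ν) (2 * √z) = -(√z ^ (ν + 1) * besselClifford (ν + 1) z) := by
  have hs : 0 < √z := Real.sqrt_pos.2 hz.pos
  have hhalf : 2 * √z / 2 = √z := by ring
  have heq : besselJ ν =ᶠ[𝓝 (2 * √z)] fun x => (x / 2) ^ ν * besselClifford ν (x ^ 2 / 4) := by
    filter_upwards [lt_mem_nhds (mul_pos two_pos hs)] with x hx using besselJ_eq_rpow_mul hx
  have hpow : HasDerivAt (fun x : ℝ => (x / 2) ^ ν) (1 / 2 * ν * √z ^ (ν - 1)) (2 * √z) := by
    simpa [hhalf] using ((hasDerivAt_id (2 * √z)).div_const 2).rpow_const (p := ν)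
      (Or.inl (by simpa [hhalf] using hs.ne'))
  have hd := hpow.fun_mul (hasDerivAt_besselClifford_sq_div_four hν (2 * √z))
  rw [two_mul_sqrt_sq_div_four hz.pos.le, hz.eq_zero, hhalf] at hd
  rw [heq.deriv_eq, hd.deriv, Real.rpow_add_one hs.ne']
  ring

-- Lommel's antiderivative of `r J_ν(r) ^ 2`, written with `g_ν` and `g_{ν+1}`.
lemma hasDerivAt_lommel (hν : 0 ≤ ν) (hr : 0 ≤ r) :
    HasDerivAt (fun r : ℝ => 2 * (r / 2) ^ (2 * ν + 2) *
        (besselClifford ν (r ^ 2 / 4) ^ 2 -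
          ν * (besselClifford ν (r ^ 2 / 4) * besselClifford (ν + 1) (r ^ 2 / 4)) +
          r ^ 2 / 4 * besselClifford (ν + 1) (r ^ 2 / 4) ^ 2))
      (2 * (r / 2) ^ (2 * ν + 1) * besselClifford ν (r ^ 2 / 4) ^ 2) r := by
  have hpow : HasDerivAt (fun r : ℝ => 2 * (r / 2) ^ (2 * ν + 2))
      (2 * (1 / 2 * (2 * ν + 2) * (r / 2) ^ (2 * ν + 2 - 1))) r :=
    (((hasDerivAt_id r).div_const 2).rpow_const (Or.inr (by linarith))).const_mul 2
  have d₀ := hasDerivAt_besselClifford_sq_div_four hν r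
  have d₁ := hasDerivAt_besselClifford_sq_div_four (ν := ν + 1) (by positivity) r
  have hrec := besselClifford_recurrence hν (r ^ 2 / 4)
  have hsplit : (r / 2) ^ (2 * ν + 2) = (r / 2) ^ (2 * ν + 1) * (r / 2) := by
    rw [← Real.rpow_add_one' (by positivity) (by positivity)]; congr 1; ring
  refine (hpow.fun_mul (((d₀.fun_pow 2).fun_sub ((d₀.fun_mul d₁).const_mul ν)).fun_add
    ((hasDerivAt_sq_div_four r).fun_mul (d₁.fun_pow 2)))).congr_deriv ?_
  rw [show 2 * ν + 2 - 1 = 2 * ν + 1 by ring, show ν + 1 + 1 = ν + 2 by ring, hsplit]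
  generalize besselClifford ν (r ^ 2 / 4) = a at *
  rw [hrec]
  push_cast
  ring

lemma integral_mul_besselJ_sq (hz : IsFirstZero (besselClifford ν) z) (hν : 0 ≤ ν) :
    ∫ r in (0 : ℝ)..2 * √z, r * besselJ ν r ^ 2 =
      (2 * √z * deriv (besselJ ν) (2 * √z)) ^ 2 / 2 := by
  have hs : 0 < √z := Real.sqrt_pos.2 hz.pos
  have hcongr : ∫ r in (0 : ℝ)..2 * √z, r * besselJ ν r ^ 2 = ∫ r in (0 : ℝ)..2 * √z,
      2 * (r / 2) ^ (2 * ν + 1) * besselClifford ν (r ^ 2 / 4) ^ 2 := by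
    refine intervalIntegral.integral_congr_uIoo fun r hr => ?_
    rw [uIoo_of_le (by positivity)] at hr
    have hpow : (r / 2) ^ (2 * ν + 1) = ((r / 2) ^ ν) ^ 2 * (r / 2) := by
      rw [Real.rpow_add_one (half_pos hr.1).ne', ← Real.rpow_mul_natCast (half_pos hr.1).le]
      push_cast; ring_nf
    simp only [besselJ_eq_rpow_mul hr.1, hpow]
    ring
  have hint : IntervalIntegrable (fun r : ℝ => 2 * (r / 2) ^ (2 * ν + 1) *
      besselClifford ν (r ^ 2 / 4) ^ 2) volume 0 (2 * √z) := by
    have hg := continuous_besselClifford hν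
    have hp := Real.continuous_rpow_const (q := 2 * ν + 1) (by positivity)
    exact Continuous.intervalIntegrable (by fun_prop) _ _
  have hexp : √z ^ (2 * ν + 2) = (√z ^ (ν + 1)) ^ 2 := by
    rw [← Real.rpow_mul_natCast hs.le]; congr 1; push_cast; ring
  rw [hcongr, intervalIntegral.integral_eq_sub_of_hasDerivAt (fun r hr => hasDerivAt_lommel hν
    (by rw [uIcc_of_le (by positivity)] at hr; exact hr.1)) hint, deriv_besselJ_besselJzero hz hν,
    two_mul_sqrt_sq_div_four hz.pos.le, hz.eq_zero, zero_div,
    Real.zero_rpow (by positivity), show 2 * √z / 2 = √z by ring, hexp]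
  linear_combination (2 * (√z ^ (ν + 1)) ^ 2 * besselClifford (ν + 1) z ^ 2) *
    (Real.sq_sqrt hz.pos.le).symm

end BesselFunction

/-- The order `N / 2 - 1` of the Bessel function attached to the ball of `ℝ^N`. -/
noncomputable def besselOrder (N : ℕ) : ℝ := (N : ℝ) / 2 - 1

lemma besselOrder_nonneg {N : ℕ} (hN : 2 ≤ N) : 0 ≤ besselOrder N := by
  have : (2 : ℝ) ≤ N := by exact_mod_cast hN
  rw [besselOrder]; linarith

lemma natCast_lt_four_mul_of_isFirstZero {N : ℕ} (hN : 2 ≤ N) {z : ℝ}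
    (hz : IsFirstZero (besselClifford (besselOrder N)) z) : (N : ℝ) < 4 * z := by
  have hN' : (2 : ℝ) ≤ N := by exact_mod_cast hN
  have hle := hz.add_one_le (besselOrder_nonneg hN)
  rw [besselOrder] at hle
  linarith

lemma CN_eq {N : ℕ} (hN : 2 ≤ N) {z : ℝ}
    (hz : IsFirstZero (besselClifford (besselOrder N)) z) :
    CN N = N * (N + 1) / (4 * (4 * z - N)) := by
  have hν := besselOrder_nonneg hN
  have hs : 0 < √z := Real.sqrt_pos.2 hz.pos
  have hpos : 0 < √z ^ (besselOrder N + 1) * besselClifford (besselOrder N + 1) z :=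
    mul_pos (Real.rpow_pos_of_pos hs _)
      (hz.besselClifford_add_one_pos hν z (right_mem_Icc.2 hz.pos.le))
  have hderiv : deriv (besselJ (besselOrder N)) (2 * √z) ≠ 0 := by
    rw [deriv_besselJ_besselJzero hz hν]; exact neg_ne_zero.2 hpos.ne'
  have hgap : 4 * z - N ≠ 0 := (sub_pos.2 (natCast_lt_four_mul_of_isFirstZero hN hz)).ne'
  rw [CN, ← besselOrder, besselJzero_eq hz, integral_mul_besselJ_sq hz hν,
    show (2 * √z) ^ 2 = 4 * z by rw [mul_pow, Real.sq_sqrt hz.pos.le]; norm_num]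
  field_simp
  norm_num

/-! ### Helmholtz functions and bounds for the first eigenvalue -/

/-- The partial derivative `∂u/∂xᵢ`. -/
noncomputable def partialDeriv {N : ℕ} (i : Fin N) (u : euc N → ℝ) (x : euc N) : ℝ :=
  fderiv ℝ u x (EuclideanSpace.single i 1)

/-- Smooth solutions of the Helmholtz equation `-Δv = lam * v` on the whole of `ℝ^N`. -/
structure IsHelmholtz {N : ℕ} (lam : ℝ) (v : euc N → ℝ) : Prop where
  contDiff : ContDiff ℝ (⊤ : ℕ∞) v
  laplacian_eq : ∀ x, ∑ i, partialDeriv i (partialDeriv i v) x = -lam * v x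

section Helmholtz

variable {N : ℕ} {u v φ : euc N → ℝ} {E : Set (euc N)} {lam : ℝ}

lemma norm_gradient_sq (u : euc N → ℝ) (x : euc N) :
    ‖gradient u x‖ ^ 2 = ∑ i, partialDeriv i u x ^ 2 := by
  have hcoord (i : Fin N) : gradient u x i = partialDeriv i u x := by
    have hinner : gradient u x i = ⟪gradient u x, EuclideanSpace.single i (1 : ℝ)⟫ := by
      rw [EuclideanSpace.inner_single_right]; simp
    rw [hinner, gradient, InnerProductSpace.toDual_symm_apply, partialDeriv]
  simp only [EuclideanSpace.norm_sq_eq, hcoord, Real.norm_eq_abs, sq_abs]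

lemma contDiff_partialDeriv (hu : ContDiff ℝ (⊤ : ℕ∞) u) (i : Fin N) :
    ContDiff ℝ (⊤ : ℕ∞) (partialDeriv i u) :=
  (hu.fderiv_right (m := (⊤ : ℕ∞)) (by simp)).clm_apply contDiff_const

lemma continuous_partialDeriv (hu : ContDiff ℝ 1 u) (i : Fin N) :
    Continuous (partialDeriv i u) :=
  (hu.continuous_fderiv one_ne_zero).clm_apply continuous_const

lemma hasCompactSupport_partialDeriv (hu : HasCompactSupport u) (i : Fin N) :
    HasCompactSupport (partialDeriv i u) :=
  (hu.fderiv (𝕜 := ℝ)).comp_left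
    (g := fun L : euc N →L[ℝ] ℝ => L (EuclideanSpace.single i 1)) (by simp)

lemma hasCompactSupport_sq (hu : HasCompactSupport u) : HasCompactSupport fun x => u x ^ 2 :=
  hu.comp_left (g := fun y : ℝ => y ^ 2) (by simp)

lemma integrable_sq_of_hasCompactSupport (hu : Continuous u) (hc : HasCompactSupport u) :
    Integrable fun x => u x ^ 2 :=
  (hu.pow 2).integrable_of_hasCompactSupport (hasCompactSupport_sq hc)

lemma integrable_partialDeriv_mul (hv : ContDiff ℝ 1 v) (hφ : ContDiff ℝ 1 φ)
    (hc : HasCompactSupport φ) (i : Fin N) :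
    Integrable fun x => partialDeriv i v x * partialDeriv i φ x :=
  Continuous.integrable_of_hasCompactSupport
    ((continuous_partialDeriv hv i).mul (continuous_partialDeriv hφ i))
    (hasCompactSupport_partialDeriv hc i).mul_left

lemma IsHelmholtz.contDiff_one (hv : IsHelmholtz lam v) : ContDiff ℝ 1 v :=
  hv.contDiff.of_le (by exact_mod_cast le_top)

lemma IsHelmholtz.integral_partialDeriv_mul (hv : IsHelmholtz lam v) (hφ : ContDiff ℝ 1 φ)
    (hc : HasCompactSupport φ) :
    ∫ x, ∑ i, partialDeriv i v x * partialDeriv i φ x = lam * ∫ x, v x * φ x := by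
  have hcd (i) : ContDiff ℝ (⊤ : ℕ∞) (partialDeriv i v) := contDiff_partialDeriv hv.contDiff i
  have hint₂ (i) : Integrable fun x => partialDeriv i (partialDeriv i v) x * φ x :=
    ((contDiff_partialDeriv (hcd i) i).continuous.mul hφ.continuous).integrable_of_hasCompactSupport
      hc.mul_left
  have hint₀ (i) : Integrable fun x => partialDeriv i v x * φ x :=
    ((hcd i).continuous.mul hφ.continuous).integrable_of_hasCompactSupport hc.mul_left
  have hparts (i) : ∫ x, partialDeriv i v x * partialDeriv i φ x =
      -∫ x, partialDeriv i (partialDeriv i v) x * φ x :=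
    integral_mul_fderiv_eq_neg_fderiv_mul_of_integrable (hint₂ i)
      (integrable_partialDeriv_mul hv.contDiff_one hφ hc i) (hint₀ i)
      (fun x _ => (hcd i).differentiable (by simp) x)
      (fun x _ => hφ.differentiable one_ne_zero x)
  rw [integral_finsetSum _ fun i _ => integrable_partialDeriv_mul hv.contDiff_one hφ hc i]
  simp_rw [hparts]
  rw [Finset.sum_neg_distrib, ← integral_finsetSum _ fun i _ => hint₂ i, ← integral_neg,
    ← integral_const_mul]
  congr 1
  ext x
  rw [← Finset.sum_mul, hv.laplacian_eq x]
  ring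

lemma sq_div_eventuallyEq_zero {x : euc N} (hx : x ∉ tsupport u) :
    (fun x => u x ^ 2 / v x) =ᶠ[𝓝 x] 0 := by
  filter_upwards [notMem_tsupport_iff_eventuallyEq.1 hx] with y hy
  simp [hy]

lemma contDiff_sq_div (hpos : ∀ x ∈ E, 0 < v x) (hs : tsupport u ⊆ E)
    (hu : ContDiff ℝ 1 u) (hv : ContDiff ℝ 1 v) :
    ContDiff ℝ 1 fun x => u x ^ 2 / v x := by
  refine contDiff_iff_contDiffAt.2 fun x => ?_
  by_cases hx : x ∈ tsupport u
  · exact (hu.contDiffAt.pow 2).div hv.contDiffAt (hpos x (hs hx)).ne'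
  · exact contDiffAt_const.congr_of_eventuallyEq (sq_div_eventuallyEq_zero hx)

lemma mul_sq_div_eq_sq (hpos : ∀ x ∈ E, 0 < v x) (hs : tsupport u ⊆ E) (x : euc N) :
    v x * (u x ^ 2 / v x) = u x ^ 2 := by
  by_cases hx : x ∈ tsupport u
  · exact mul_div_cancel₀ _ (hpos x (hs hx)).ne'
  · simp [image_eq_zero_of_notMem_tsupport hx]

-- The difference of the two sides is `v² |∂ᵢ(u / v)|²`.
lemma partialDeriv_mul_partialDeriv_sq_div_le (hpos : ∀ x ∈ E, 0 < v x)
    (hs : tsupport u ⊆ E) (hu : ContDiff ℝ 1 u) (hv : ContDiff ℝ 1 v) (i : Fin N) (x : euc N) :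
    partialDeriv i v x * partialDeriv i (fun x => u x ^ 2 / v x) x ≤ partialDeriv i u x ^ 2 := by
  by_cases hx : x ∈ tsupport u
  · have hvx := hpos x (hs hx)
    set φ := fun x => u x ^ 2 / v x with hφ
    have hleft := (hv.differentiable one_ne_zero x).hasFDerivAt.mul
      ((contDiff_sq_div hpos hs hu hv).differentiable one_ne_zero x).hasFDerivAt
    rw [show v * φ = fun x => u x ^ 2 from funext (mul_sq_div_eq_sq hpos hs)] at hleft
    have hprod : v x * partialDeriv i φ x + u x ^ 2 / v x * partialDeriv i v x =
        2 * u x * partialDeriv i u x := by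
      simpa [partialDeriv, hφ] using congrArg (· (EuclideanSpace.single i (1 : ℝ)))
        (hleft.unique ((hu.differentiable one_ne_zero x).hasFDerivAt.pow 2))
    have hquot : partialDeriv i φ x =
        (2 * u x * partialDeriv i u x - u x ^ 2 / v x * partialDeriv i v x) / v x := by
      rw [← hprod]; field_simp; ring
    have hsq : partialDeriv i u x ^ 2 - partialDeriv i v x * partialDeriv i φ x =
        (partialDeriv i u x - u x * partialDeriv i v x / v x) ^ 2 := by
      rw [hquot]; field_simp; ring
    exact sub_nonneg.1 (hsq ▸ sq_nonneg _)
  · have hzero : partialDeriv i (fun x => u x ^ 2 / v x) x = 0 := by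
      rw [partialDeriv, (sq_div_eventuallyEq_zero hx).fderiv_eq]; simp
    rw [hzero, mul_zero]
    positivity

lemma IsHelmholtz.mul_integral_sq_le (hv : IsHelmholtz lam v) (hpos : ∀ x ∈ E, 0 < v x)
    (hs : tsupport u ⊆ E) (hu : ContDiff ℝ 1 u) (hc : HasCompactSupport u) :
    lam * ∫ x, u x ^ 2 ≤ ∫ x, ‖gradient u x‖ ^ 2 := by
  have hφ := contDiff_sq_div hpos hs hu hv.contDiff_one
  have hcφ : HasCompactSupport fun x => u x ^ 2 / v x :=
    .intro hc.isCompact fun x hx => (sq_div_eventuallyEq_zero hx).self_of_nhds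
  have hparts := hv.integral_partialDeriv_mul hφ hcφ
  simp only [mul_sq_div_eq_sq hpos hs] at hparts
  rw [← hparts]
  simp_rw [norm_gradient_sq]
  refine integral_mono
    (integrable_finsetSum _ fun i _ => integrable_partialDeriv_mul hv.contDiff_one hφ hcφ i)
    (integrable_finsetSum _ fun i _ => integrable_sq_of_hasCompactSupport
      (continuous_partialDeriv hu i) (hasCompactSupport_partialDeriv hc i)) fun x => ?_
  exact Finset.sum_le_sum fun i _ =>
    partialDeriv_mul_partialDeriv_sq_div_le hpos hs hu hv.contDiff_one i x

/-- The set of Rayleigh quotients whose infimum is `firstEigenvalue N Ω`. -/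
def rayleighQuotients (N : ℕ) (Ω : Set (euc N)) : Set ℝ :=
  { R : ℝ | ∃ u : euc N → ℝ, ContDiff ℝ (⊤ : ℕ∞) u ∧ HasCompactSupport u ∧
    tsupport u ⊆ Ω ∧ u ≠ 0 ∧ R = (∫ x, ‖gradient u x‖ ^ 2) / (∫ x, u x ^ 2) }

lemma bddBelow_rayleighQuotients (N : ℕ) (Ω : Set (euc N)) :
    BddBelow (rayleighQuotients N Ω) := by
  refine ⟨0, ?_⟩
  rintro R ⟨u, -, -, -, -, rfl⟩
  positivity

lemma rayleighQuotients_nonempty (hE : IsOpen E) (hne : E.Nonempty) :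
    (rayleighQuotients N E).Nonempty := by
  obtain ⟨x, hx⟩ := hne
  obtain ⟨u, hs, hc, hu, -, hux⟩ := exists_contDiff_tsupport_subset (n := (⊤ : ℕ∞))
    (hE.mem_nhds hx)
  exact ⟨_, u, hu, hc, hs, fun h => by simp [h] at hux, rfl⟩

lemma integral_sq_pos_of_hasCompactSupport (hu : Continuous u) (hc : HasCompactSupport u)
    (h0 : u ≠ 0) : 0 < ∫ x, u x ^ 2 := by
  obtain ⟨x, hx⟩ := Function.ne_iff.1 h0
  exact (hu.pow 2).integral_pos_of_hasCompactSupport_nonneg_nonzero (hasCompactSupport_sq hc)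
    (fun x => sq_nonneg _) (pow_ne_zero 2 hx)

/-- Barta's principle. -/
lemma IsHelmholtz.le_firstEigenvalue (hv : IsHelmholtz lam v) (hE : IsOpen E)
    (hne : E.Nonempty) (hpos : ∀ x ∈ E, 0 < v x) : lam ≤ firstEigenvalue N E := by
  refine le_csInf (rayleighQuotients_nonempty hE hne) ?_
  rintro R ⟨u, hu, hc, hs, h0, rfl⟩
  rw [le_div_iff₀ (integral_sq_pos_of_hasCompactSupport hu.continuous hc h0)]
  exact hv.mul_integral_sq_le hpos hs (hu.of_le (by exact_mod_cast le_top)) hc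

end Helmholtz

/-- A smooth approximation of the positive part `max s 0`: it vanishes for `s ≤ ε`, has slope
in `[0, 1]`, and slope `1` for `2 * ε ≤ s`. -/
noncomputable def smoothPosPart (ε s : ℝ) : ℝ :=
  ∫ σ in (0 : ℝ)..s, Real.smoothTransition (σ / ε - 1)

section SmoothPosPart

variable {ε s : ℝ}

lemma continuous_smoothTransition_div_sub_one (ε : ℝ) :
    Continuous fun σ : ℝ => Real.smoothTransition (σ / ε - 1) :=
  Real.smoothTransition.continuous.comp (by fun_prop)

lemma hasDerivAt_smoothPosPart (ε s : ℝ) :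
    HasDerivAt (smoothPosPart ε) (Real.smoothTransition (s / ε - 1)) s :=
  (continuous_smoothTransition_div_sub_one ε).integral_hasStrictDerivAt 0 s |>.hasDerivAt

lemma contDiff_smoothPosPart (ε : ℝ) : ContDiff ℝ (⊤ : ℕ∞) (smoothPosPart ε) := by
  have hderiv : deriv (smoothPosPart ε) = fun s => Real.smoothTransition (s / ε - 1) :=
    funext fun s => (hasDerivAt_smoothPosPart ε s).deriv
  rw [contDiff_infty_iff_deriv, hderiv]
  exact ⟨fun s => (hasDerivAt_smoothPosPart ε s).differentiableAt,
    Real.smoothTransition.contDiff.comp (by fun_prop)⟩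

lemma smoothPosPart_eq_zero (hε : 0 < ε) (hs : s ≤ ε) : smoothPosPart ε s = 0 := by
  rw [smoothPosPart, intervalIntegral.integral_congr (g := fun _ => 0) fun σ hσ => ?_]
  · simp
  · have hσε : σ ≤ ε := hσ.2.trans (max_le hε.le hs)
    exact Real.smoothTransition.zero_of_nonpos (by rwa [sub_nonpos, div_le_one hε])

lemma smoothPosPart_nonneg (hε : 0 < ε) : 0 ≤ smoothPosPart ε s := by
  rcases le_total s ε with h | h
  · rw [smoothPosPart_eq_zero hε h]
  · exact intervalIntegral.integral_nonneg (hε.le.trans h)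
      fun σ _ => Real.smoothTransition.nonneg _

lemma smoothPosPart_le_max (hε : 0 < ε) : smoothPosPart ε s ≤ max s 0 := by
  rcases le_total s 0 with h | h
  · rw [smoothPosPart_eq_zero hε (h.trans hε.le)]
    exact le_max_right _ _
  · calc smoothPosPart ε s
        ≤ ∫ _ in (0 : ℝ)..s, (1 : ℝ) := intervalIntegral.integral_mono_on h
          ((continuous_smoothTransition_div_sub_one ε).intervalIntegrable _ _)
          (continuous_const.intervalIntegrable _ _) fun σ _ => Real.smoothTransition.le_one _
      _ ≤ max s 0 := by simp

lemma sub_two_mul_le_smoothPosPart (hε : 0 < ε) : s - 2 * ε ≤ smoothPosPart ε s := by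
  rcases le_total s (2 * ε) with h | h
  · exact (sub_nonpos.2 h).trans (smoothPosPart_nonneg hε)
  have hint (a b : ℝ) : IntervalIntegrable (fun σ => Real.smoothTransition (σ / ε - 1))
      volume a b := (continuous_smoothTransition_div_sub_one ε).intervalIntegrable a b
  have htail : ∫ σ in 2 * ε..s, Real.smoothTransition (σ / ε - 1) = s - 2 * ε := by
    rw [intervalIntegral.integral_congr (g := fun _ => 1) fun σ hσ => ?_]
    · simp
    · rw [uIcc_of_le h] at hσ
      refine Real.smoothTransition.one_of_one_le ?_
      have : 2 ≤ σ / ε := by rw [le_div_iff₀ hε]; exact hσ.1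
      linarith
  have hadd := intervalIntegral.integral_add_adjacent_intervals (hint 0 (2 * ε)) (hint (2 * ε) s)
  have hhead : 0 ≤ smoothPosPart ε (2 * ε) := smoothPosPart_nonneg hε
  rw [smoothPosPart] at hhead ⊢
  linarith

lemma tendsto_smoothPosPart (s : ℝ) :
    Tendsto (fun ε => smoothPosPart ε s) (𝓝[>] 0) (𝓝 (max s 0)) := by
  have hlower : Tendsto (fun ε : ℝ => max (s - 2 * ε) 0) (𝓝[>] 0) (𝓝 (max s 0)) := by
    have hcont : Continuous fun ε : ℝ => max (s - 2 * ε) 0 := by fun_prop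
    simpa using (hcont.tendsto 0).mono_left nhdsWithin_le_nhds
  refine tendsto_of_tendsto_of_tendsto_of_le_of_le' hlower tendsto_const_nhds ?_ ?_
  all_goals filter_upwards [self_mem_nhdsWithin] with ε hε
  · exact max_le (sub_two_mul_le_smoothPosPart hε) (smoothPosPart_nonneg hε)
  · exact smoothPosPart_le_max hε

end SmoothPosPart

/-- The function `v` on `E`, cut off smoothly below the level `ε` and extended by zero. When `E`
is bounded and `v ≤ 0` on `frontier E` this is a test function supported in `E`. -/
noncomputable def truncation {N : ℕ} (E : Set (euc N)) (v : euc N → ℝ) (ε : ℝ) : euc N → ℝ :=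
  E.indicator fun x => smoothPosPart ε (v x)

section Truncation

variable {N : ℕ} {v : euc N → ℝ} {E : Set (euc N)} {lam ε : ℝ}

lemma truncation_eventuallyEq (hE : IsOpen E) {x : euc N} (hx : x ∈ E) :
    truncation E v ε =ᶠ[𝓝 x] fun x => smoothPosPart ε (v x) := by
  filter_upwards [hE.mem_nhds hx] with y hy using indicator_of_mem hy _

lemma support_truncation_subset (hε : 0 < ε) :
    Function.support (truncation E v ε) ⊆ closure E ∩ {x | ε ≤ v x} := by
  intro x hx
  have hxE : x ∈ E := mem_of_indicator_ne_zero hx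
  refine ⟨subset_closure hxE, ?_⟩
  by_contra! hlt
  exact hx (by rw [truncation, indicator_of_mem hxE, smoothPosPart_eq_zero hε (not_le.1 hlt).le])

lemma tsupport_truncation_subset_superlevel (hv : Continuous v) (hε : 0 < ε) :
    tsupport (truncation E v ε) ⊆ closure E ∩ {x | ε ≤ v x} :=
  closure_minimal (support_truncation_subset hε)
    (isClosed_closure.inter (isClosed_le continuous_const hv))

lemma tsupport_truncation_subset (hv : Continuous v) (hE : IsOpen E)
    (hfr : ∀ x ∈ frontier E, v x ≤ 0) (hε : 0 < ε) : tsupport (truncation E v ε) ⊆ E := by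
  intro x hx
  obtain ⟨hcl, hge⟩ := tsupport_truncation_subset_superlevel hv hε hx
  by_contra hxE
  have hle : v x ≤ 0 := hfr x (by rw [hE.frontier_eq]; exact ⟨hcl, hxE⟩)
  exact (hε.trans_le hge).not_ge hle

lemma hasCompactSupport_truncation (hv : Continuous v) (hb : Bornology.IsBounded E) (hε : 0 < ε) :
    HasCompactSupport (truncation E v ε) :=
  Metric.isCompact_of_isClosed_isBounded (isClosed_tsupport _)
    (hb.closure.subset ((tsupport_truncation_subset_superlevel hv hε).trans inter_subset_left))

lemma contDiff_truncation (hE : IsOpen E) (hfr : ∀ x ∈ frontier E, v x ≤ 0) (hε : 0 < ε)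
    (hv : ContDiff ℝ (⊤ : ℕ∞) v) :
    ContDiff ℝ (⊤ : ℕ∞) (truncation E v ε) := by
  refine contDiff_iff_contDiffAt.2 fun x => ?_
  by_cases hx : x ∈ tsupport (truncation E v ε)
  · exact ((contDiff_smoothPosPart ε).comp hv).contDiffAt.congr_of_eventuallyEq
      (truncation_eventuallyEq hE (tsupport_truncation_subset hv.continuous hE hfr hε hx))
  · exact contDiffAt_const.congr_of_eventuallyEq (notMem_tsupport_iff_eventuallyEq.1 hx)

lemma partialDeriv_truncation_sq_le (hE : IsOpen E) (hfr : ∀ x ∈ frontier E, v x ≤ 0) (hε : 0 < ε)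
    (hd : Differentiable ℝ v) (i : Fin N) (x : euc N) :
    partialDeriv i (truncation E v ε) x ^ 2 ≤
      partialDeriv i v x * partialDeriv i (truncation E v ε) x := by
  by_cases hx : x ∈ tsupport (truncation E v ε)
  · have hxE := tsupport_truncation_subset hd.continuous hE hfr hε hx
    have hchain : partialDeriv i (truncation E v ε) x =
        Real.smoothTransition (v x / ε - 1) * partialDeriv i v x := by
      have hcomp := ((hasDerivAt_smoothPosPart ε (v x)).comp_hasFDerivAt x
        (hd x).hasFDerivAt).congr_of_eventuallyEq (truncation_eventuallyEq hE hxE)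
      rw [partialDeriv, hcomp.fderiv]
      simp [partialDeriv]
    rw [hchain]
    have h0 := Real.smoothTransition.nonneg (v x / ε - 1)
    have h1 := Real.smoothTransition.le_one (v x / ε - 1)
    nlinarith [mul_nonneg (mul_nonneg h0 (sub_nonneg.2 h1)) (sq_nonneg (partialDeriv i v x))]
  · rw [partialDeriv, (notMem_tsupport_iff_eventuallyEq.1 hx).fderiv_eq]
    simp

lemma IsHelmholtz.integral_norm_gradient_truncation_le (hv : IsHelmholtz lam v) (hE : IsOpen E)
    (hb : Bornology.IsBounded E) (hfr : ∀ x ∈ frontier E, v x ≤ 0) (hε : 0 < ε) :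
    ∫ x, ‖gradient (truncation E v ε) x‖ ^ 2 ≤ lam * ∫ x, v x * truncation E v ε x := by
  have hcd : ContDiff ℝ 1 (truncation E v ε) :=
    (contDiff_truncation hE hfr hε hv.contDiff).of_le (by exact_mod_cast le_top)
  have hcs := hasCompactSupport_truncation hv.contDiff.continuous hb hε
  rw [← hv.integral_partialDeriv_mul hcd hcs]
  simp_rw [norm_gradient_sq]
  refine integral_mono
    (integrable_finsetSum _ fun i _ => integrable_sq_of_hasCompactSupport
      (continuous_partialDeriv hcd i) (hasCompactSupport_partialDeriv hcs i))
    (integrable_finsetSum _ fun i _ => integrable_partialDeriv_mul hv.contDiff_one hcd hcs i)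
    fun x => Finset.sum_le_sum fun i _ => ?_
  exact partialDeriv_truncation_sq_le hE hfr hε (hv.contDiff.differentiable (by simp)) i x

lemma abs_truncation_le (hε : 0 < ε) (x : euc N) :
    |truncation E v ε x| ≤ E.indicator (fun x => |v x|) x := by
  by_cases hx : x ∈ E
  · rw [truncation, indicator_of_mem hx, indicator_of_mem hx,
      abs_of_nonneg (smoothPosPart_nonneg hε)]
    exact (smoothPosPart_le_max hε).trans (max_le (le_abs_self _) (abs_nonneg _))
  · rw [truncation, indicator_of_notMem hx, indicator_of_notMem hx, abs_zero]

lemma tendsto_truncation (x : euc N) :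
    Tendsto (fun ε => truncation E v ε x) (𝓝[>] 0) (𝓝 (E.indicator (fun x => max (v x) 0) x)) := by
  by_cases hx : x ∈ E
  · simpa only [truncation, indicator_of_mem hx] using tendsto_smoothPosPart (v x)
  · simp only [truncation, indicator_of_notMem hx, tendsto_const_nhds]

lemma integrable_indicator_sq (hv : Continuous v) (hE : IsOpen E) (hb : Bornology.IsBounded E) :
    Integrable (E.indicator fun x => v x ^ 2) :=
  (((hv.pow 2).continuousOn.integrableOn_compact hb.isCompact_closure).mono_set
    subset_closure).integrable_indicator hE.measurableSet

lemma aestronglyMeasurable_truncation (hv : Continuous v) (hE : IsOpen E) (ε : ℝ) :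
    AEStronglyMeasurable (truncation E v ε) :=
  ((contDiff_smoothPosPart ε).continuous.comp hv).aestronglyMeasurable.indicator hE.measurableSet

lemma indicator_abs_sq_eq (x : euc N) :
    E.indicator (fun x => |v x|) x ^ 2 = E.indicator (fun x => v x ^ 2) x := by
  by_cases hx : x ∈ E <;> simp [hx]

lemma tendsto_integral_truncation_sq (hv : Continuous v) (hE : IsOpen E)
    (hb : Bornology.IsBounded E) :
    Tendsto (fun ε => ∫ x, truncation E v ε x ^ 2) (𝓝[>] 0)
      (𝓝 (∫ x, E.indicator (fun x => max (v x) 0) x ^ 2)) := by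
  refine tendsto_integral_filter_of_dominated_convergence _
    (.of_forall fun ε => (aestronglyMeasurable_truncation hv hE ε).pow 2) ?_
    (integrable_indicator_sq hv hE hb) (.of_forall fun x => (tendsto_truncation x).pow 2)
  filter_upwards [self_mem_nhdsWithin] with ε hε
  refine .of_forall fun x => ?_
  rw [norm_pow, Real.norm_eq_abs, ← indicator_abs_sq_eq]
  exact pow_le_pow_left₀ (abs_nonneg _) (abs_truncation_le hε x) 2

lemma tendsto_integral_mul_truncation (hv : Continuous v) (hE : IsOpen E)
    (hb : Bornology.IsBounded E) :
    Tendsto (fun ε => ∫ x, v x * truncation E v ε x) (𝓝[>] 0)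
      (𝓝 (∫ x, E.indicator (fun x => max (v x) 0) x ^ 2)) := by
  have hlim (x : euc N) : v x * E.indicator (fun x => max (v x) 0) x =
      E.indicator (fun x => max (v x) 0) x ^ 2 := by
    by_cases hx : x ∈ E
    · rcases le_total (v x) 0 with h | h <;> simp [hx, h, sq]
    · simp [hx]
  refine tendsto_integral_filter_of_dominated_convergence _
    (.of_forall fun ε => hv.aestronglyMeasurable.mul (aestronglyMeasurable_truncation hv hE ε)) ?_
    (integrable_indicator_sq hv hE hb)
    (.of_forall fun x => hlim x ▸ (tendsto_truncation x).const_mul (v x))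
  filter_upwards [self_mem_nhdsWithin] with ε hε
  refine .of_forall fun x => ?_
  rw [norm_mul, Real.norm_eq_abs, Real.norm_eq_abs]
  refine (mul_le_mul_of_nonneg_left (abs_truncation_le hε x) (abs_nonneg _)).trans_eq ?_
  by_cases hx : x ∈ E <;> simp [hx, sq]

lemma integral_indicator_max_sq_pos (hv : Continuous v) (hE : IsOpen E) (hb : Bornology.IsBounded E)
    {x₀ : euc N} (hx₀ : x₀ ∈ E) (hvx₀ : 0 < v x₀) :
    0 < ∫ x, E.indicator (fun x => max (v x) 0) x ^ 2 := by
  have hint : Integrable fun x => E.indicator (fun x => max (v x) 0) x ^ 2 := by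
    refine (integrable_indicator_sq (v := fun x => max (v x) 0) (by fun_prop) hE hb).congr
      (.of_forall fun x => ?_)
    by_cases hx : x ∈ E <;> simp [hx]
  rw [integral_pos_iff_support_of_nonneg (fun x => sq_nonneg _) hint]
  refine (IsOpen.measure_pos volume (hE.inter (isOpen_lt continuous_const hv))
    ⟨x₀, hx₀, hvx₀⟩).trans_le (measure_mono fun x hx => ?_)
  have hvx : 0 < v x := hx.2
  simp [Function.mem_support, hx.1, hvx]

lemma IsHelmholtz.firstEigenvalue_le (hv : IsHelmholtz lam v) (hE : IsOpen E)
    (hb : Bornology.IsBounded E) (hfr : ∀ x ∈ frontier E, v x ≤ 0) {x₀ : euc N} (hx₀ : x₀ ∈ E)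
    (hvx₀ : 0 < v x₀) : firstEigenvalue N E ≤ lam := by
  have hvc := hv.contDiff.continuous
  have hpos := integral_indicator_max_sq_pos hvc hE hb hx₀ hvx₀
  have hsq := tendsto_integral_truncation_sq hvc hE hb
  have hlim : Tendsto (fun ε => (lam * ∫ x, v x * truncation E v ε x) /
      ∫ x, truncation E v ε x ^ 2) (𝓝[>] 0) (𝓝 lam) := by
    have hdiv := ((tendsto_integral_mul_truncation hvc hE hb).const_mul lam).div hsq hpos.ne'
    rwa [mul_div_cancel_right₀ _ hpos.ne'] at hdiv
  refine ge_of_tendsto hlim ?_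
  filter_upwards [self_mem_nhdsWithin, hsq.eventually (lt_mem_nhds hpos)] with ε hε hεpos
  have hne : truncation E v ε ≠ 0 := fun h => by simp [h] at hεpos
  refine (csInf_le (bddBelow_rayleighQuotients N E) ⟨_, contDiff_truncation hE hfr hε hv.contDiff,
    hasCompactSupport_truncation hvc hb hε, tsupport_truncation_subset hvc hE hfr hε, hne,
    rfl⟩).trans ?_
  exact div_le_div_of_nonneg_right
    (hv.integral_norm_gradient_truncation_le hE hb hfr hε) hεpos.le

end Truncation

/-! ### Second-order operators applied to radial functions -/

/-- `u` is smooth and its partial derivative `∂u/∂xᵢ` is `w`. -/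
structure HasPartialDeriv {N : ℕ} (i : Fin N) (u w : euc N → ℝ) : Prop where
  contDiff : ContDiff ℝ (⊤ : ℕ∞) u
  partialDeriv_eq : partialDeriv i u = w

/-- The operator `∑ᵢ aᵢ ∂ᵢ²`. -/
noncomputable def weightedLaplacian {N : ℕ} (a : Fin N → ℝ) (u : euc N → ℝ) (x : euc N) : ℝ :=
  ∑ i, a i * partialDeriv i (partialDeriv i u) x

/-- The diagonal quadratic form `∑ᵢ aᵢ xᵢ²`. -/
def quadForm {N : ℕ} (a : Fin N → ℝ) (x : euc N) : ℝ := ∑ i, a i * x i ^ 2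

section PartialDeriv

variable {N : ℕ} {i j : Fin N} {u w u' w' v : euc N → ℝ} {lam : ℝ}

lemma hasPartialDeriv_of_contDiff (hu : ContDiff ℝ (⊤ : ℕ∞) u) (i : Fin N) :
    HasPartialDeriv i u (partialDeriv i u) :=
  ⟨hu, rfl⟩

namespace HasPartialDeriv

lemma of_hasFDerivAt (hu : ContDiff ℝ (⊤ : ℕ∞) u) {u' : euc N → euc N →L[ℝ] ℝ}
    (hu' : ∀ x, HasFDerivAt u (u' x) x) :
    HasPartialDeriv i u fun x => u' x (EuclideanSpace.single i 1) :=
  ⟨hu, funext fun x => by rw [partialDeriv, (hu' x).fderiv]⟩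

lemma hasFDerivAt (h : HasPartialDeriv i u w) (x : euc N) : HasFDerivAt u (fderiv ℝ u x) x :=
  (h.contDiff.differentiable (by simp) x).hasFDerivAt

lemma apply_eq (h : HasPartialDeriv i u w) (x : euc N) :
    fderiv ℝ u x (EuclideanSpace.single i 1) = w x :=
  congrFun h.partialDeriv_eq x

lemma mul (h : HasPartialDeriv i u w) (h' : HasPartialDeriv i u' w') :
    HasPartialDeriv i (fun x => u x * u' x) fun x => w x * u' x + u x * w' x := by
  convert of_hasFDerivAt (i := i) (h.contDiff.mul h'.contDiff)
    fun x => (h.hasFDerivAt x).mul (h'.hasFDerivAt x) using 2 with x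
  simp only [add_apply, smul_apply, smul_eq_mul, h.apply_eq,
    h'.apply_eq]
  ring

lemma const (i : Fin N) (a : ℝ) : HasPartialDeriv i (fun _ => a) fun _ => 0 :=
  of_hasFDerivAt contDiff_const fun x => hasFDerivAt_const a x

lemma const_mul (h : HasPartialDeriv i u w) (a : ℝ) :
    HasPartialDeriv i (fun x => a * u x) fun x => a * w x := by
  simpa using (const i a).mul h

lemma comp (h : HasPartialDeriv i u w) {F F' : ℝ → ℝ} (hF : ContDiff ℝ (⊤ : ℕ∞) F)
    (hF' : ∀ s, HasDerivAt F (F' s) s) :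
    HasPartialDeriv i (fun x => F (u x)) fun x => F' (u x) * w x := by
  have hcomp := of_hasFDerivAt (i := i) (hF.comp h.contDiff)
    fun x => (hF' (u x)).comp_hasFDerivAt x (h.hasFDerivAt x)
  simp only [smul_apply, smul_eq_mul, h.apply_eq] at hcomp
  exact hcomp

lemma coord (i j : Fin N) :
    HasPartialDeriv i (fun x => x j) fun _ => if j = i then 1 else 0 := by
  have hproj := of_hasFDerivAt (i := i) (EuclideanSpace.proj j : euc N →L[ℝ] ℝ).contDiff
    fun x => (EuclideanSpace.proj j : euc N →L[ℝ] ℝ).hasFDerivAt (x := x)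
  simpa [Pi.single_apply] using hproj

lemma sum {ι : Type*} [Fintype ι] {u w : ι → euc N → ℝ} (h : ∀ k, HasPartialDeriv i (u k) (w k)) :
    HasPartialDeriv i (fun x => ∑ k, u k x) fun x => ∑ k, w k x := by
  convert of_hasFDerivAt (i := i) (ContDiff.sum fun k _ => (h k).contDiff)
    fun x => HasFDerivAt.fun_sum fun k _ => (h k).hasFDerivAt x using 2 with x
  simp only [sum_apply, (h _).apply_eq]

lemma add (h : HasPartialDeriv i u w) (h' : HasPartialDeriv i u' w') :
    HasPartialDeriv i (fun x => u x + u' x) fun x => w x + w' x := by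
  convert of_hasFDerivAt (i := i) (h.contDiff.add h'.contDiff)
    fun x => (h.hasFDerivAt x).add (h'.hasFDerivAt x) using 2 with x
  simp only [add_apply, h.apply_eq, h'.apply_eq]

lemma quadForm (i : Fin N) (a : Fin N → ℝ) :
    HasPartialDeriv i (quadForm a) fun x => 2 * a i * x i := by
  convert sum fun k => ((coord i k).mul (coord i k)).const_mul (a k) using 2 with x x
  · simp only [_root_.quadForm, sq]
  · simp only [ite_mul, one_mul, zero_mul, mul_ite, mul_one, mul_zero, mul_add,
      Finset.sum_add_distrib, Finset.sum_ite_eq', Finset.mem_univ, if_true]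
    ring

end HasPartialDeriv

lemma half_norm_sq_eq_quadForm (x : euc N) : ‖x‖ ^ 2 / 2 = quadForm (fun _ => 1 / 2) x := by
  simp only [quadForm, EuclideanSpace.real_norm_sq_eq, ← Finset.mul_sum]
  ring

lemma HasPartialDeriv.half_norm_sq (i : Fin N) :
    HasPartialDeriv i (fun x => ‖x‖ ^ 2 / 2) fun x => x i := by
  simpa [half_norm_sq_eq_quadForm] using HasPartialDeriv.quadForm i fun _ => 1 / 2

lemma HasPartialDeriv.coord_self (i : Fin N) : HasPartialDeriv i (fun x => x i) fun _ => 1 := by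
  simpa using HasPartialDeriv.coord i i

lemma partialDeriv_comm (hu : ContDiff ℝ (⊤ : ℕ∞) u) (i j : Fin N) :
    partialDeriv i (partialDeriv j u) = partialDeriv j (partialDeriv i u) := by
  have hfderiv (x) : DifferentiableAt ℝ (fderiv ℝ u) x :=
    (hu.fderiv_right (m := (⊤ : ℕ∞)) (by simp)).differentiable (by simp) x
  have hsecond (k l : Fin N) (x) : partialDeriv k (partialDeriv l u) x =
      fderiv ℝ (fderiv ℝ u) x (EuclideanSpace.single k 1) (EuclideanSpace.single l 1) := by
    change fderiv ℝ (fun y => fderiv ℝ u y _) x _ = _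
    rw [fderiv_clm_apply (hfderiv x) (by fun_prop)]
    simp
  funext x
  rw [hsecond, hsecond]
  have htwo : minSmoothness ℝ 2 ≤ ((⊤ : ℕ∞) : WithTop ℕ∞) := by
    rw [minSmoothness_of_isRCLikeNormedField]
    exact WithTop.coe_le_coe.2 (le_top : (2 : ℕ∞) ≤ ⊤)
  exact (hu.contDiffAt.isSymmSndFDerivAt htwo).eq _ _

lemma contDiff_weightedLaplacian (hu : ContDiff ℝ (⊤ : ℕ∞) u) (a : Fin N → ℝ) :
    ContDiff ℝ (⊤ : ℕ∞) (weightedLaplacian a u) :=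
  ContDiff.sum fun i _ => contDiff_const.mul (contDiff_partialDeriv (contDiff_partialDeriv hu i) i)

lemma partialDeriv_weightedLaplacian (hu : ContDiff ℝ (⊤ : ℕ∞) u) (a : Fin N → ℝ) (i : Fin N) :
    partialDeriv i (weightedLaplacian a u) = weightedLaplacian a (partialDeriv i u) := by
  have hsmooth (k) : ContDiff ℝ (⊤ : ℕ∞) (partialDeriv k (partialDeriv k u)) :=
    contDiff_partialDeriv (contDiff_partialDeriv hu k) k
  refine (HasPartialDeriv.sum fun k =>
    (hasPartialDeriv_of_contDiff (hsmooth k) i).const_mul (a k)).partialDeriv_eq.trans ?_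
  funext x
  refine Finset.sum_congr rfl fun k _ => ?_
  rw [partialDeriv_comm (contDiff_partialDeriv hu k), partialDeriv_comm hu i k]

lemma weightedLaplacian_const_mul (hu : ContDiff ℝ (⊤ : ℕ∞) u) (a : Fin N → ℝ) (b : ℝ)
    (x : euc N) : weightedLaplacian a (fun x => b * u x) x = b * weightedLaplacian a u x := by
  have hfirst (i) := (hasPartialDeriv_of_contDiff hu i).const_mul b
  have hsecond (i) := (hasPartialDeriv_of_contDiff (contDiff_partialDeriv hu i) i).const_mul b
  simp only [weightedLaplacian, (hfirst _).partialDeriv_eq, (hsecond _).partialDeriv_eq,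
    Finset.mul_sum]
  exact Finset.sum_congr rfl fun i _ => by ring

lemma weightedLaplacian_add (hu : ContDiff ℝ (⊤ : ℕ∞) u) (hv : ContDiff ℝ (⊤ : ℕ∞) v)
    (a : Fin N → ℝ) (x : euc N) : weightedLaplacian a (fun x => u x + v x) x =
      weightedLaplacian a u x + weightedLaplacian a v x := by
  have hfirst (i) := (hasPartialDeriv_of_contDiff hu i).add (hasPartialDeriv_of_contDiff hv i)
  have hsecond (i) := (hasPartialDeriv_of_contDiff (contDiff_partialDeriv hu i) i).add
    (hasPartialDeriv_of_contDiff (contDiff_partialDeriv hv i) i)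
  simp only [weightedLaplacian, (hfirst _).partialDeriv_eq, (hsecond _).partialDeriv_eq, mul_add,
    Finset.sum_add_distrib]

lemma weightedLaplacian_comm (hu : ContDiff ℝ (⊤ : ℕ∞) u) (a b : Fin N → ℝ) (x : euc N) :
    weightedLaplacian a (weightedLaplacian b u) x =
      weightedLaplacian b (weightedLaplacian a u) x := by
  have hfourth (a b : Fin N → ℝ) : weightedLaplacian a (weightedLaplacian b u) x =
      ∑ i, ∑ j, a i * (b j *
        partialDeriv j (partialDeriv j (partialDeriv i (partialDeriv i u))) x) := by
    refine Finset.sum_congr rfl fun i _ => ?_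
    rw [partialDeriv_weightedLaplacian hu,
      partialDeriv_weightedLaplacian (contDiff_partialDeriv hu i), weightedLaplacian,
      Finset.mul_sum]
  have hsq_comm (i j : Fin N) : partialDeriv j (partialDeriv j (partialDeriv i (partialDeriv i u)))
      = partialDeriv i (partialDeriv i (partialDeriv j (partialDeriv j u))) := by
    rw [partialDeriv_comm (contDiff_partialDeriv hu i) j i, partialDeriv_comm hu j i,
      partialDeriv_comm (contDiff_partialDeriv (contDiff_partialDeriv hu j) i) j i,
      partialDeriv_comm (contDiff_partialDeriv hu j) j i]
  rw [hfourth, hfourth, Finset.sum_comm]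
  exact Finset.sum_congr rfl fun j _ => Finset.sum_congr rfl fun i _ => by rw [hsq_comm]; ring

lemma weightedLaplacian_one (u : euc N → ℝ) (x : euc N) :
    weightedLaplacian (fun _ => 1) u x = ∑ i, partialDeriv i (partialDeriv i u) x := by
  simp only [weightedLaplacian, one_mul]

lemma isHelmholtz_iff : IsHelmholtz lam v ↔
    ContDiff ℝ (⊤ : ℕ∞) v ∧ weightedLaplacian (fun _ => 1) v = fun x => -lam * v x := by
  simp only [funext_iff, weightedLaplacian_one]
  exact ⟨fun h => ⟨h.1, h.2⟩, fun h => ⟨h.1, h.2⟩⟩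

namespace IsHelmholtz

lemma add (hu : IsHelmholtz lam u) (hv : IsHelmholtz lam v) :
    IsHelmholtz lam fun x => u x + v x := by
  rw [isHelmholtz_iff] at *
  refine ⟨hu.1.add hv.1, funext fun x => ?_⟩
  rw [weightedLaplacian_add hu.1 hv.1, hu.2, hv.2]
  ring

lemma const_mul (hv : IsHelmholtz lam v) (b : ℝ) : IsHelmholtz lam fun x => b * v x := by
  rw [isHelmholtz_iff] at *
  refine ⟨contDiff_const.mul hv.1, funext fun x => ?_⟩
  rw [weightedLaplacian_const_mul hv.1, hv.2]
  ring

lemma weightedLaplacian (hv : IsHelmholtz lam v) (a : Fin N → ℝ) :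
    IsHelmholtz lam (weightedLaplacian a v) := by
  rw [isHelmholtz_iff] at *
  refine ⟨contDiff_weightedLaplacian hv.1 a, funext fun x => ?_⟩
  rw [weightedLaplacian_comm hv.1, hv.2, weightedLaplacian_const_mul hv.1]

end IsHelmholtz

end PartialDeriv

section RadialFunctions

variable {N : ℕ} {F F' F'' : ℝ → ℝ}

lemma weightedLaplacian_radial_mul (hF : ContDiff ℝ (⊤ : ℕ∞) F) (hF' : ContDiff ℝ (⊤ : ℕ∞) F')
    (hd : ∀ s, HasDerivAt F (F' s) s) (hd' : ∀ s, HasDerivAt F' (F'' s) s) {P : euc N → ℝ}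
    {p q : Fin N → euc N → ℝ} (hP : ∀ i, HasPartialDeriv i P (p i))
    (hp : ∀ i, HasPartialDeriv i (p i) (q i)) (a : Fin N → ℝ) (x : euc N) :
    weightedLaplacian a (fun x => F (‖x‖ ^ 2 / 2) * P x) x =
      F'' (‖x‖ ^ 2 / 2) * quadForm a x * P x + (∑ i, a i) * F' (‖x‖ ^ 2 / 2) * P x +
        2 * F' (‖x‖ ^ 2 / 2) * (∑ i, a i * (x i * p i x)) + F (‖x‖ ^ 2 / 2) * ∑ i, a i * q i x := by
  have hfirst (i : Fin N) := ((HasPartialDeriv.half_norm_sq i).comp hF hd).mul (hP i)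
  have hsecond (i : Fin N) := ((((HasPartialDeriv.half_norm_sq i).comp hF' hd').mul
    (HasPartialDeriv.coord_self i)).mul (hP i)).add
      (((HasPartialDeriv.half_norm_sq i).comp hF hd).mul (hp i))
  simp only [weightedLaplacian, quadForm, (hfirst _).partialDeriv_eq,
    (hsecond _).partialDeriv_eq, Finset.mul_sum, Finset.sum_mul, ← Finset.sum_add_distrib]
  exact Finset.sum_congr rfl fun i _ => by ring

lemma weightedLaplacian_radial (hF : ContDiff ℝ (⊤ : ℕ∞) F) (hF' : ContDiff ℝ (⊤ : ℕ∞) F')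
    (hd : ∀ s, HasDerivAt F (F' s) s) (hd' : ∀ s, HasDerivAt F' (F'' s) s) (a : Fin N → ℝ)
    (x : euc N) : weightedLaplacian a (fun x => F (‖x‖ ^ 2 / 2)) x =
      F'' (‖x‖ ^ 2 / 2) * quadForm a x + (∑ i, a i) * F' (‖x‖ ^ 2 / 2) := by
  simpa using weightedLaplacian_radial_mul hF hF' hd hd' (fun i => HasPartialDeriv.const i 1)
    (fun i => HasPartialDeriv.const i 0) a x

lemma weightedLaplacian_radial_mul_quadForm (hF : ContDiff ℝ (⊤ : ℕ∞) F)
    (hF' : ContDiff ℝ (⊤ : ℕ∞) F') (hd : ∀ s, HasDerivAt F (F' s) s)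
    (hd' : ∀ s, HasDerivAt F' (F'' s) s) (a b : Fin N → ℝ) (x : euc N) :
    weightedLaplacian a (fun x => F (‖x‖ ^ 2 / 2) * quadForm b x) x =
      F'' (‖x‖ ^ 2 / 2) * quadForm a x * quadForm b x +
        (∑ i, a i) * F' (‖x‖ ^ 2 / 2) * quadForm b x +
        4 * F' (‖x‖ ^ 2 / 2) * quadForm (fun i => a i * b i) x +
        2 * (∑ i, a i * b i) * F (‖x‖ ^ 2 / 2) := by
  rw [weightedLaplacian_radial_mul hF hF' hd hd' (fun i => HasPartialDeriv.quadForm i b)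
    (fun i => (HasPartialDeriv.coord_self i).const_mul (2 * b i)) a x]
  have hcross : ∑ i, a i * (x i * (2 * b i * x i)) = 2 * quadForm (fun i => a i * b i) x := by
    rw [quadForm, Finset.mul_sum]
    exact Finset.sum_congr rfl fun i _ => by ring
  have htrace : ∑ i, a i * (2 * b i * 1) = 2 * ∑ i, a i * b i := by
    rw [Finset.mul_sum]
    exact Finset.sum_congr rfl fun i _ => by ring
  rw [hcross, htrace]
  ring

end RadialFunctions

section RadialProfile

variable {ν : ℝ}

/-- The `k`-th derivative of the profile `s ↦ g_ν (c s)`, where `s` stands for `‖x‖² / 2`. -/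
noncomputable def radialProfile (ν c : ℝ) (k : ℕ) (s : ℝ) : ℝ :=
  (-c) ^ k * besselClifford (ν + k) (c * s)

lemma contDiff_radialProfile (hν : 0 ≤ ν) (c : ℝ) (k : ℕ) :
    ContDiff ℝ (⊤ : ℕ∞) (radialProfile ν c k) :=
  contDiff_const.mul ((contDiff_besselClifford (by positivity)).comp
    (contDiff_const.mul contDiff_id))

lemma hasDerivAt_radialProfile (hν : 0 ≤ ν) (c : ℝ) (k : ℕ) (s : ℝ) :
    HasDerivAt (radialProfile ν c k) (radialProfile ν c (k + 1) s) s := by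
  have hcomp := ((hasDerivAt_besselClifford (μ := ν + k) (by positivity) (c * s)).comp s
    ((hasDerivAt_id s).const_mul c)).const_mul ((-c) ^ k)
  refine hcomp.congr_deriv ?_
  rw [radialProfile, Nat.cast_succ, ← add_assoc]
  ring

lemma radialProfile_recurrence (hν : 0 ≤ ν) (c : ℝ) (k : ℕ) (s : ℝ) :
    2 * s * radialProfile ν c (k + 2) s + 2 * (ν + k + 1) * radialProfile ν c (k + 1) s =
      -(2 * c) * radialProfile ν c k s := by
  simp only [radialProfile, Nat.cast_add, Nat.cast_one, Nat.cast_ofNat, ← add_assoc]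
  rw [besselClifford_recurrence (μ := ν + k) (by positivity) (c * s)]
  ring

lemma isHelmholtz_radialProfile {N : ℕ} (hN : 2 ≤ N) (c : ℝ) :
    IsHelmholtz (2 * c) fun x : euc N => radialProfile (besselOrder N) c 0 (‖x‖ ^ 2 / 2) := by
  have hν := besselOrder_nonneg hN
  have hsmooth := contDiff_radialProfile hν c
  refine isHelmholtz_iff.2 ⟨(hsmooth 0).comp (contDiff_id.norm_sq ℝ |>.div_const 2),
    funext fun x => ?_⟩
  rw [weightedLaplacian_radial (hsmooth 0) (hsmooth 1) (hasDerivAt_radialProfile hν c 0)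
    (hasDerivAt_radialProfile hν c 1), ← radialProfile_recurrence hν, besselOrder]
  simp only [quadForm, one_mul, ← EuclideanSpace.real_norm_sq_eq, Finset.sum_const,
    Finset.card_univ, Fintype.card_fin, nsmul_eq_mul, mul_one]
  push_cast
  ring

end RadialProfile

/-! ### The trial function -/

/-- The weights `(1, -1, 0, …, 0)`. -/
def saddleWeight {N : ℕ} (i : Fin N) : ℝ := if i.val = 0 then 1 else if i.val = 1 then -1 else 0

/-- The quadratic form `x₀² - x₁²`, which describes the perturbation of the ball. -/
def saddleForm {N : ℕ} (x : euc N) : ℝ := quadForm saddleWeight x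

/-- The quadratic form `x₀² + x₁²`. -/
def planeForm {N : ℕ} (x : euc N) : ℝ := quadForm (fun i => saddleWeight i ^ 2) x

lemma sum_comp_saddleWeight {N : ℕ} (hN : 2 ≤ N) {f : ℝ → ℝ} (hf : f 0 = 0) :
    ∑ i : Fin N, f (saddleWeight i) = f 1 + f (-1) := by
  obtain ⟨n, rfl⟩ := Nat.exists_eq_add_of_le' hN
  rw [Fin.sum_univ_succ, Fin.sum_univ_succ]
  simp [saddleWeight, hf]

/-- The second-order coefficient of the first eigenvalue of the ellipsoid
`‖x‖² + t (x₀² - x₁²) < 1`, relative to that of the ball, in terms of `n = N / 2` and of the first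
zero `z` of `besselClifford (n - 1)`. -/
noncomputable def eigenvalueCoeff (n z : ℝ) : ℝ :=
  z / (n ^ 2 * (n + 1)) - 1 / (2 * (n + 1)) - 1 / (n * (n + 1))

/-- Coefficient of `t D F` in the trial function. -/
noncomputable def trialCoeff₁ (n : ℝ) : ℝ := -1 / (4 * n)

/-- Coefficient of `t² D² F` in the trial function. -/
noncomputable def trialCoeff₂ (n : ℝ) : ℝ := 1 / (32 * n * (n + 1))

/-- Coefficient of `t² D' F` in the trial function. -/
noncomputable def trialCoeff₂' (n z : ℝ) : ℝ := (n * (n + 1) - z) / (4 * n ^ 2 * (n + 1))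

/-- The frequency parameter of the trial function, whose Helmholtz eigenvalue is
`4 z (1 + m t²)`. -/
def trialFreq (z m t : ℝ) : ℝ := 2 * z * (1 + m * t ^ 2)

/-- The second-order part `b D² F + b' D' F` of the trial function, for `k = 0`; in general the
`k`-th derivative in `s` of its profile. -/
noncomputable def secondOrderProfile (ν z m t : ℝ) (k : ℕ) (s τ p : ℝ) : ℝ :=
  trialCoeff₂ (ν + 1) * (radialProfile ν (trialFreq z m t) (k + 4) s * τ ^ 2 +
      4 * (radialProfile ν (trialFreq z m t) (k + 3) s * p) +
      4 * radialProfile ν (trialFreq z m t) (k + 2) s) +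
    trialCoeff₂' (ν + 1) z * (2 * radialProfile ν (trialFreq z m t) (k + 1) s +
      radialProfile ν (trialFreq z m t) (k + 2) s * p)

/-- For `k = 0` this is the trial function `F + a t D F + t² (b D² F + b' D' F)`, where
`D = ∂₀² - ∂₁²`, `D' = ∂₀² + ∂₁²` and `F` is the radial solution of the Helmholtz equation, written
in terms of `s = ‖x‖² / 2`, `τ = x₀² - x₁²` and `p = x₀² + x₁²`; in general it is the `k`-th
derivative of that function in `s`. -/
noncomputable def trialProfile (ν z m t : ℝ) (k : ℕ) (s τ p : ℝ) : ℝ :=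
  radialProfile ν (trialFreq z m t) k s +
    trialCoeff₁ (ν + 1) * t * (radialProfile ν (trialFreq z m t) (k + 2) s * τ) +
    t ^ 2 * secondOrderProfile ν z m t k s τ p

section WeightedLaplacianProfile

variable {N : ℕ} {ν : ℝ}

lemma weightedLaplacian_saddleWeight_radialProfile (hN : 2 ≤ N) (hν : 0 ≤ ν) (c : ℝ) (k : ℕ) :
    weightedLaplacian saddleWeight (fun x : euc N => radialProfile ν c k (‖x‖ ^ 2 / 2)) =
      fun x => radialProfile ν c (k + 2) (‖x‖ ^ 2 / 2) * saddleForm x := by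
  funext x
  rw [weightedLaplacian_radial (contDiff_radialProfile hν c k) (contDiff_radialProfile hν c (k + 1))
    (hasDerivAt_radialProfile hν c k) (hasDerivAt_radialProfile hν c (k + 1)),
    sum_comp_saddleWeight hN (f := fun x => x) rfl, saddleForm]
  ring

lemma weightedLaplacian_saddleWeight_sq_radialProfile (hN : 2 ≤ N) (hν : 0 ≤ ν) (c : ℝ) (k : ℕ) :
    weightedLaplacian (fun i => saddleWeight i ^ 2)
        (fun x : euc N => radialProfile ν c k (‖x‖ ^ 2 / 2)) =
      fun x => 2 * radialProfile ν c (k + 1) (‖x‖ ^ 2 / 2) +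
        radialProfile ν c (k + 2) (‖x‖ ^ 2 / 2) * planeForm x := by
  funext x
  rw [weightedLaplacian_radial (contDiff_radialProfile hν c k) (contDiff_radialProfile hν c (k + 1))
    (hasDerivAt_radialProfile hν c k) (hasDerivAt_radialProfile hν c (k + 1)),
    sum_comp_saddleWeight hN (f := fun x => x ^ 2) (by norm_num), planeForm]
  ring

lemma weightedLaplacian_saddleWeight_radialProfile_mul (hN : 2 ≤ N) (hν : 0 ≤ ν) (c : ℝ) (k : ℕ) :
    weightedLaplacian saddleWeight
        (fun x : euc N => radialProfile ν c k (‖x‖ ^ 2 / 2) * saddleForm x) =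
      fun x => radialProfile ν c (k + 2) (‖x‖ ^ 2 / 2) * saddleForm x ^ 2 +
        4 * (radialProfile ν c (k + 1) (‖x‖ ^ 2 / 2) * planeForm x) +
        4 * radialProfile ν c k (‖x‖ ^ 2 / 2) := by
  funext x
  simp only [saddleForm]
  rw [weightedLaplacian_radial_mul_quadForm (contDiff_radialProfile hν c k)
    (contDiff_radialProfile hν c (k + 1)) (hasDerivAt_radialProfile hν c k)
    (hasDerivAt_radialProfile hν c (k + 1))]
  simp only [← sq, planeForm]
  rw [sum_comp_saddleWeight hN (f := fun x => x) rfl,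
    sum_comp_saddleWeight hN (f := fun x => x ^ 2) (by norm_num)]
  ring

end WeightedLaplacianProfile

lemma isHelmholtz_trialProfile {N : ℕ} (hN : 2 ≤ N) (z m t : ℝ) :
    IsHelmholtz (4 * z * (1 + m * t ^ 2)) fun x : euc N =>
      trialProfile (besselOrder N) z m t 0 (‖x‖ ^ 2 / 2) (saddleForm x) (planeForm x) := by
  have hν := besselOrder_nonneg hN
  have hF := isHelmholtz_radialProfile hN (trialFreq z m t)
  have hDF := hF.weightedLaplacian saddleWeight
  have hDDF := hDF.weightedLaplacian saddleWeight
  have hD'F := hF.weightedLaplacian fun i => saddleWeight i ^ 2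
  rw [weightedLaplacian_saddleWeight_radialProfile hN hν] at hDF hDDF
  rw [weightedLaplacian_saddleWeight_radialProfile_mul hN hν] at hDDF
  rw [weightedLaplacian_saddleWeight_sq_radialProfile hN hν] at hD'F
  rw [show 4 * z * (1 + m * t ^ 2) = 2 * trialFreq z m t by rw [trialFreq]; ring]
  exact (hF.add (hDF.const_mul _)).add (((hDDF.const_mul _).add (hD'F.const_mul _)).const_mul _)

lemma eventually_forall_pos_of_continuousAt {X Y : Type*} [TopologicalSpace X] [TopologicalSpace Y]
    {K : Set X} (hK : IsCompact K) {f : X × Y → ℝ} {y₀ : Y}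
    (hf : ∀ x ∈ K, ContinuousAt f (x, y₀)) (hpos : ∀ x ∈ K, 0 < f (x, y₀)) :
    ∀ᶠ y in 𝓝 y₀, ∀ x ∈ K, 0 < f (x, y) :=
  hK.eventually_forall_of_forall_eventually fun x hx =>
    (continuous_swap.tendsto (y₀, x)).eventually ((hf x hx).eventually (lt_mem_nhds (hpos x hx)))

section TrialProfile

variable {ν z : ℝ}

lemma hasDerivAt_trialProfile (hν : 0 ≤ ν) (m t : ℝ) (k : ℕ) (s τ p : ℝ) :
    HasDerivAt (fun s => trialProfile ν z m t k s τ p) (trialProfile ν z m t (k + 1) s τ p) s := by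
  have hd (j : ℕ) : HasDerivAt (radialProfile ν (trialFreq z m t) (k + j))
      (radialProfile ν (trialFreq z m t) (k + 1 + j) s) s := by
    rw [add_right_comm]
    exact hasDerivAt_radialProfile hν _ (k + j) s
  exact ((hd 0).add (((hd 2).mul_const τ).const_mul _)).add
    ((((((hd 4).mul_const (τ ^ 2)).add (((hd 3).mul_const p).const_mul 4)).add
      ((hd 2).const_mul 4)).const_mul _).add ((((hd 1).const_mul 2).add
      ((hd 2).mul_const p)).const_mul _) |>.const_mul (t ^ 2))

section Continuity

variable {X : Type*} [TopologicalSpace X] {t s τ p : X → ℝ}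

lemma continuous_radialProfile_trialFreq (hν : 0 ≤ ν) (ht : Continuous t) (hs : Continuous s)
    (m : ℝ) (k : ℕ) :
    Continuous fun w => radialProfile ν (trialFreq z m (t w)) k (s w) := by
  have : Continuous (besselClifford (ν + k)) := continuous_besselClifford (by positivity)
  unfold radialProfile trialFreq
  fun_prop

lemma continuous_secondOrderProfile (hν : 0 ≤ ν) (ht : Continuous t) (hs : Continuous s)
    (hτ : Continuous τ) (hp : Continuous p) (m : ℝ) (k : ℕ) :
    Continuous fun w => secondOrderProfile ν z m (t w) k (s w) (τ w) (p w) := by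
  have := continuous_radialProfile_trialFreq (z := z) hν ht hs m
  unfold secondOrderProfile
  fun_prop

lemma continuous_trialProfile (hν : 0 ≤ ν) (ht : Continuous t) (hs : Continuous s)
    (hτ : Continuous τ) (hp : Continuous p) (m : ℝ) (k : ℕ) :
    Continuous fun w => trialProfile ν z m (t w) k (s w) (τ w) (p w) := by
  have := continuous_radialProfile_trialFreq (z := z) hν ht hs m
  have := continuous_secondOrderProfile (z := z) hν ht hs hτ hp m
  unfold trialProfile
  fun_prop

end Continuity

lemma eventually_trialProfile_one_neg (hν : 0 ≤ ν)
    (hz : IsFirstZero (besselClifford ν) z) (m : ℝ) {K : Set (ℝ × ℝ)} (hK : IsCompact K) :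
    ∀ᶠ t in 𝓝 (0 : ℝ), ∀ q ∈ K,
    ∀ s ∈ Icc 0 ((1 - t * q.1) / 2), trialProfile ν z m t 1 s q.1 q.2 < 0 := by
  let f : (ℝ × ℝ × ℝ) × ℝ → ℝ := fun w =>
    -trialProfile ν z m w.2 1 (w.1.1 * ((1 - w.2 * w.1.2.1) / 2)) w.1.2.1 w.1.2.2
  have hf : Continuous f := (continuous_trialProfile hν (by fun_prop) (by fun_prop) (by fun_prop)
    (by fun_prop) m 1).neg
  have hpos : ∀ w ∈ Icc (0 : ℝ) 1 ×ˢ K, 0 < f (w, 0) := fun w hw => by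
    have hzσ : z * w.1 ∈ Icc 0 z :=
      ⟨mul_nonneg hz.pos.le hw.1.1, mul_le_of_le_one_right hz.pos.le hw.1.2⟩
    have hval : f (w, 0) = 2 * z * besselClifford (ν + 1) (z * w.1) := by
      simp only [f, trialProfile, radialProfile, trialFreq]
      ring_nf
    rw [hval]
    exact mul_pos (mul_pos two_pos hz.pos) (hz.besselClifford_add_one_pos hν _ hzσ)
  filter_upwards [eventually_forall_pos_of_continuousAt (isCompact_Icc.prod hK)
    (fun _ _ => hf.continuousAt) hpos] with t ht q hq s hs
  obtain ⟨σ, hσ, rfl⟩ : ∃ σ ∈ Icc (0 : ℝ) 1, σ * ((1 - t * q.1) / 2) = s := by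
    rcases (hs.1.trans hs.2).eq_or_lt with hzero | hlt
    · exact ⟨0, ⟨le_rfl, zero_le_one⟩, by linarith [hs.1, hs.2]⟩
    · exact ⟨s / ((1 - t * q.1) / 2), ⟨div_nonneg hs.1 hlt.le, (div_le_one hlt).2 hs.2⟩,
        div_mul_cancel₀ _ hlt.ne'⟩
  exact neg_pos.1 (ht (σ, q) ⟨hσ, hq⟩)

lemma eventually_antitoneOn_trialProfile (hν : 0 ≤ ν)
    (hz : IsFirstZero (besselClifford ν) z) (m : ℝ) {K : Set (ℝ × ℝ)} (hK : IsCompact K) :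
    ∀ᶠ t in 𝓝 (0 : ℝ), ∀ q ∈ K,
    AntitoneOn (fun s => trialProfile ν z m t 0 s q.1 q.2) (Icc 0 ((1 - t * q.1) / 2)) := by
  filter_upwards [eventually_trialProfile_one_neg hν hz m hK] with t ht q hq
  have hd (s) := hasDerivAt_trialProfile (z := z) hν m t 0 s q.1 q.2
  refine antitoneOn_of_hasDerivWithinAt_nonpos (convex_Icc _ _)
    (fun s _ => (hd s).continuousAt.continuousWithinAt) (fun s _ => (hd s).hasDerivWithinAt)
    fun s hs => (ht q hq s (interior_subset hs)).le

end TrialProfile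

/-! ### Boundary values of the trial function -/

lemma exists_taylor_two {g : ℝ → ℝ} (hg : ContDiff ℝ 2 g) (z : ℝ) :
    ∃ R : ℝ → ℝ, ContinuousAt R 0 ∧ R 0 = deriv (deriv g) z / 2 ∧
      ∀ h, g (z + h) = g z + h * deriv g z + h ^ 2 * R h := by
  have htaylor (x) : taylorWithinEval g 2 univ z x =
      g z + (x - z) * deriv g z + (x - z) ^ 2 * (deriv (deriv g) z / 2) := by
    rw [taylorWithinEval_succ, taylorWithinEval_succ, taylor_within_zero_eval]
    simp only [iteratedDerivWithin_univ, iteratedDeriv_succ, iteratedDeriv_zero, smul_eq_mul]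
    norm_num
    ring
  have hlittle := taylor_isLittleO (f := g) (x₀ := z) convex_univ (mem_univ z) hg.contDiffOn
  simp only [htaylor, nhdsWithin_univ] at hlittle
  have hshift : Tendsto (fun h : ℝ => z + h) (𝓝 0) (𝓝 z) := by
    simpa using (continuous_const_add z).tendsto 0
  have hlim := (hlittle.comp_tendsto hshift).tendsto_div_nhds_zero.add_const
    (deriv (deriv g) z / 2)
  refine ⟨fun h => if h = 0 then deriv (deriv g) z / 2
    else (g (z + h) - g z - h * deriv g z) / h ^ 2, ?_, if_pos rfl, fun h => ?_⟩
  · rw [zero_add] at hlim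
    rw [ContinuousAt, if_pos rfl]
    refine hlim.congr fun h => ?_
    rcases eq_or_ne h 0 with rfl | hh
    · simp
    · simp only [Function.comp_apply, add_sub_cancel_left, if_neg hh]
      field_simp
      ring
  · rcases eq_or_ne h 0 with rfl | hh
    · simp
    · simp only [if_neg hh]
      field_simp
      ring

lemma exists_besselClifford_taylor_two {μ : ℝ} (hμ : 0 ≤ μ) (z : ℝ) :
    ∃ R : ℝ → ℝ, ContinuousAt R 0 ∧ R 0 = besselClifford (μ + 2) z / 2 ∧
      ∀ h, besselClifford μ (z + h) =
        besselClifford μ z - h * besselClifford (μ + 1) z + h ^ 2 * R h := by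
  obtain ⟨R, hR, hR₀, hexp⟩ := exists_taylor_two (contDiff_infty.1 (contDiff_besselClifford hμ) 2) z
  have hsecond : deriv (deriv (besselClifford μ)) z = besselClifford (μ + 2) z := by
    rw [deriv_besselClifford hμ]
    simp only [deriv.fun_neg, deriv_besselClifford (add_nonneg hμ zero_le_one), neg_neg, add_assoc,
      one_add_one_eq_two]
  refine ⟨R, hR, hR₀.trans (by rw [hsecond]), fun h => ?_⟩
  rw [hexp, deriv_besselClifford hμ]
  ring

section BoundaryValues

variable {ν z : ℝ}

lemma besselClifford_add_two_of_eq_zero (hν : 0 ≤ ν) (hz : z ≠ 0)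
    (hzero : besselClifford ν z = 0) :
    besselClifford (ν + 2) z = (ν + 1) * besselClifford (ν + 1) z / z := by
  have hrec := besselClifford_recurrence hν z
  field_simp
  linarith

lemma besselClifford_add_three_of_eq_zero (hν : 0 ≤ ν) (hz : z ≠ 0)
    (hzero : besselClifford ν z = 0) :
    besselClifford (ν + 3) z = ((ν + 2) * (ν + 1) - z) * besselClifford (ν + 1) z / z ^ 2 := by
  have hrec := besselClifford_recurrence (μ := ν + 1) (by positivity) z
  rw [show ν + 1 + 1 = ν + 2 by ring, show ν + 1 + 2 = ν + 3 by ring,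
    besselClifford_add_two_of_eq_zero hν hz hzero] at hrec
  field_simp at hrec ⊢
  linarith

lemma besselClifford_add_four_of_eq_zero (hν : 0 ≤ ν) (hz : z ≠ 0)
    (hzero : besselClifford ν z = 0) :
    besselClifford (ν + 4) z =
      ((ν + 3) * ((ν + 2) * (ν + 1) - z) - z * (ν + 1)) * besselClifford (ν + 1) z / z ^ 3 := by
  have hrec := besselClifford_recurrence (μ := ν + 2) (by positivity) z
  rw [show ν + 2 + 1 = ν + 3 by ring, show ν + 2 + 2 = ν + 4 by ring,
    besselClifford_add_three_of_eq_zero hν hz hzero,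
    besselClifford_add_two_of_eq_zero hν hz hzero] at hrec
  field_simp at hrec ⊢
  linarith

/-- The increment divided by `t` of the argument of the Bessel-Clifford functions from `z` to its
value on the boundary of the ellipsoid, where `s = (1 - t τ) / 2`. -/
def boundaryShift (z m t τ : ℝ) : ℝ := z * (-τ + m * t - m * t ^ 2 * τ)

lemma trialFreq_mul_boundary (z m t τ : ℝ) :
    trialFreq z m t * ((1 - t * τ) / 2) = z + t * boundaryShift z m t τ := by
  rw [trialFreq, boundaryShift]
  ring

/-- The boundary values of the trial function divided by `t²`, as a function of `((τ, p), t)`, when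
`R` and `S` are the second-order Taylor remainders at `z` of `g_ν` and `g_{ν+2}`. -/
noncomputable def boundaryQuotient (ν z m : ℝ) (R S : ℝ → ℝ) (w : (ℝ × ℝ) × ℝ) : ℝ :=
  let τ := w.1.1
  let t := w.2
  let κ := boundaryShift z m t τ
  κ ^ 2 * R (t * κ) - z * besselClifford (ν + 1) z * (m - m * t * τ) +
    trialCoeff₁ (ν + 1) * τ * (4 * z ^ 2 * (2 * m * t + m ^ 2 * t ^ 3) * besselClifford (ν + 2) z) +
    trialCoeff₁ (ν + 1) * τ * trialFreq z m t ^ 2 * κ *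
      (-besselClifford (ν + 3) z + t * κ * S (t * κ)) +
    secondOrderProfile ν z m t 0 ((1 - t * τ) / 2) τ w.1.2

lemma continuousAt_boundaryQuotient (hν : 0 ≤ ν) (z m : ℝ) {R S : ℝ → ℝ} (hR : ContinuousAt R 0)
    (hS : ContinuousAt S 0) (q : ℝ × ℝ) :
    ContinuousAt (boundaryQuotient ν z m R S) (q, 0) := by
  have harg : ContinuousAt (fun w : (ℝ × ℝ) × ℝ => w.2 * boundaryShift z m w.2 w.1.1) (q, 0) := by
    unfold boundaryShift
    fun_prop
  have hRcomp := ContinuousAt.comp (g := R) (by simpa using hR) harg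
  have hScomp := ContinuousAt.comp (g := S) (by simpa using hS) harg
  have hsecond := (continuous_secondOrderProfile (X := (ℝ × ℝ) × ℝ) (z := z) (t := fun w => w.2)
    (s := fun w => (1 - w.2 * w.1.1) / 2) (τ := fun w => w.1.1) (p := fun w => w.1.2) hν
    (by fun_prop) (by fun_prop) (by fun_prop) (by fun_prop) m 0).continuousAt (x := (q, 0))
  change ContinuousAt (fun w => boundaryQuotient ν z m R S w) (q, 0)
  simp only [Function.comp_def, boundaryQuotient, trialFreq, boundaryShift] at hRcomp hScomp ⊢
  refine ((((ContinuousAt.mul ?_ hRcomp).sub ?_).add ?_).add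
    (ContinuousAt.mul ?_ (ContinuousAt.add ?_ (ContinuousAt.mul ?_ hScomp)))).add hsecond <;>
    exact Continuous.continuousAt (by fun_prop)

lemma trialProfile_boundary (hν : 0 ≤ ν) (hz : z ≠ 0) (hzero : besselClifford ν z = 0) (m : ℝ)
    {R S : ℝ → ℝ}
    (hR : ∀ h, besselClifford ν (z + h) =
      besselClifford ν z - h * besselClifford (ν + 1) z + h ^ 2 * R h)
    (hS : ∀ h, besselClifford (ν + 2) (z + h) =
      besselClifford (ν + 2) z - h * besselClifford (ν + 3) z + h ^ 2 * S h) (q : ℝ × ℝ) (t : ℝ) :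
    trialProfile ν z m t 0 ((1 - t * q.1) / 2) q.1 q.2 =
      t ^ 2 * boundaryQuotient ν z m R S (q, t) := by
  have : ν + 1 ≠ 0 := by positivity
  simp only [trialProfile, boundaryQuotient, radialProfile, trialFreq_mul_boundary, zero_add,
    Nat.cast_zero, add_zero, Nat.cast_ofNat, hR, hS, hzero]
  rw [besselClifford_add_two_of_eq_zero hν hz hzero]
  generalize R _ = r
  generalize S _ = r'
  simp only [boundaryShift, trialFreq, trialCoeff₁]
  field_simp
  ring

lemma boundaryQuotient_zero (hν : 0 ≤ ν) (hz : z ≠ 0) (hzero : besselClifford ν z = 0) (m : ℝ)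
    {R : ℝ → ℝ} (hR : R 0 = besselClifford (ν + 2) z / 2) (S : ℝ → ℝ) (q : ℝ × ℝ) :
    boundaryQuotient ν z m R S (q, 0) =
      z * besselClifford (ν + 1) z * (eigenvalueCoeff (ν + 1) z - m) := by
  have : ν + 1 ≠ 0 := by positivity
  have : ν + 1 + 1 ≠ 0 := by positivity
  have harg : trialFreq z m 0 * (1 / 2) = z := by
    rw [trialFreq]
    ring
  simp only [boundaryQuotient, boundaryShift, secondOrderProfile, radialProfile, zero_mul, sub_zero,
    mul_zero, zero_add, harg, Nat.cast_one, Nat.cast_ofNat, hR,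
    besselClifford_add_two_of_eq_zero hν hz hzero, besselClifford_add_three_of_eq_zero hν hz hzero,
    besselClifford_add_four_of_eq_zero hν hz hzero]
  simp only [trialFreq, trialCoeff₁, trialCoeff₂, trialCoeff₂', eigenvalueCoeff]
  field_simp
  ring

-- The coefficients of the trial function are chosen so that its boundary values vanish to first
-- order in `t` and are constant to second order.
lemma exists_trialProfile_boundary_eq (hν : 0 ≤ ν) (hz : z ≠ 0) (hzero : besselClifford ν z = 0)
    (m : ℝ) : ∃ W : (ℝ × ℝ) × ℝ → ℝ, (∀ q, ContinuousAt W (q, 0)) ∧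
      (∀ q, W (q, 0) = z * besselClifford (ν + 1) z * (eigenvalueCoeff (ν + 1) z - m)) ∧
      ∀ q t, trialProfile ν z m t 0 ((1 - t * q.1) / 2) q.1 q.2 = t ^ 2 * W (q, t) := by
  obtain ⟨R, hRc, hR₀, hR⟩ := exists_besselClifford_taylor_two hν z
  obtain ⟨S, hSc, -, hS⟩ := exists_besselClifford_taylor_two (add_nonneg hν zero_le_two) z
  rw [show ν + 2 + 1 = ν + 3 by ring] at hS
  exact ⟨boundaryQuotient ν z m R S, continuousAt_boundaryQuotient hν z m hRc hSc,
    boundaryQuotient_zero hν hz hzero m hR₀ S, trialProfile_boundary hν hz hzero m hR hS⟩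

end BoundaryValues

/-! ### The eigenvalue of the ellipsoids -/

/-- The ellipsoid `(1 + t) x₀² + (1 - t) x₁² + x₂² + ⋯ < 1`. -/
def ellipsoid (N : ℕ) (t : ℝ) : Set (euc N) := {x | ‖x‖ ^ 2 + t * saddleForm x < 1}

section Ellipsoid

variable {N : ℕ} {t : ℝ} {x : euc N}

lemma norm_sq_eq_sum_sq (x : euc N) : ‖x‖ ^ 2 = ∑ i, x i ^ 2 := by
  simp_rw [EuclideanSpace.norm_sq_eq, Real.norm_eq_abs, sq_abs]

lemma abs_saddleWeight_le (i : Fin N) : |saddleWeight i| ≤ 1 := by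
  unfold saddleWeight
  split_ifs <;> simp

lemma abs_saddleForm_le (x : euc N) : |saddleForm x| ≤ ‖x‖ ^ 2 := by
  rw [norm_sq_eq_sum_sq, saddleForm, quadForm]
  refine (Finset.abs_sum_le_sum_abs _ _).trans (Finset.sum_le_sum fun i _ => ?_)
  rw [abs_mul, abs_of_nonneg (sq_nonneg (x i))]
  exact mul_le_of_le_one_left (sq_nonneg _) (abs_saddleWeight_le i)

lemma planeForm_nonneg (x : euc N) : 0 ≤ planeForm x := by
  unfold planeForm quadForm
  positivity

lemma planeForm_le (x : euc N) : planeForm x ≤ ‖x‖ ^ 2 := by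
  rw [norm_sq_eq_sum_sq, planeForm, quadForm]
  refine Finset.sum_le_sum fun i _ => mul_le_of_le_one_left (sq_nonneg _) ?_
  exact (sq_le_one_iff_abs_le_one _).2 (abs_saddleWeight_le i)

lemma continuous_saddleForm : Continuous (saddleForm : euc N → ℝ) := by
  unfold saddleForm quadForm
  fun_prop

lemma saddleForm_zero : saddleForm (0 : euc N) = 0 := by simp [saddleForm, quadForm]

lemma planeForm_zero : planeForm (0 : euc N) = 0 := by simp [planeForm, quadForm]

lemma isOpen_ellipsoid (N : ℕ) (t : ℝ) : IsOpen (ellipsoid N t) :=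
  isOpen_lt ((continuous_norm.pow 2).add (continuous_saddleForm.const_mul t)) continuous_const

lemma zero_mem_ellipsoid (N : ℕ) (t : ℝ) : (0 : euc N) ∈ ellipsoid N t := by
  simp [ellipsoid, saddleForm_zero]

lemma norm_sq_le_two (ht : |t| ≤ 1 / 2) (hx : ‖x‖ ^ 2 + t * saddleForm x ≤ 1) : ‖x‖ ^ 2 ≤ 2 := by
  have habs : |t * saddleForm x| ≤ 1 / 2 * ‖x‖ ^ 2 := by
    rw [abs_mul]
    gcongr
    exact abs_saddleForm_le x
  linarith [neg_abs_le (t * saddleForm x)]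

lemma isBounded_ellipsoid (ht : |t| ≤ 1 / 2) : Bornology.IsBounded (ellipsoid N t) := by
  refine isBounded_iff_forall_norm_le.2 ⟨2, fun x hx => ?_⟩
  nlinarith [norm_sq_le_two ht (le_of_lt hx), norm_nonneg x]

lemma norm_sq_add_eq_one_of_mem_frontier_ellipsoid (hx : x ∈ frontier (ellipsoid N t)) :
    ‖x‖ ^ 2 + t * saddleForm x = 1 :=
  frontier_lt_subset_eq (f := fun x : euc N => ‖x‖ ^ 2 + t * saddleForm x)
    ((continuous_norm.pow 2).add (continuous_saddleForm.const_mul t)) continuous_const hx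

lemma forms_mem_box (hx : ‖x‖ ^ 2 ≤ 2) :
    (saddleForm x, planeForm x) ∈ (Icc (-2) 2 ×ˢ Icc 0 2 : Set (ℝ × ℝ)) :=
  ⟨abs_le.1 ((abs_saddleForm_le x).trans hx), planeForm_nonneg x, (planeForm_le x).trans hx⟩

lemma isCompact_box : IsCompact (Icc (-2) 2 ×ˢ Icc 0 2 : Set (ℝ × ℝ)) :=
  isCompact_Icc.prod isCompact_Icc

lemma eventually_abs_le_half : ∀ᶠ t : ℝ in 𝓝 0, |t| ≤ 1 / 2 :=
  (continuous_abs.tendsto' (0 : ℝ) 0 abs_zero).eventually (ge_mem_nhds (by norm_num))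

end Ellipsoid

section EigenvalueAsymptotics

variable {N : ℕ} {z m : ℝ}

lemma eventually_le_firstEigenvalue_ellipsoid (hN : 2 ≤ N)
    (hz : IsFirstZero (besselClifford (besselOrder N)) z)
    (hm : m < eigenvalueCoeff (besselOrder N + 1) z) :
    ∀ᶠ t in 𝓝[>] (0 : ℝ), 4 * z * (1 + m * t ^ 2) ≤ firstEigenvalue N (ellipsoid N t) := by
  have hν := besselOrder_nonneg hN
  obtain ⟨W, hW, hW₀, hboundary⟩ := exists_trialProfile_boundary_eq hν hz.pos.ne' hz.eq_zero m
  have hWpos := eventually_forall_pos_of_continuousAt isCompact_box (fun q _ => hW q) fun q _ => by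
    rw [hW₀]
    exact mul_pos (mul_pos hz.pos (hz.besselClifford_add_one_pos hν z ⟨hz.pos.le, le_rfl⟩))
      (sub_pos.2 hm)
  have hanti := eventually_antitoneOn_trialProfile hν hz m isCompact_box
  filter_upwards [hWpos.filter_mono inf_le_left, hanti.filter_mono inf_le_left,
    eventually_abs_le_half.filter_mono inf_le_left, self_mem_nhdsWithin]
    with t hWt hanti ht (ht₀ : 0 < t)
  refine (isHelmholtz_trialProfile hN z m t).le_firstEigenvalue (isOpen_ellipsoid N t)
    ⟨0, zero_mem_ellipsoid N t⟩ fun x hx => ?_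
  have hx' : ‖x‖ ^ 2 + t * saddleForm x < 1 := hx
  have hbox := forms_mem_box (norm_sq_le_two ht hx'.le)
  have hs : ‖x‖ ^ 2 / 2 ∈ Icc 0 ((1 - t * saddleForm x) / 2) := ⟨by positivity, by linarith⟩
  calc 0 < t ^ 2 * W ((saddleForm x, planeForm x), t) := mul_pos (by positivity) (hWt _ hbox)
    _ = trialProfile (besselOrder N) z m t 0 ((1 - t * saddleForm x) / 2) (saddleForm x)
        (planeForm x) := (hboundary (saddleForm x, planeForm x) t).symm
    _ ≤ _ := hanti _ hbox hs ⟨hs.1.trans hs.2, le_rfl⟩ hs.2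

lemma eventually_firstEigenvalue_ellipsoid_le (hN : 2 ≤ N)
    (hz : IsFirstZero (besselClifford (besselOrder N)) z)
    (hm : eigenvalueCoeff (besselOrder N + 1) z < m) :
    ∀ᶠ t in 𝓝[>] (0 : ℝ), firstEigenvalue N (ellipsoid N t) ≤ 4 * z * (1 + m * t ^ 2) := by
  have hν := besselOrder_nonneg hN
  obtain ⟨W, hW, hW₀, hboundary⟩ := exists_trialProfile_boundary_eq hν hz.pos.ne' hz.eq_zero m
  have hWneg := eventually_forall_pos_of_continuousAt (f := -W) isCompact_box
    (fun q _ => (hW q).neg) fun q _ => by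
      rw [Pi.neg_apply, hW₀, ← mul_neg, neg_sub]
      exact mul_pos (mul_pos hz.pos (hz.besselClifford_add_one_pos hν z ⟨hz.pos.le, le_rfl⟩))
        (sub_pos.2 hm)
  have hcenter : ∀ᶠ t in 𝓝 (0 : ℝ), 0 < trialProfile (besselOrder N) z m t 0 0 0 0 := by
    have hcont : Continuous fun t => trialProfile (besselOrder N) z m t 0 0 0 0 :=
      continuous_trialProfile hν continuous_id continuous_const continuous_const
        continuous_const m 0
    refine (hcont.tendsto 0).eventually (lt_mem_nhds ?_)
    simpa [trialProfile, secondOrderProfile, radialProfile] using besselClifford_zero_pos hν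
  filter_upwards [hWneg.filter_mono inf_le_left, hcenter.filter_mono inf_le_left,
    eventually_abs_le_half.filter_mono inf_le_left] with t hWt hcenter ht
  refine (isHelmholtz_trialProfile hN z m t).firstEigenvalue_le (isOpen_ellipsoid N t)
    (isBounded_ellipsoid ht) (fun x hx => ?_) (zero_mem_ellipsoid N t) ?_
  · have hx' := norm_sq_add_eq_one_of_mem_frontier_ellipsoid hx
    have hs : ‖x‖ ^ 2 / 2 = (1 - t * saddleForm x) / 2 := by linarith
    rw [hs, hboundary (saddleForm x, planeForm x) t]
    exact mul_nonpos_of_nonneg_of_nonpos (sq_nonneg t)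
      (neg_pos.1 (hWt _ (forms_mem_box (norm_sq_le_two ht hx'.le)))).le
  · simpa [saddleForm_zero, planeForm_zero] using hcenter

theorem tendsto_firstEigenvalue_ellipsoid (hN : 2 ≤ N)
    (hz : IsFirstZero (besselClifford (besselOrder N)) z) :
    Tendsto (fun t => (firstEigenvalue N (ellipsoid N t) / (4 * z) - 1) / t ^ 2) (𝓝[>] 0)
      (𝓝 (eigenvalueCoeff (besselOrder N + 1) z)) := by
  have hz₀ := hz.pos
  refine tendsto_order.2 ⟨fun a ha => ?_, fun a ha => ?_⟩ <;>
    obtain ⟨m, hm₁, hm₂⟩ := exists_between ha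
  · filter_upwards [eventually_le_firstEigenvalue_ellipsoid hN hz hm₂, self_mem_nhdsWithin]
      with t hle (ht : 0 < t)
    refine hm₁.trans_le ?_
    rw [le_div_iff₀ (by positivity), le_sub_iff_add_le, le_div_iff₀ (by positivity)]
    linarith
  · filter_upwards [eventually_firstEigenvalue_ellipsoid_le hN hz hm₁, self_mem_nhdsWithin]
      with t hle (ht : 0 < t)
    refine lt_of_le_of_lt ?_ hm₂
    rw [div_le_iff₀ (by positivity), sub_le_iff_le_add, div_le_iff₀ (by positivity)]
    linarith

theorem firstEigenvalue_ball (hN : 2 ≤ N)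
    (hz : IsFirstZero (besselClifford (besselOrder N)) z) {R : ℝ} (hR : 0 < R) :
    firstEigenvalue N (ball 0 R) = 4 * z / R ^ 2 := by
  have hz₀ := hz.pos
  have hvalue : ∀ x : euc N, radialProfile (besselOrder N) (2 * z / R ^ 2) 0 (‖x‖ ^ 2 / 2) =
      besselClifford (besselOrder N) (z * (‖x‖ / R) ^ 2) := fun x => by
    rw [radialProfile, pow_zero, one_mul, Nat.cast_zero, add_zero]
    congr 1
    field_simp
  have hhelm := isHelmholtz_radialProfile hN (2 * z / R ^ 2)
  simp only [hvalue] at hhelm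
  have hpos : ∀ x ∈ ball (0 : euc N) R,
      0 < besselClifford (besselOrder N) (z * (‖x‖ / R) ^ 2) := fun x hx => by
    have hlt : (‖x‖ / R) ^ 2 < 1 :=
      pow_lt_one₀ (by positivity) ((div_lt_one hR).2 (mem_ball_zero_iff.1 hx)) two_ne_zero
    exact hz.pos_of_lt _ ⟨by positivity, mul_lt_of_lt_one_right hz.pos hlt⟩
  have hfrontier : ∀ x ∈ frontier (ball (0 : euc N) R),
      besselClifford (besselOrder N) (z * (‖x‖ / R) ^ 2) ≤ 0 := fun x hx => by
    rw [frontier_ball _ hR.ne', mem_sphere_zero_iff_norm] at hx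
    rw [hx, div_self hR.ne', one_pow, mul_one, hz.eq_zero]
  have hcenter : (0 : euc N) ∈ ball 0 R := mem_ball_self hR
  rw [show 4 * z / R ^ 2 = 2 * (2 * z / R ^ 2) by ring]
  exact le_antisymm
    (hhelm.firstEigenvalue_le isOpen_ball isBounded_ball hfrontier hcenter (hpos 0 hcenter))
    (hhelm.le_firstEigenvalue isOpen_ball ⟨0, hcenter⟩ hpos)

end EigenvalueAsymptotics

/-! ### Images of the unit sphere under linear maps -/

lemma hausdorffMeasure_image_le_of_dist_le {X Y Z : Type*}
    [MetricSpace Y] [MeasurableSpace Y] [BorelSpace Y]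
    [MetricSpace Z] [MeasurableSpace Z] [BorelSpace Z] {f : X → Y} {g : X → Z} {A : Set X}
    {K : NNReal} {s : ℝ} (hs : 0 ≤ s)
    (h : ∀ x ∈ A, ∀ y ∈ A, dist (f x) (f y) ≤ K * dist (g x) (g y)) :
    μH[s] (f '' A) ≤ (K : ENNReal) ^ s * μH[s] (g '' A) := by
  rcases A.eq_empty_or_nonempty with rfl | ⟨a, _⟩
  · simp
  have : Nonempty X := ⟨a⟩
  have section_spec (p) (hp : p ∈ g '' A) :
      Function.invFunOn g A p ∈ A ∧ g (Function.invFunOn g A p) = p :=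
    ⟨Function.invFunOn_mem hp, Function.invFunOn_eq hp⟩
  have lipschitz : LipschitzOnWith K (f ∘ Function.invFunOn g A) (g '' A) := by
    refine .of_dist_le_mul fun p hp q hq => ?_
    have := h _ (section_spec p hp).1 _ (section_spec q hq).1
    rwa [(section_spec p hp).2, (section_spec q hq).2] at this
  have image_eq : (f ∘ Function.invFunOn g A) '' (g '' A) = f '' A := by
    rw [image_image]
    refine image_congr fun x hx => ?_
    obtain ⟨mem, eq⟩ := section_spec (g x) (mem_image_of_mem g hx)
    have := h _ mem _ hx
    rwa [eq, dist_self, mul_zero, dist_le_zero] at this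
  exact image_eq ▸ lipschitz.hausdorffMeasure_image_le hs

lemma measure_le_of_locally_le {X : Type*} [TopologicalSpace X] [SecondCountableTopology X]
    [MeasurableSpace X] [OpensMeasurableSpace X] {μ ν : Measure X} {S : Set X}
    (hS : MeasurableSet S)
    (h : ∀ x ∈ S, ∃ U ∈ 𝓝 x, ∀ A ⊆ S ∩ U, MeasurableSet A → μ A ≤ ν A) : μ S ≤ ν S := by
  choose! U hU hle using h
  obtain ⟨t, htS, ht, hcover⟩ := TopologicalSpace.countable_cover_nhdsWithin
    (f := fun x => interior (U x)) fun x hx =>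
      mem_nhdsWithin_of_mem_nhds (interior_mem_nhds.2 (hU x hx))
  rcases S.eq_empty_or_nonempty with rfl | hne
  · simp
  obtain ⟨x, rfl⟩ : ∃ x : ℕ → X, t = range x := ht.exists_eq_range <| by
    by_contra hempty
    rw [not_nonempty_iff_eq_empty.1 hempty] at hcover
    simp only [mem_empty_iff_false, iUnion_of_empty, iUnion_empty] at hcover
    exact hne.not_subset_empty hcover
  rw [biUnion_range] at hcover
  let A : ℕ → Set X := fun n => S ∩ disjointed (fun n => interior (U (x n))) n
  have hA (n : ℕ) : MeasurableSet (A n) :=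
    hS.inter (.disjointed (fun n => isOpen_interior.measurableSet) n)
  have disjoint : Pairwise (Function.onFun Disjoint A) := fun i j hij =>
    (disjoint_disjointed _ hij).mono inter_subset_right inter_subset_right
  have iUnion_eq : ⋃ n, A n = S := by
    rw [← inter_iUnion, iUnion_disjointed, inter_eq_left.2 hcover]
  rw [← iUnion_eq, measure_iUnion disjoint hA, measure_iUnion disjoint hA]
  exact ENNReal.tsum_le_tsum fun n => hle (x n) (htS (mem_range_self n)) _
    (inter_subset_inter_right _ ((disjointed_subset _ n).trans interior_subset)) (hA n)

lemma le_of_forall_one_lt_le_pow_mul {a b : ENNReal} (p : ℕ)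
    (h : ∀ K : NNReal, 1 < K → a ≤ (K : ENNReal) ^ p * b) : a ≤ b := by
  have lim : Tendsto (fun K : NNReal => (K : ENNReal) ^ p * b) (𝓝[>] 1) (𝓝 b) := by
    have : Tendsto (fun K : NNReal => (K : ENNReal) ^ p) (𝓝[>] 1) (𝓝 1) := by
      have : Continuous fun K : NNReal => (K : ENNReal) ^ p :=
        (ENNReal.continuous_pow p).comp ENNReal.continuous_coe
      simpa using (this.tendsto 1).mono_left nhdsWithin_le_nhds
    simpa using ENNReal.Tendsto.mul_const (b := b) this (Or.inl one_ne_zero)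
  exact ge_of_tendsto lim (eventually_mem_nhdsWithin.mono h)

section Sphere

variable {E : Type*} [NormedAddCommGroup E] [InnerProductSpace ℝ E]

lemma det_eq_det_restrict_orthogonal_mul [FiniteDimensional ℝ E] {e : E →ₗ[ℝ] E} {x : E}
    (hx : x ≠ 0) {c : ℝ} (he : ∀ v, ⟪e v, x⟫ = c * ⟪v, x⟫)
    (hmap : ∀ v ∈ (ℝ ∙ x)ᗮ, e v ∈ (ℝ ∙ x)ᗮ) :
    LinearMap.det e = LinearMap.det (e.restrict hmap) * c := by
  have mapQ_eq : (ℝ ∙ x)ᗮ.mapQ (ℝ ∙ x)ᗮ e hmap = c • LinearMap.id := by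
    ext v
    simp only [LinearMap.comp_apply, Submodule.mkQ_apply, Submodule.mapQ_apply,
      LinearMap.smul_apply, LinearMap.id_apply]
    rw [← Submodule.Quotient.mk_smul, Submodule.Quotient.eq,
      Submodule.mem_orthogonal_singleton_iff_inner_left, inner_sub_left, he, real_inner_smul_left,
      sub_self]
  have finrank_quotient : Module.finrank ℝ (E ⧸ (ℝ ∙ x)ᗮ) = 1 := by
    have h₁ := Submodule.finrank_quotient_add_finrank (ℝ ∙ x)ᗮ
    have h₂ := Submodule.finrank_add_finrank_orthogonal (ℝ ∙ x)
    rw [finrank_span_singleton hx] at h₂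
    omega
  rw [LinearMap.det_eq_det_mul_det _ e hmap, mapQ_eq, LinearMap.det_smul, finrank_quotient,
    LinearMap.det_id, pow_one, mul_one]

lemma normDet_isometry_comp {F G : Type*} [NormedAddCommGroup F] [InnerProductSpace ℝ F]
    [FiniteDimensional ℝ F] [NormedAddCommGroup G] [InnerProductSpace ℝ G]
    (Q : E →ₗᵢ[ℝ] G) (T : F →ₗ[ℝ] E) :
    (Q.toLinearMap ∘ₗ T).normDet = T.normDet := by
  have : (Q.toLinearMap.domRestrict T.range).normDet = 1 :=
    (Q.comp T.range.subtypeₗᵢ).normDet_eq_one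
  rw [LinearMap.normDet_comp, this, one_mul]

-- Reflecting the normal direction of `T '' (ℝ ∙ x)ᗮ` back to `x` turns `T` into an endomorphism
-- preserving `(ℝ ∙ x)ᗮ`.
lemma normDet_comp_subtype_orthogonal [FiniteDimensional ℝ E] {T : E →ₗ[ℝ] E} {x w : E}
    (hx : ‖x‖ = 1) (hw : w ≠ 0) (hTw : ∀ v, ⟪T v, w⟫ = ⟪v, x⟫) :
    (T ∘ₗ (ℝ ∙ x)ᗮ.subtype).normDet = |LinearMap.det T| * ‖w‖ := by
  have norm_w : ‖w‖ ≠ 0 := norm_ne_zero_iff.2 hw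
  set Q := (ℝ ∙ (‖w‖⁻¹ • w - x))ᗮ.reflection
  have Q_normal : Q (‖w‖⁻¹ • w) = x := Submodule.reflection_sub (by
    rw [norm_smul, norm_inv, norm_norm, inv_mul_cancel₀ norm_w, hx])
  let e : E →ₗ[ℝ] E := Q.toLinearIsometry.toLinearMap ∘ₗ T
  have inner_e (v : E) : ⟪e v, x⟫ = ‖w‖⁻¹ * ⟪v, x⟫ := by
    calc ⟪e v, x⟫ = ⟪Q (T v), Q (‖w‖⁻¹ • w)⟫ := by rw [Q_normal]; rfl
      _ = ‖w‖⁻¹ * ⟪v, x⟫ := by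
        rw [LinearIsometryEquiv.inner_map_map, real_inner_smul_right, hTw]
  have e_mem (v : E) (hv : v ∈ (ℝ ∙ x)ᗮ) : e v ∈ (ℝ ∙ x)ᗮ := by
    rw [Submodule.mem_orthogonal_singleton_iff_inner_left] at hv ⊢
    rw [inner_e, hv, mul_zero]
  have det_e := det_eq_det_restrict_orthogonal_mul
    (norm_ne_zero_iff.1 (hx.trans_ne one_ne_zero)) inner_e e_mem
  calc (T ∘ₗ (ℝ ∙ x)ᗮ.subtype).normDet = (e ∘ₗ (ℝ ∙ x)ᗮ.subtype).normDet := by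
        rw [LinearMap.comp_assoc, normDet_isometry_comp]
    _ = |LinearMap.det (e.restrict e_mem)| := by
        rw [← LinearMap.normDet_eq_abs_det]
        exact (LinearMap.normDet_codRestrict fun v => e_mem v.1 v.2).symm
    _ = |LinearMap.det e| * ‖w‖ := by
        rw [det_e, abs_mul, abs_inv, abs_norm, mul_assoc, inv_mul_cancel₀ norm_w, mul_one]
    _ = |LinearMap.det T| * ‖w‖ := by
        rw [← LinearMap.normDet_eq_abs_det, normDet_isometry_comp, LinearMap.normDet_eq_abs_det]

lemma finrank_orthogonal_singleton {d : ℕ} (hd : Module.finrank ℝ E = d + 1) {x : E}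
    (hx : ‖x‖ = 1) : Module.finrank ℝ (ℝ ∙ x)ᗮ = d :=
  have : Fact (Module.finrank ℝ E = d + 1) := ⟨hd⟩
  Submodule.finrank_orthogonal_span_singleton (norm_ne_zero_iff.1 (hx.trans_ne one_ne_zero))

lemma abs_inner_sub_le_of_mem_sphere {x₀ x y : E} {r : ℝ} (hx : ‖x‖ = 1) (hy : ‖y‖ = 1)
    (hxr : ‖x - x₀‖ ≤ r) (hyr : ‖y - x₀‖ ≤ r) : |⟪x - y, x₀⟫| ≤ r * ‖x - y‖ := by
  have chord_orthogonal : ⟪x - y, x + y⟫ = 0 := by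
    rw [real_inner_comm, real_inner_add_sub_eq_zero_iff, hx, hy]
  have norm_mid : ‖x₀ - (1 / 2 : ℝ) • (x + y)‖ ≤ r :=
    calc ‖x₀ - (1 / 2 : ℝ) • (x + y)‖ = (1 / 2) * ‖(x - x₀) + (y - x₀)‖ := by
          rw [← norm_neg, ← norm_smul_of_nonneg (by norm_num)]
          congr 1
          module
      _ ≤ (1 / 2) * (r + r) := by gcongr; exact norm_add_le_of_le hxr hyr
      _ = r := by ring
  calc |⟪x - y, x₀⟫| = |⟪x - y, x₀ - (1 / 2 : ℝ) • (x + y)⟫| := by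
        rw [inner_sub_right, real_inner_smul_right, chord_orthogonal, mul_zero, sub_zero]
    _ ≤ ‖x - y‖ * r := (abs_real_inner_le_norm _ _).trans (by gcongr)
    _ = r * ‖x - y‖ := mul_comm _ _

lemma norm_comparable_of_norm_sub_le {F : Type*} [NormedAddCommGroup F] {a b : F} {K : ℝ}
    (hK : 1 < K) (h : ‖a - b‖ ≤ (1 - K⁻¹) * ‖a‖) : ‖a‖ ≤ K * ‖b‖ ∧ ‖b‖ ≤ K * ‖a‖ := by
  have hK₀ : 0 < K := one_pos.trans hK
  constructor
  · have : K⁻¹ * ‖a‖ ≤ ‖b‖ := by linarith [norm_sub_norm_le a b]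
    rwa [inv_mul_le_iff₀ hK₀] at this
  · have two_le : 2 ≤ K + K⁻¹ := by
      have := mul_inv_cancel₀ hK₀.ne'
      nlinarith [sq_nonneg (K - 1), inv_pos.2 hK₀]
    have := norm_sub_norm_le b a
    rw [norm_sub_rev] at this
    nlinarith [norm_nonneg a]

-- Near `x₀` the chords of the sphere are almost orthogonal to `x₀`.
lemma exists_nhds_norm_map_starProjection_comparable (T : E ≃L[ℝ] E) {x₀ : E} (hx₀ : ‖x₀‖ = 1)
    {K : ℝ} (hK : 1 < K) : ∃ U ∈ 𝓝 x₀, ∀ x ∈ sphere 0 1 ∩ U, ∀ y ∈ sphere 0 1 ∩ U,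
      ‖T (x - y)‖ ≤ K * ‖T ((ℝ ∙ x₀)ᗮ.starProjection (x - y))‖ ∧
      ‖T ((ℝ ∙ x₀)ᗮ.starProjection (x - y))‖ ≤ K * ‖T (x - y)‖ := by
  let L := ‖(T.symm : E →L[ℝ] E)‖ * ‖T x₀‖ + 1
  have hL : 0 < L := by positivity
  have hK' : 0 < 1 - K⁻¹ := sub_pos.2 (inv_lt_one_of_one_lt₀ hK)
  refine ⟨closedBall x₀ ((1 - K⁻¹) / L), closedBall_mem_nhds _ (by positivity),
    fun x ⟨hx, hxr⟩ y ⟨hy, hyr⟩ => norm_comparable_of_norm_sub_le hK ?_⟩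
  rw [mem_sphere_zero_iff_norm] at hx hy
  rw [mem_closedBall, dist_eq_norm] at hxr hyr
  have symm_bound : ‖x - y‖ ≤ ‖(T.symm : E →L[ℝ] E)‖ * ‖T (x - y)‖ := by
    simpa using (T.symm : E →L[ℝ] E).le_opNorm (T (x - y))
  calc ‖T (x - y) - T ((ℝ ∙ x₀)ᗮ.starProjection (x - y))‖ = |⟪x - y, x₀⟫| * ‖T x₀‖ := by
        rw [← map_sub, Submodule.starProjection_orthogonal_val, sub_sub_cancel,
          Submodule.starProjection_unit_singleton ℝ hx₀, map_smul, norm_smul, Real.norm_eq_abs,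
          real_inner_comm]
    _ ≤ (1 - K⁻¹) / L * (‖(T.symm : E →L[ℝ] E)‖ * ‖T (x - y)‖) * ‖T x₀‖ := by
        gcongr
        exact (abs_inner_sub_le_of_mem_sphere hx hy hxr hyr).trans (by gcongr)
    _ = (1 - K⁻¹) * ‖T (x - y)‖ * ((L - 1) / L) := by simp only [L]; ring
    _ ≤ (1 - K⁻¹) * ‖T (x - y)‖ := by
        refine mul_le_of_le_one_right (by positivity) ((div_le_one hL).2 (by linarith))

lemma ball_subset_orthogonalProjectionOnto_image_sphere {x₀ : E} (hx₀ : ‖x₀‖ = 1) :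
    ball 0 1 ⊆ (ℝ ∙ x₀)ᗮ.orthogonalProjectionOnto '' sphere (0 : E) 1 := by
  intro v hv
  have norm_v : ‖(v : E)‖ < 1 := mem_ball_zero_iff.1 hv
  have v_orthogonal : ⟪(v : E), x₀⟫ = 0 :=
    Submodule.mem_orthogonal_singleton_iff_inner_left.1 v.2
  refine ⟨v + √(1 - ‖(v : E)‖ ^ 2) • x₀, ?_, ?_⟩
  · have : 0 ≤ 1 - ‖(v : E)‖ ^ 2 := by nlinarith [norm_nonneg (v : E)]
    rw [mem_sphere_zero_iff_norm, ← sq_eq_sq₀ (norm_nonneg _) zero_le_one, norm_add_sq_real,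
      real_inner_smul_right, v_orthogonal, norm_smul, hx₀, mul_one, Real.norm_eq_abs, sq_abs,
      Real.sq_sqrt this]
    ring
  · have projection_x₀ : (ℝ ∙ x₀)ᗮ.orthogonalProjectionOnto x₀ = 0 := by
      rw [Submodule.orthogonalProjectionOnto_eq_zero_iff, Submodule.orthogonal_orthogonal]
      exact Submodule.mem_span_singleton_self x₀
    rw [map_add, map_smul, Submodule.orthogonalProjectionOnto_mem_subspace_eq_self, projection_x₀,
      smul_zero, add_zero]

/-- The factor by which the linear isomorphism `T` scales the area of the unit sphere near `x`,
namely `|det T| * ‖T⁻ᵀ x‖`. -/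
noncomputable def sphereJacobian [FiniteDimensional ℝ E] (T : E ≃L[ℝ] E) (x : E) : ENNReal :=
  ENNReal.ofReal (|LinearMap.det T.toLinearMap| *
    ‖ContinuousLinearMap.adjoint (T.symm : E →L[ℝ] E) x‖)

lemma continuous_sphereJacobian [FiniteDimensional ℝ E] (T : E ≃L[ℝ] E) :
    Continuous (sphereJacobian T) := by
  refine ENNReal.continuous_ofReal.comp ?_
  fun_prop

lemma inner_map_adjoint_symm [FiniteDimensional ℝ E] (T : E ≃L[ℝ] E) (v x : E) :
    ⟪T v, ContinuousLinearMap.adjoint (T.symm : E →L[ℝ] E) x⟫ = ⟪v, x⟫ := by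
  rw [ContinuousLinearMap.adjoint_inner_right, ContinuousLinearEquiv.coe_coe,
    ContinuousLinearEquiv.symm_apply_apply]

lemma adjoint_symm_ne_zero [FiniteDimensional ℝ E] (T : E ≃L[ℝ] E) {x : E} (hx : x ≠ 0) :
    ContinuousLinearMap.adjoint (T.symm : E →L[ℝ] E) x ≠ 0 := by
  intro h
  have := inner_map_adjoint_symm T x x
  rw [h, inner_zero_right] at this
  exact hx (inner_self_eq_zero.1 this.symm)

lemma sphereJacobian_ne_zero [FiniteDimensional ℝ E] (T : E ≃L[ℝ] E) {x : E} (hx : x ≠ 0) :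
    sphereJacobian T x ≠ 0 := by
  have := (LinearEquiv.isUnit_det' T.toLinearEquiv).ne_zero
  have := norm_pos_iff.2 (adjoint_symm_ne_zero T hx)
  exact (ENNReal.ofReal_pos.2 (by positivity)).ne'

lemma ofReal_normDet_comp_subtype_orthogonal [FiniteDimensional ℝ E] (T : E ≃L[ℝ] E) {x : E}
    (hx : ‖x‖ = 1) :
    ENNReal.ofReal (T.toLinearMap ∘ₗ (ℝ ∙ x)ᗮ.subtype).normDet = sphereJacobian T x := by
  rw [normDet_comp_subtype_orthogonal hx
    (adjoint_symm_ne_zero T (norm_ne_zero_iff.1 (hx.trans_ne one_ne_zero)))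
    (fun v => inner_map_adjoint_symm T v x), sphereJacobian]

lemma sphereJacobian_refl [FiniteDimensional ℝ E] {x : E} (hx : ‖x‖ = 1) :
    sphereJacobian (.refl ℝ E) x = 1 := by
  rw [← ofReal_normDet_comp_subtype_orthogonal _ hx, ← ENNReal.ofReal_one]
  exact congrArg _ (LinearMap.normDet_subtype _)

variable [FiniteDimensional ℝ E] [MeasurableSpace E] [BorelSpace E] {d : ℕ}

lemma exists_nhds_hausdorffMeasure_image_comparable_projection
    (hd : Module.finrank ℝ E = d + 1) (T : E ≃L[ℝ] E) {x₀ : E} (hx₀ : ‖x₀‖ = 1) {K : NNReal}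
    (hK : 1 < K) :
    ∃ U ∈ 𝓝 x₀, ∀ A ⊆ sphere 0 1 ∩ U,
      let B := (ℝ ∙ x₀)ᗮ.orthogonalProjectionOnto '' A
      μH[d] (T '' A) ≤ (K : ENNReal) ^ d * (sphereJacobian T x₀ * μH[d] B) ∧
      sphereJacobian T x₀ * μH[d] B ≤ (K : ENNReal) ^ d * μH[d] (T '' A) := by
  obtain ⟨U, hU, comparable⟩ := exists_nhds_norm_map_starProjection_comparable T hx₀
    (NNReal.coe_lt_coe.2 hK)
  refine ⟨U, hU, fun A hA => ?_⟩
  intro B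
  have image_projection :
      μH[d] ((T ∘ (ℝ ∙ x₀)ᗮ.starProjection) '' A) = sphereJacobian T x₀ * μH[d] B := by
    have := LinearMap.hausdorffMeasure_image (T.toLinearMap ∘ₗ (ℝ ∙ x₀)ᗮ.subtype) B
    rw [finrank_orthogonal_singleton hd hx₀, ofReal_normDet_comp_subtype_orthogonal T hx₀] at this
    rw [← this, image_image]
    rfl
  rw [← image_projection, ← ENNReal.rpow_natCast]
  constructor
  all_goals
    refine hausdorffMeasure_image_le_of_dist_le d.cast_nonneg fun x hx y hy => ?_
    rw [Function.comp_apply, Function.comp_apply, dist_eq_norm, dist_eq_norm,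
      ← map_sub, ← map_sub, ← map_sub]
  · exact (comparable x (hA hx) y (hA hy)).1
  · exact (comparable x (hA hx) y (hA hy)).2

lemma exists_nhds_hausdorffMeasure_le_projection (hd : Module.finrank ℝ E = d + 1) {x₀ : E}
    (hx₀ : ‖x₀‖ = 1) {K : NNReal} (hK : 1 < K) :
    ∃ U ∈ 𝓝 x₀, ∀ A ⊆ sphere 0 1 ∩ U,
      μH[d] A ≤ (K : ENNReal) ^ d * μH[d] ((ℝ ∙ x₀)ᗮ.orthogonalProjectionOnto '' A) := by
  obtain ⟨U, hU, comparable⟩ :=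
    exists_nhds_hausdorffMeasure_image_comparable_projection hd (.refl ℝ E) hx₀ hK
  refine ⟨U, hU, fun A hA => ?_⟩
  simpa [sphereJacobian_refl hx₀] using (comparable A hA).1

lemma hausdorffMeasure_sphere_lt_top (hd : Module.finrank ℝ E = d + 1) :
    μH[d] (sphere (0 : E) 1) < ⊤ := by
  refine (isCompact_sphere 0 1).measure_lt_top_of_nhdsWithin fun x₀ hx₀ => ?_
  have hx₀ := mem_sphere_zero_iff_norm.1 hx₀
  obtain ⟨U, hU, le_projection⟩ :=
    exists_nhds_hausdorffMeasure_le_projection hd hx₀ one_lt_two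
  refine ⟨sphere 0 1 ∩ U, inter_mem_nhdsWithin _ hU, (le_projection _ subset_rfl).trans_lt ?_⟩
  refine ENNReal.mul_lt_top (by simp) ?_
  have bounded : Bornology.IsBounded
      ((ℝ ∙ x₀)ᗮ.orthogonalProjectionOnto '' (sphere (0 : E) 1 ∩ U)) :=
    (ℝ ∙ x₀)ᗮ.orthogonalProjectionOnto.lipschitz.isBounded_image
      (isBounded_sphere.subset inter_subset_left)
  have := bounded.measure_lt_top (μ := μH[(Module.finrank ℝ (ℝ ∙ x₀)ᗮ : ℝ)])
  rwa [finrank_orthogonal_singleton hd hx₀] at this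

lemma hausdorffMeasure_sphere_pos (hd : Module.finrank ℝ E = d + 1) :
    0 < μH[d] (sphere (0 : E) 1) := by
  have : Nontrivial E := Module.nontrivial_of_finrank_pos (R := ℝ) (by omega)
  obtain ⟨x₀, hx₀⟩ := exists_norm_eq E zero_le_one
  have ball_pos : 0 < μH[(Module.finrank ℝ (ℝ ∙ x₀)ᗮ : ℝ)] (ball (0 : (ℝ ∙ x₀)ᗮ) 1) :=
    measure_ball_pos _ _ one_pos
  rw [finrank_orthogonal_singleton hd hx₀] at ball_pos
  exact ball_pos.trans_le <|
    (measure_mono (ball_subset_orthogonalProjectionOnto_image_sphere hx₀)).trans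
      (hausdorffMeasure_orthogonalProjectionOnto_le _ _ _ d.cast_nonneg)

lemma exists_nhds_setLIntegral_comparable {X : Type*} [TopologicalSpace X] [MeasurableSpace X]
    {f : X → ENNReal} {x₀ : X} (hf : ContinuousAt f x₀) (h₀ : f x₀ ≠ 0) (h_top : f x₀ ≠ ⊤)
    {K : NNReal} (hK : 1 < K) (μ : Measure X) :
    ∃ U ∈ 𝓝 x₀, ∀ A ⊆ U, MeasurableSet A →
      f x₀ * μ A ≤ K * ∫⁻ x in A, f x ∂μ ∧ ∫⁻ x in A, f x ∂μ ≤ K * (f x₀ * μ A) := by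
  have hK' : (1 : ENNReal) < K := by exact_mod_cast hK
  have upper : ∀ᶠ x in 𝓝 x₀, f x < K * f x₀ := by
    refine hf.eventually_lt_const ?_
    simpa using ENNReal.mul_lt_mul_left h₀ h_top hK'
  have lower : ∀ᶠ x in 𝓝 x₀, f x₀ < K * f x := by
    refine (ENNReal.Tendsto.const_mul hf (.inl h₀)).eventually_const_lt ?_
    simpa using ENNReal.mul_lt_mul_left h₀ h_top hK'
  refine ⟨_, upper.and lower, fun A hA hAm => ⟨?_, ?_⟩⟩
  · rw [← setLIntegral_const, ← lintegral_const_mul' _ _ ENNReal.coe_ne_top]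
    exact setLIntegral_mono' hAm fun x hx => (hA hx).2.le
  · rw [← mul_assoc, ← setLIntegral_const]
    exact setLIntegral_mono' hAm fun x hx => (hA hx).1.le

lemma exists_nhds_hausdorffMeasure_image_comparable (hd : Module.finrank ℝ E = d + 1)
    (T : E ≃L[ℝ] E) {x₀ : E} (hx₀ : ‖x₀‖ = 1) {K : NNReal} (hK : 1 < K) :
    ∃ U ∈ 𝓝 x₀, ∀ A ⊆ sphere 0 1 ∩ U,
      μH[d] (T '' A) ≤ (K : ENNReal) ^ (2 * d) * (sphereJacobian T x₀ * μH[d] A) ∧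
      sphereJacobian T x₀ * μH[d] A ≤ (K : ENNReal) ^ (2 * d) * μH[d] (T '' A) := by
  obtain ⟨U, hU, comparable⟩ :=
    exists_nhds_hausdorffMeasure_image_comparable_projection hd T hx₀ hK
  obtain ⟨V, hV, le_projection⟩ := exists_nhds_hausdorffMeasure_le_projection hd hx₀ hK
  refine ⟨U ∩ V, inter_mem hU hV, fun A hA => ?_⟩
  obtain ⟨image_le, le_image⟩ := comparable A (hA.trans (by gcongr; exact inter_subset_left))
  have le_proj := le_projection A (hA.trans (by gcongr; exact inter_subset_right))
  have proj_le := hausdorffMeasure_orthogonalProjectionOnto_le (ℝ ∙ x₀)ᗮ d A d.cast_nonneg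
  have one_le : 1 ≤ (K : ENNReal) ^ d := one_le_pow₀ (by exact_mod_cast hK.le)
  rw [two_mul, pow_add, mul_assoc, mul_assoc]
  constructor
  · refine image_le.trans (mul_le_mul_right ?_ _)
    exact (mul_le_mul_right proj_le _).trans (le_mul_of_one_le_left' one_le)
  · calc sphereJacobian T x₀ * μH[d] A
        ≤ sphereJacobian T x₀ * ((K : ENNReal) ^ d * _) := by gcongr
      _ = (K : ENNReal) ^ d * (sphereJacobian T x₀ * _) := mul_left_comm _ _ _
      _ ≤ (K : ENNReal) ^ d * ((K : ENNReal) ^ d * μH[d] (T '' A)) := mul_le_mul_right le_image _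

lemma exists_nhds_hausdorffMeasure_image_comparable_setLIntegral
    (hd : Module.finrank ℝ E = d + 1) (T : E ≃L[ℝ] E) {x₀ : E} (hx₀ : ‖x₀‖ = 1) {K : NNReal}
    (hK : 1 < K) :
    ∃ U ∈ 𝓝 x₀, ∀ A ⊆ sphere 0 1 ∩ U, MeasurableSet A →
      μH[d] (T '' A) ≤ (K : ENNReal) ^ (2 * d + 1) * ∫⁻ x in A, sphereJacobian T x ∂μH[d] ∧
      ∫⁻ x in A, sphereJacobian T x ∂μH[d] ≤ (K : ENNReal) ^ (2 * d + 1) * μH[d] (T '' A) := by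
  obtain ⟨U, hU, image_comparable⟩ := exists_nhds_hausdorffMeasure_image_comparable hd T hx₀ hK
  obtain ⟨V, hV, integral_comparable⟩ := exists_nhds_setLIntegral_comparable
    (continuous_sphereJacobian T).continuousAt
    (sphereJacobian_ne_zero T (norm_ne_zero_iff.1 (hx₀.trans_ne one_ne_zero)))
    ENNReal.ofReal_ne_top hK μH[d]
  refine ⟨U ∩ V, inter_mem hU hV, fun A hA hAm => ?_⟩
  obtain ⟨image_le, le_image⟩ :=
    image_comparable A (hA.trans (by gcongr; exact inter_subset_left))
  obtain ⟨le_integral, integral_le⟩ :=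
    integral_comparable A (hA.trans (inter_subset_right.trans inter_subset_right)) hAm
  rw [pow_succ, mul_assoc, mul_assoc, mul_left_comm _ (K : ENNReal) (μH[d] _)]
  exact ⟨image_le.trans (by gcongr), integral_le.trans (by gcongr)⟩

theorem hausdorffMeasure_image_sphere (hd : Module.finrank ℝ E = d + 1) (T : E ≃L[ℝ] E) :
    μH[d] (T '' sphere 0 1) = ∫⁻ x in sphere 0 1, sphereJacobian T x ∂μH[d] := by
  let μ := Measure.map T.symm μH[d]
  let ν := μH[d].withDensity (sphereJacobian T)
  have hS : MeasurableSet (sphere (0 : E) 1) := isClosed_sphere.measurableSet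
  have μ_apply (A : Set E) (hA : MeasurableSet A) : μ A = μH[d] (T '' A) := by
    rw [Measure.map_apply T.symm.continuous.measurable hA, T.image_eq_preimage_symm]
  have ν_apply (A : Set E) (hA : MeasurableSet A) :
      ν A = ∫⁻ x in A, sphereJacobian T x ∂μH[d] := withDensity_apply _ hA
  rw [← μ_apply _ hS, ← ν_apply _ hS]
  refine le_antisymm ?_ ?_
  all_goals
    refine le_of_forall_one_lt_le_pow_mul (2 * d + 1) fun K hK =>
      measure_le_of_locally_le (ν := (K : ENNReal) ^ (2 * d + 1) • _) hS fun x hx => ?_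
    obtain ⟨U, hU, comparable⟩ := exists_nhds_hausdorffMeasure_image_comparable_setLIntegral hd T
      (mem_sphere_zero_iff_norm.1 hx) hK
    refine ⟨U, hU, fun A hA hAm => ?_⟩
    rw [Measure.smul_apply, smul_eq_mul, μ_apply A hAm, ν_apply A hAm]
  · exact (comparable A hA hAm).1
  · exact (comparable A hA hAm).2

end Sphere

/-! ### Moments of the unit sphere -/

lemma isFiniteMeasure_restrict_sphere (N : ℕ) :
    IsFiniteMeasure ((μH[(N : ℝ) - 1]).restrict (sphere (0 : euc N) 1)) := by
  refine isFiniteMeasure_restrict.2 ?_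
  rcases N with _ | d
  · rw [sphere_eq_empty_of_subsingleton one_ne_zero, measure_empty]
    exact ENNReal.zero_ne_top
  · rw [Nat.cast_succ, add_sub_cancel_right]
    exact (hausdorffMeasure_sphere_lt_top (by simp)).ne

/-- The `(N - 1)`-dimensional Hausdorff measure of `ℝ^N`, restricted to the unit sphere. -/
noncomputable def unitSphereMeasure (N : ℕ) : Measure (euc N) :=
  (μH[(N : ℝ) - 1]).restrict (sphere 0 1)

section Moments

variable {N : ℕ}

instance : IsFiniteMeasure (unitSphereMeasure N) := isFiniteMeasure_restrict_sphere N

lemma unitSphereMeasure_real_univ_pos (hN : 0 < N) : 0 < (unitSphereMeasure N).real univ := by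
  obtain ⟨d, rfl⟩ := Nat.exists_eq_add_of_le' hN
  refine (measureReal_ne_zero_iff).2 ?_ |>.symm.lt_of_le measureReal_nonneg
  rw [unitSphereMeasure, Measure.restrict_apply_univ, Nat.cast_succ, add_sub_cancel_right]
  exact (hausdorffMeasure_sphere_pos (by simp)).ne'

lemma ae_unitSphereMeasure_norm_eq_one : ∀ᵐ x ∂unitSphereMeasure N, ‖x‖ = 1 := by
  filter_upwards [ae_restrict_mem isClosed_sphere.measurableSet] with x hx
  exact mem_sphere_zero_iff_norm.1 hx

lemma integrable_unitSphereMeasure {f : euc N → ℝ} (hf : Continuous f) :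
    Integrable f (unitSphereMeasure N) := by
  obtain ⟨C, hC⟩ := (isCompact_sphere (0 : euc N) 1).exists_bound_of_continuousOn hf.continuousOn
  refine .of_bound hf.aestronglyMeasurable C ?_
  filter_upwards [ae_restrict_mem isClosed_sphere.measurableSet] with x hx using hC x hx

lemma integral_unitSphereMeasure_comp (U : euc N ≃ₗᵢ[ℝ] euc N) (f : euc N → ℝ) :
    ∫ x, f (U x) ∂unitSphereMeasure N = ∫ x, f x ∂unitSphereMeasure N := by
  have preserving := U.toIsometryEquiv.measurePreserving_hausdorffMeasure ((N : ℝ) - 1)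
  have preimage_sphere : U.toIsometryEquiv ⁻¹' sphere (0 : euc N) 1 = sphere 0 1 := by ext; simp
  have := preserving.setIntegral_preimage_emb U.toHomeomorph.measurableEmbedding f (sphere 0 1)
  rwa [preimage_sphere] at this

lemma integral_unitSphereMeasure_inner_congr {u w : euc N} (h : ‖u‖ = ‖w‖) (f : ℝ → ℝ) :
    ∫ x, f ⟪u, x⟫ ∂unitSphereMeasure N = ∫ x, f ⟪w, x⟫ ∂unitSphereMeasure N := by
  rw [← integral_unitSphereMeasure_comp (ℝ ∙ (u - w))ᗮ.reflection fun x => f ⟪w, x⟫]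
  have reflect : (ℝ ∙ (u - w))ᗮ.reflection u = w := Submodule.reflection_sub h
  refine integral_congr_ae (.of_forall fun x => congrArg f ?_)
  rw [← LinearIsometryEquiv.inner_map_map (ℝ ∙ (u - w))ᗮ.reflection u x, reflect]

lemma integral_coord_congr (f : ℝ → ℝ) (i j : Fin N) :
    ∫ x, f (x i) ∂unitSphereMeasure N = ∫ x, f (x j) ∂unitSphereMeasure N := by
  simpa [EuclideanSpace.inner_single_left] using integral_unitSphereMeasure_inner_congr
    (u := EuclideanSpace.single i 1) (w := EuclideanSpace.single j 1) (by simp) f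

lemma integral_sq_coord (i : Fin N) :
    ∫ x, x i ^ 2 ∂unitSphereMeasure N = (unitSphereMeasure N).real univ / N := by
  have sum_eq : ∑ j, ∫ x, x j ^ 2 ∂unitSphereMeasure N = (unitSphereMeasure N).real univ := by
    rw [← integral_finsetSum _ fun j _ => integrable_unitSphereMeasure (by fun_prop)]
    calc ∫ x, ∑ j, x j ^ 2 ∂unitSphereMeasure N = ∫ _, (1 : ℝ) ∂unitSphereMeasure N := by
          refine integral_congr_ae ?_
          filter_upwards [ae_unitSphereMeasure_norm_eq_one] with x hx
          rw [← norm_sq_eq_sum_sq, hx, one_pow]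
      _ = _ := by rw [integral_const, smul_eq_mul, mul_one]
  have : (N : ℝ) ≠ 0 := Nat.cast_ne_zero.2 (Fin.pos i).ne'
  rw [Finset.sum_congr rfl fun j _ => integral_coord_congr (· ^ 2) j i, Finset.sum_const,
    Finset.card_univ, Fintype.card_fin, nsmul_eq_mul] at sum_eq
  field_simp
  linarith

-- `eᵢ + eⱼ` and `eᵢ - eⱼ` are rotations of `√2 eᵢ`, so `(xᵢ + xⱼ)⁴ + (xᵢ - xⱼ)⁴` and `8 xᵢ⁴` have
-- the same mean.
lemma three_mul_integral_sq_mul_sq {i j : Fin N} (hij : i ≠ j) :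
    3 * ∫ x, x i ^ 2 * x j ^ 2 ∂unitSphereMeasure N = ∫ x, x i ^ 4 ∂unitSphereMeasure N := by
  let e := fun k : Fin N => EuclideanSpace.single (𝕜 := ℝ) k (1 : ℝ)
  have rotate (s : ℝ) (hs : s ^ 2 = 1) :
      ∫ x, (x i + s * x j) ^ 4 ∂unitSphereMeasure N =
        4 * ∫ x, x i ^ 4 ∂unitSphereMeasure N := by
    have norm_eq : ‖e i + s • e j‖ = ‖√2 • e i‖ := by
      rw [← sq_eq_sq₀ (norm_nonneg _) (norm_nonneg _), norm_add_sq_real, norm_smul, norm_smul,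
        mul_pow, mul_pow]
      simp [e, hs, hij, EuclideanSpace.inner_single_left, one_add_one_eq_two]
    have pow_sqrt : √2 ^ 4 = 4 := by
      rw [show 4 = 2 * 2 by rfl, pow_mul, Real.sq_sqrt zero_le_two]; norm_num
    have := integral_unitSphereMeasure_inner_congr norm_eq (· ^ 4)
    simpa [e, inner_add_left, real_inner_smul_left, EuclideanSpace.inner_single_left, mul_pow,
      pow_sqrt, integral_const_mul] using this
  have expand : ∫ x : euc N, (x i + 1 * x j) ^ 4 + (x i + (-1) * x j) ^ 4 ∂unitSphereMeasure N =
      ∫ x : euc N, (2 * x i ^ 4 + 2 * x j ^ 4) + 12 * (x i ^ 2 * x j ^ 2) ∂unitSphereMeasure N := by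
    congr with x
    ring
  have integrable {f : euc N → ℝ} (hf : Continuous f) := integrable_unitSphereMeasure hf
  rw [integral_add (integrable (by fun_prop)) (integrable (by fun_prop)), rotate 1 (by norm_num),
    rotate (-1) (by norm_num),
    integral_add (integrable (by fun_prop)) (integrable (by fun_prop)),
    integral_add (integrable (by fun_prop)) (integrable (by fun_prop)),
    integral_const_mul, integral_const_mul, integral_const_mul,
    integral_coord_congr (· ^ 4) j i] at expand
  linarith

lemma integral_sq_mul_sq (i j : Fin N) :
    ∫ x, x i ^ 2 * x j ^ 2 ∂unitSphereMeasure N =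
      (if i = j then 3 else 1) * ((unitSphereMeasure N).real univ / (N * (N + 2))) := by
  set m := ∫ x, x i ^ 4 ∂unitSphereMeasure N
  have mixed (k : Fin N) :
      ∫ x, x i ^ 2 * x k ^ 2 ∂unitSphereMeasure N = m / 3 + if i = k then 2 * m / 3 else 0 := by
    split_ifs with hik
    · simp_rw [← hik, ← pow_add]
      ring
    · linarith [three_mul_integral_sq_mul_sq hik]
  have sum_eq : ∑ k, ∫ x, x i ^ 2 * x k ^ 2 ∂unitSphereMeasure N =
      (unitSphereMeasure N).real univ / N := by
    rw [← integral_finsetSum _ fun k _ => integrable_unitSphereMeasure (by fun_prop),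
      ← integral_sq_coord i]
    refine integral_congr_ae ?_
    filter_upwards [ae_unitSphereMeasure_norm_eq_one] with x hx
    rw [← Finset.mul_sum, ← norm_sq_eq_sum_sq, hx, one_pow, mul_one]
  have : (N : ℝ) ≠ 0 := Nat.cast_ne_zero.2 (Fin.pos i).ne'
  have m_eq : m = 3 * ((unitSphereMeasure N).real univ / (N * (N + 2))) := by
    simp only [mixed, Finset.sum_add_distrib, Finset.sum_const, Finset.card_univ, Fintype.card_fin,
      nsmul_eq_mul, Finset.sum_ite_eq, Finset.mem_univ, if_true] at sum_eq
    field_simp at sum_eq ⊢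
    linarith
  rw [mixed, m_eq]
  split_ifs <;> ring

lemma integral_quadForm (a : Fin N → ℝ) :
    ∫ x, quadForm a x ∂unitSphereMeasure N = (unitSphereMeasure N).real univ / N * ∑ i, a i := by
  unfold quadForm
  rw [integral_finsetSum _ fun i _ => integrable_unitSphereMeasure (by fun_prop), Finset.mul_sum]
  refine Finset.sum_congr rfl fun i _ => ?_
  rw [integral_const_mul, integral_sq_coord, mul_comm]

lemma integral_quadForm_sq (a : Fin N → ℝ) :
    ∫ x, quadForm a x ^ 2 ∂unitSphereMeasure N =
      (unitSphereMeasure N).real univ / (N * (N + 2)) *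
        ((∑ i, a i) ^ 2 + 2 * ∑ i, a i ^ 2) := by
  have expand (x : euc N) :
      quadForm a x ^ 2 = ∑ i, ∑ j, (a i * a j) * (x i ^ 2 * x j ^ 2) := by
    rw [quadForm, sq, Finset.sum_mul_sum]
    exact Finset.sum_congr rfl fun i _ => Finset.sum_congr rfl fun j _ => by ring
  have summand (i j : Fin N) : ∫ x, (a i * a j) * (x i ^ 2 * x j ^ 2) ∂unitSphereMeasure N =
      (unitSphereMeasure N).real univ / (N * (N + 2)) *
        (a i * a j + if i = j then 2 * a i ^ 2 else 0) := by
    rw [integral_const_mul, integral_sq_mul_sq]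
    split_ifs with hij
    · rw [hij]
      ring
    · ring
  simp_rw [expand]
  rw [integral_finsetSum _ fun i _ => integrable_unitSphereMeasure (by fun_prop),
    Finset.sum_congr rfl fun i _ =>
      integral_finsetSum _ fun j _ => integrable_unitSphereMeasure (by fun_prop)]
  simp only [summand, ← Finset.mul_sum, Finset.sum_add_distrib, ← Finset.sum_mul,
    Finset.sum_ite_eq, Finset.mem_univ, if_true]
  rw [sq (∑ i, a i)]

lemma sum_saddleWeight (hN : 2 ≤ N) : ∑ i : Fin N, saddleWeight i = 0 := by
  simpa using sum_comp_saddleWeight hN (f := id) rfl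

lemma integral_saddleForm (hN : 2 ≤ N) : ∫ x, saddleForm x ∂unitSphereMeasure N = 0 := by
  unfold saddleForm
  rw [integral_quadForm, sum_saddleWeight hN, mul_zero]

lemma integral_saddleForm_sq (hN : 2 ≤ N) :
    ∫ x, saddleForm x ^ 2 ∂unitSphereMeasure N =
      4 * (unitSphereMeasure N).real univ / (N * (N + 2)) := by
  unfold saddleForm
  rw [integral_quadForm_sq, sum_saddleWeight hN, sum_comp_saddleWeight hN (f := (· ^ 2)) (by simp)]
  ring

end Moments

/-! ### Linear images of the unit ball -/

section LinearImage

variable {N : ℕ}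

lemma sharpRadius_image_ball (T : euc N ≃L[ℝ] euc N) :
    sharpRadius N (T '' ball 0 1) = |LinearMap.det T.toLinearMap| ^ ((1 : ℝ) / N) := by
  have ballVol_ne_zero : ballVol N ≠ 0 :=
    (ENNReal.toReal_pos (measure_ball_pos _ _ one_pos).ne' measure_ball_lt_top.ne).ne'
  have volume_image : (volume (T '' ball 0 1)).toReal =
      |LinearMap.det T.toLinearMap| * ballVol N := by
    rw [Measure.addHaar_image_continuousLinearEquiv, ENNReal.toReal_mul,
      ENNReal.toReal_ofReal (abs_nonneg _), ballVol]
  rw [sharpRadius, volume_image, mul_div_cancel_right₀ _ ballVol_ne_zero]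

lemma perim_image_ball (hN : 0 < N) (T : euc N ≃L[ℝ] euc N) :
    perim N (T '' ball 0 1) = |LinearMap.det T.toLinearMap| *
      ∫ x, ‖ContinuousLinearMap.adjoint (T.symm : euc N →L[ℝ] euc N) x‖ ∂unitSphereMeasure N := by
  have frontier_eq : frontier (T '' ball 0 1) = T '' sphere 0 1 := by
    rw [← frontier_ball (0 : euc N) one_ne_zero]
    exact (T.toHomeomorph.image_frontier _).symm
  obtain ⟨d, rfl⟩ := Nat.exists_eq_add_of_le' hN
  rw [perim, frontier_eq, unitSphereMeasure, Nat.cast_succ, add_sub_cancel_right,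
    hausdorffMeasure_image_sphere (by simp) T, ← integral_const_mul,
    integral_eq_lintegral_of_nonneg_ae (.of_forall fun x => by positivity)
      (by fun_prop)]
  rfl

open scoped Pointwise in
lemma perim_ball (hN : 0 < N) {R : ℝ} (hR : 0 < R) :
    perim N (ball 0 R) = R ^ (N - 1) * (unitSphereMeasure N).real univ := by
  obtain ⟨d, rfl⟩ := Nat.exists_eq_add_of_le' hN
  have sphere_eq : sphere (0 : euc (d + 1)) R = R • sphere (0 : euc (d + 1)) 1 := by
    rw [smul_sphere' hR.ne', smul_zero, Real.norm_of_nonneg hR.le, mul_one]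
  rw [perim, frontier_ball _ hR.ne', sphere_eq, unitSphereMeasure, Nat.cast_succ,
    add_sub_cancel_right, add_tsub_cancel_right, Measure.real, Measure.restrict_apply_univ,
    Measure.hausdorffMeasure_smul₀ d.cast_nonneg hR.ne', ENNReal.smul_def, smul_eq_mul,
    ENNReal.toReal_mul]
  simp [abs_of_pos hR]

lemma perDeficit_image_ball (hN : 0 < N) (T : euc N ≃L[ℝ] euc N) :
    perDeficit N (T '' ball 0 1) = sharpRadius N (T '' ball 0 1) *
      (⨍ x, ‖ContinuousLinearMap.adjoint (T.symm : euc N →L[ℝ] euc N) x‖ ∂unitSphereMeasure N)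
        - 1 := by
  have det_pos : 0 < |LinearMap.det T.toLinearMap| := abs_pos.2 T.toLinearEquiv.isUnit_det'.ne_zero
  have radius_pos : 0 < sharpRadius N (T '' ball 0 1) := by
    rw [sharpRadius_image_ball]
    positivity
  have det_eq : |LinearMap.det T.toLinearMap| =
      sharpRadius N (T '' ball 0 1) ^ (N - 1) * sharpRadius N (T '' ball 0 1) := by
    rw [← pow_succ, Nat.sub_add_cancel hN, sharpRadius_image_ball, one_div,
      Real.rpow_inv_natCast_pow det_pos.le hN.ne']
  have sphere_pos := unitSphereMeasure_real_univ_pos hN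
  rw [perDeficit, perim_ball hN radius_pos, perim_image_ball hN, det_eq, average_eq, smul_eq_mul]
  field_simp

end LinearImage

section DiagonalMap

variable {N : ℕ}

/-- The linear map of `ℝ^N` that multiplies the `i`-th coordinate by `c i`. -/
noncomputable def diagonalMap (c : Fin N → ℝ) : euc N →L[ℝ] euc N :=
  Matrix.toEuclideanCLM (n := Fin N) (𝕜 := ℝ) (Matrix.diagonal c)

lemma diagonalMap_apply (c : Fin N → ℝ) (x : euc N) (i : Fin N) :
    diagonalMap c x i = c i * x i := by
  rw [diagonalMap, Matrix.ofLp_toEuclideanCLM, Matrix.mulVec_diagonal]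

lemma det_diagonalMap (c : Fin N → ℝ) :
    LinearMap.det (diagonalMap c).toLinearMap = ∏ i, c i := by
  rw [diagonalMap, Matrix.coe_toEuclideanCLM_eq_toEuclideanLin, LinearMap.det_toLpLin,
    Matrix.det_diagonal]

lemma adjoint_diagonalMap (c : Fin N → ℝ) :
    ContinuousLinearMap.adjoint (diagonalMap c) = diagonalMap c := by
  rw [← ContinuousLinearMap.star_eq_adjoint, diagonalMap, ← map_star, Matrix.star_eq_conjTranspose,
    Matrix.diagonal_conjTranspose, star_trivial]

lemma norm_sq_diagonalMap (c : Fin N → ℝ) (x : euc N) :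
    ‖diagonalMap c x‖ ^ 2 = ∑ i, c i ^ 2 * x i ^ 2 := by
  simp only [norm_sq_eq_sum_sq, diagonalMap_apply, mul_pow]

lemma leftInverse_diagonalMap {c d : Fin N → ℝ} (h : ∀ i, c i * d i = 1) :
    Function.LeftInverse (diagonalMap c) (diagonalMap d) := fun x => by
  ext i
  rw [diagonalMap_apply, diagonalMap_apply, ← mul_assoc, h, one_mul]

/-- `diagonalMap c` as a linear equivalence, for nonvanishing `c`. -/
noncomputable def diagonalEquiv (c : Fin N → ℝ) (hc : ∀ i, c i ≠ 0) : euc N ≃L[ℝ] euc N :=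
  .equivOfInverse (diagonalMap c) (diagonalMap fun i => (c i)⁻¹)
    (leftInverse_diagonalMap fun i => inv_mul_cancel₀ (hc i))
    (leftInverse_diagonalMap fun i => mul_inv_cancel₀ (hc i))

end DiagonalMap

/-! ### The ellipsoid as a linear image of the ball -/

section EllipsoidImage

variable {N : ℕ} {t : ℝ}

lemma prod_comp_saddleWeight (hN : 2 ≤ N) {f : ℝ → ℝ} (hf : f 0 = 1) :
    ∏ i : Fin N, f (saddleWeight i) = f 1 * f (-1) := by
  obtain ⟨n, rfl⟩ := Nat.exists_eq_add_of_le' hN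
  rw [Fin.prod_univ_succ, Fin.prod_univ_succ]
  simp [saddleWeight, hf]

lemma one_add_mul_saddleWeight_pos (ht : |t| ≤ 1 / 2) (i : Fin N) :
    0 < 1 + t * saddleWeight i := by
  have : |t * saddleWeight i| ≤ 1 / 2 := by
    rw [abs_mul]
    exact (mul_le_of_le_one_right (abs_nonneg t) (abs_saddleWeight_le i)).trans ht
  linarith [neg_le_of_abs_le this]

/-- The half-axes of the ellipsoid `‖x‖² + t (x₀² - x₁²) < 1`. -/
noncomputable def halfAxis (t : ℝ) (i : Fin N) : ℝ := (√(1 + t * saddleWeight i))⁻¹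

lemma halfAxis_pos (ht : |t| ≤ 1 / 2) (i : Fin N) : 0 < halfAxis t i :=
  inv_pos.2 (Real.sqrt_pos.2 (one_add_mul_saddleWeight_pos ht i))

lemma contDiffAt_halfAxis (ht : |t| ≤ 1 / 2) (i : Fin N) :
    ContDiffAt ℝ (⊤ : ℕ∞) (fun s => halfAxis s i) t := by
  have pos := one_add_mul_saddleWeight_pos ht i
  have radicand : ContDiffAt ℝ (⊤ : ℕ∞) (fun s => 1 + s * saddleWeight i) t := by fun_prop
  exact (radicand.sqrt pos.ne').inv (Real.sqrt_pos.2 pos).ne'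

lemma norm_diagonalMap_halfAxis_inv (ht : |t| ≤ 1 / 2) (x : euc N) :
    ‖diagonalMap (fun i => (halfAxis t i)⁻¹) x‖ = √(‖x‖ ^ 2 + t * saddleForm x) := by
  rw [← Real.sqrt_sq (norm_nonneg _), norm_sq_diagonalMap, norm_sq_eq_sum_sq, saddleForm, quadForm,
    Finset.mul_sum, ← Finset.sum_add_distrib]
  congr 1
  refine Finset.sum_congr rfl fun i _ => ?_
  rw [halfAxis, inv_inv, Real.sq_sqrt (one_add_mul_saddleWeight_pos ht i).le]
  ring

lemma diagonalMap_halfAxis_image_ball (ht : |t| ≤ 1 / 2) :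
    diagonalMap (halfAxis t) '' ball 0 1 = ellipsoid N t := by
  rw [image_eq_preimage_of_inverse
    (leftInverse_diagonalMap fun i => inv_mul_cancel₀ (halfAxis_pos ht i).ne')
    (leftInverse_diagonalMap fun i => mul_inv_cancel₀ (halfAxis_pos ht i).ne')]
  ext x
  rw [mem_preimage, mem_ball_zero_iff, norm_diagonalMap_halfAxis_inv ht, Real.sqrt_lt' one_pos,
    one_pow]
  rfl

lemma det_diagonalMap_halfAxis (hN : 2 ≤ N) (ht : |t| ≤ 1 / 2) :
    LinearMap.det (diagonalMap (halfAxis (N := N) t)).toLinearMap = (√(1 - t ^ 2))⁻¹ := by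
  have : 0 ≤ 1 + t := by linarith [neg_le_of_abs_le ht]
  calc LinearMap.det (diagonalMap (halfAxis (N := N) t)).toLinearMap
      = (√(1 + t * 1))⁻¹ * (√(1 + t * -1))⁻¹ := by
        rw [det_diagonalMap]
        exact prod_comp_saddleWeight hN (f := fun w => (√(1 + t * w))⁻¹) (by simp)
    _ = (√(1 - t ^ 2))⁻¹ := by
        rw [mul_one, ← mul_inv, ← Real.sqrt_mul this]
        ring_nf

lemma sharpRadius_ellipsoid (hN : 2 ≤ N) (ht : |t| ≤ 1 / 2) :
    sharpRadius N (ellipsoid N t) = (1 - t ^ 2) ^ (-(1 / (2 * N)) : ℝ) := by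
  have : 0 ≤ 1 - t ^ 2 := by nlinarith [abs_le.1 ht]
  calc sharpRadius N (ellipsoid N t)
      = |LinearMap.det (diagonalMap (halfAxis (N := N) t)).toLinearMap| ^ ((1 : ℝ) / N) := by
        rw [← diagonalMap_halfAxis_image_ball ht]
        exact sharpRadius_image_ball (diagonalEquiv (halfAxis t) fun i => (halfAxis_pos ht i).ne')
    _ = (1 - t ^ 2) ^ (-(1 / (2 * N)) : ℝ) := by
        rw [det_diagonalMap_halfAxis hN ht, abs_of_nonneg (by positivity), Real.sqrt_eq_rpow,
          ← Real.rpow_neg this, ← Real.rpow_mul this]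
        ring_nf

lemma perDeficit_ellipsoid (hN : 0 < N) (ht : |t| ≤ 1 / 2) :
    perDeficit N (ellipsoid N t) = sharpRadius N (ellipsoid N t) *
      (⨍ x, √(1 + t * saddleForm x) ∂unitSphereMeasure N) - 1 := by
  let T : euc N ≃L[ℝ] euc N := diagonalEquiv (halfAxis t) fun i => (halfAxis_pos ht i).ne'
  have ellipsoid_eq : ellipsoid N t = T '' ball 0 1 := (diagonalMap_halfAxis_image_ball ht).symm
  have norm_eq (x : euc N) : ‖ContinuousLinearMap.adjoint (T.symm : euc N →L[ℝ] euc N) x‖ =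
      √(‖x‖ ^ 2 + t * saddleForm x) := by
    rw [← norm_diagonalMap_halfAxis_inv ht, ← adjoint_diagonalMap]
    rfl
  have average_congr : ⨍ x, √(‖x‖ ^ 2 + t * saddleForm x) ∂unitSphereMeasure N =
      ⨍ x, √(1 + t * saddleForm x) ∂unitSphereMeasure N := by
    refine average_congr ?_
    filter_upwards [ae_unitSphereMeasure_norm_eq_one] with x hx
    rw [hx, one_pow]
  rw [ellipsoid_eq, perDeficit_image_ball hN, ← average_congr]
  simp_rw [norm_eq]

/-- The family of ellipsoids converges smoothly to the unit ball along the diagonal maps of its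
half-axes. -/
noncomputable def ellipsoidSmoothlyConverges (N : ℕ) {δ : ℝ} (hδ : 0 < δ) (hδ_le : δ ≤ 1 / 2) :
    SmoothlyConverges N (ellipsoid N) (ball 0 1) :=
  have abs_le {t : ℝ} (ht : t ∈ Ico 0 δ) : |t| ≤ 1 / 2 :=
    (abs_of_nonneg ht.1).trans_le (ht.2.le.trans hδ_le)
  { δ := δ
    δ_pos := hδ
    Φ := fun t => diagonalMap (halfAxis t)
    Φinv := fun t => diagonalMap fun i => (halfAxis t i)⁻¹
    left_inv := fun t ht => leftInverse_diagonalMap fun i =>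
      inv_mul_cancel₀ (halfAxis_pos (abs_le ht) i).ne'
    right_inv := fun t ht => leftInverse_diagonalMap fun i =>
      mul_inv_cancel₀ (halfAxis_pos (abs_le ht) i).ne'
    smooth_x := fun t _ => (diagonalMap _).contDiff
    smooth_x_inv := fun t _ => (diagonalMap _).contDiff
    smooth_t := fun x => contDiffOn_euclidean.2 fun i t ht => by
      simp only [diagonalMap_apply]
      exact ((contDiffAt_halfAxis (abs_le ht) i).mul contDiffAt_const).contDiffWithinAt
    smooth_t_inv := fun x => contDiffOn_euclidean.2 fun i t ht => by
      simp only [diagonalMap_apply]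
      exact (((contDiffAt_halfAxis (abs_le ht) i).inv (halfAxis_pos (abs_le ht) i).ne').mul
        contDiffAt_const).contDiffWithinAt
    init := by
      ext x
      simp [ellipsoid]
    image := fun t ht => (diagonalMap_halfAxis_image_ball (abs_le ht)).symm }

end EllipsoidImage

/-! ### Second-order expansion of the deficits -/

lemma abs_sqrt_one_add_sub_le {y : ℝ} (hy : |y| ≤ 1 / 2) :
    |√(1 + y) - (1 + y / 2 - y ^ 2 / 8)| ≤ |y| ^ 3 := by
  obtain ⟨hy₁, hy₂⟩ := abs_le.1 hy
  set s := √(1 + y)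
  set p := 1 + y / 2 - y ^ 2 / 8 with hp
  have s_sq : s ^ 2 = 1 + y := Real.sq_sqrt (by linarith)
  have add_ge : 1 / 2 ≤ s + p := by nlinarith [Real.sqrt_nonneg (1 + y)]
  have factor : (s - p) * (s + p) = y ^ 3 * (1 / 8 - y / 64) := by
    linear_combination s_sq - (p + (1 + y / 2 - y ^ 2 / 8)) * hp
  have coeff_le : |1 / 8 - y / 64| ≤ 1 / 2 := by rw [abs_le]; constructor <;> linarith
  refine le_of_mul_le_mul_right ?_ (one_half_pos (α := ℝ))
  calc |s - p| * (1 / 2) ≤ |s - p| * (s + p) := by gcongr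
    _ = |y| ^ 3 * |1 / 8 - y / 64| := by
        rw [← abs_pow, ← abs_mul, ← factor, abs_mul, abs_of_nonneg (by linarith : 0 ≤ s + p)]
    _ ≤ |y| ^ 3 * (1 / 2) := by gcongr

section AverageSqrt

variable {X : Type*} [MeasurableSpace X] {μ : Measure X} {f : X → ℝ}

lemma abs_integral_sqrt_one_add_sub_le [IsProbabilityMeasure μ] (hf : AEStronglyMeasurable f μ)
    (hbound : ∀ᵐ x ∂μ, |f x| ≤ 1) (hmean : ∫ x, f x ∂μ = 0) {t : ℝ} (ht : |t| ≤ 1 / 2) :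
    |∫ x, √(1 + t * f x) ∂μ - (1 - t ^ 2 / 8 * ∫ x, f x ^ 2 ∂μ)| ≤ |t| ^ 3 := by
  have abs_mul_le : ∀ᵐ x ∂μ, |t * f x| ≤ |t| := by
    filter_upwards [hbound] with x hx
    rw [abs_mul]
    exact mul_le_of_le_one_right (abs_nonneg t) hx
  have integrable : Integrable f μ := .of_bound hf 1 hbound
  have integrable_sq : Integrable (fun x => f x ^ 2) μ := by
    refine .of_bound (hf.pow 2) 1 ?_
    filter_upwards [hbound] with x hx
    rw [Real.norm_of_nonneg (sq_nonneg _)]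
    exact (sq_le_one_iff_abs_le_one _).2 hx
  have integrable_sqrt : Integrable (fun x => √(1 + t * f x)) μ := by
    refine .of_bound (by fun_prop) 2 ?_
    filter_upwards [abs_mul_le] with x hx
    rw [Real.norm_of_nonneg (Real.sqrt_nonneg _), Real.sqrt_le_iff]
    exact ⟨zero_le_two, by linarith [le_of_abs_le hx]⟩
  have integral_taylor : ∫ x, (1 + t / 2 * f x - t ^ 2 / 8 * f x ^ 2) ∂μ =
      1 - t ^ 2 / 8 * ∫ x, f x ^ 2 ∂μ := by
    rw [integral_sub (by fun_prop) (by fun_prop), integral_add (by fun_prop) (by fun_prop),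
      integral_const_mul, integral_const_mul, hmean]
    simp
  rw [← integral_taylor, ← integral_sub integrable_sqrt (by fun_prop), ← Real.norm_eq_abs]
  have := norm_integral_le_of_norm_le_const (μ := μ)
    (f := fun x => √(1 + t * f x) - (1 + t / 2 * f x - t ^ 2 / 8 * f x ^ 2)) (C := |t| ^ 3) ?_
  · simpa using this
  filter_upwards [abs_mul_le] with x hx
  calc ‖√(1 + t * f x) - (1 + t / 2 * f x - t ^ 2 / 8 * f x ^ 2)‖
      = |√(1 + t * f x) - (1 + t * f x / 2 - (t * f x) ^ 2 / 8)| := by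
        rw [Real.norm_eq_abs]
        ring_nf
    _ ≤ |t * f x| ^ 3 := abs_sqrt_one_add_sub_le (hx.trans ht)
    _ ≤ |t| ^ 3 := by gcongr

lemma tendsto_average_sqrt_one_add [IsFiniteMeasure μ] [NeZero μ] (hf : AEStronglyMeasurable f μ)
    (hbound : ∀ᵐ x ∂μ, |f x| ≤ 1) (hmean : ∫ x, f x ∂μ = 0) :
    Tendsto (fun t : ℝ => (⨍ x, √(1 + t * f x) ∂μ - 1) / t ^ 2) (𝓝[>] 0)
      (𝓝 (-(⨍ x, f x ^ 2 ∂μ) / 8)) := by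
  have abs_sub_le {t : ℝ} (ht : |t| ≤ 1 / 2) :
      |⨍ x, √(1 + t * f x) ∂μ - (1 - t ^ 2 / 8 * ⨍ x, f x ^ 2 ∂μ)| ≤ |t| ^ 3 :=
    abs_integral_sqrt_one_add_sub_le (hf.smul_measure _)
      (Measure.smul_absolutelyContinuous.ae_le hbound)
      (by rw [integral_smul_measure, hmean, smul_zero]) ht
  rw [tendsto_iff_norm_sub_tendsto_zero]
  refine squeeze_zero' (.of_forall fun _ => norm_nonneg _) ?_
    (tendsto_nhdsWithin_of_tendsto_nhds tendsto_id)
  filter_upwards [self_mem_nhdsWithin, nhdsWithin_le_nhds eventually_abs_le_half] with t pos ht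
  rw [mem_Ioi] at pos
  have remainder_eq : (⨍ x, √(1 + t * f x) ∂μ - 1) / t ^ 2 - -(⨍ x, f x ^ 2 ∂μ) / 8 =
      (⨍ x, √(1 + t * f x) ∂μ - (1 - t ^ 2 / 8 * ⨍ x, f x ^ 2 ∂μ)) / t ^ 2 := by
    field_simp
    ring
  rw [remainder_eq, norm_div, Real.norm_eq_abs, Real.norm_of_nonneg (sq_nonneg t),
    div_le_iff₀ (by positivity)]
  calc |⨍ x, √(1 + t * f x) ∂μ - (1 - t ^ 2 / 8 * ⨍ x, f x ^ 2 ∂μ)| ≤ |t| ^ 3 := abs_sub_le ht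
    _ = id t * t ^ 2 := by rw [abs_of_pos pos, id, pow_succ']

end AverageSqrt

lemma tendsto_mul_sub_one_div_sq {a b : ℝ → ℝ} {α β : ℝ}
    (ha : Tendsto (fun t => (a t - 1) / t ^ 2) (𝓝[>] 0) (𝓝 α))
    (hb : Tendsto (fun t => (b t - 1) / t ^ 2) (𝓝[>] 0) (𝓝 β)) :
    Tendsto (fun t => (a t * b t - 1) / t ^ 2) (𝓝[>] 0) (𝓝 (α + β)) := by
  have sq_tendsto : Tendsto (fun t : ℝ => t ^ 2) (𝓝[>] 0) (𝓝 (0 ^ 2)) :=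
    ((continuous_pow 2).tendsto 0).mono_left nhdsWithin_le_nhds
  have product := (ha.mul ((sq_tendsto.mul hb).const_add 1)).add hb
  rw [zero_pow two_ne_zero, zero_mul, add_zero, mul_one] at product
  refine product.congr' ?_
  filter_upwards [self_mem_nhdsWithin] with t ht
  have : t ≠ 0 := (mem_Ioi.1 ht).ne'
  field_simp
  ring

section DeficitAsymptotics

variable {N : ℕ} {z : ℝ}

lemma tendsto_sharpRadius_ellipsoid (hN : 2 ≤ N) :
    Tendsto (fun t => (sharpRadius N (ellipsoid N t) - 1) / t ^ 2) (𝓝[>] 0)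
      (𝓝 (1 / (2 * (N : ℝ)))) := by
  have hasDerivAt_rpow :
      HasDerivAt (fun s : ℝ => (1 - s) ^ (-(1 / (2 * N)) : ℝ)) (1 / (2 * (N : ℝ))) 0 := by
    have := ((hasDerivAt_id' (0 : ℝ)).const_sub 1).rpow_const (p := -(1 / (2 * N))) (.inl (by simp))
    simpa using this
  have sq_tendsto : Tendsto (fun t : ℝ => t ^ 2) (𝓝[>] 0) (𝓝[≠] 0) := by
    refine tendsto_nhdsWithin_of_tendsto_nhds_of_eventually_within _ ?_ ?_
    · exact ((continuous_pow 2).tendsto' 0 0 (by simp)).mono_left nhdsWithin_le_nhds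
    · filter_upwards [self_mem_nhdsWithin] with t ht
      exact pow_ne_zero 2 (mem_Ioi.1 ht).ne'
  refine (hasDerivAt_rpow.tendsto_slope_zero.comp sq_tendsto).congr' ?_
  filter_upwards [nhdsWithin_le_nhds eventually_abs_le_half] with t ht
  rw [sharpRadius_ellipsoid hN ht]
  simp [div_eq_inv_mul]

lemma tendsto_average_sqrt_one_add_saddleForm (hN : 2 ≤ N) :
    Tendsto (fun t => (⨍ x, √(1 + t * saddleForm x) ∂unitSphereMeasure N - 1) / t ^ 2) (𝓝[>] 0)
      (𝓝 (-(1 / (2 * (N : ℝ) * (N + 2))))) := by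
  have sphere_pos := unitSphereMeasure_real_univ_pos (Nat.zero_lt_of_lt hN)
  have : NeZero (unitSphereMeasure N) := ⟨by rintro h; simp [h] at sphere_pos⟩
  have bound : ∀ᵐ x ∂unitSphereMeasure N, |saddleForm x| ≤ 1 := by
    filter_upwards [ae_unitSphereMeasure_norm_eq_one] with x hx
    simpa [hx] using abs_saddleForm_le x
  have average_sq : ⨍ x, saddleForm x ^ 2 ∂unitSphereMeasure N = 4 / (N * (N + 2)) := by
    rw [average_eq, integral_saddleForm_sq hN, smul_eq_mul]
    field_simp
  convert tendsto_average_sqrt_one_add continuous_saddleForm.aestronglyMeasurable bound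
    (integral_saddleForm hN) using 2
  rw [average_sq]
  field_simp
  norm_num

lemma tendsto_perDeficit_ellipsoid (hN : 2 ≤ N) :
    Tendsto (fun t => perDeficit N (ellipsoid N t) / t ^ 2) (𝓝[>] 0)
      (𝓝 ((N + 1) / (2 * (N : ℝ) * (N + 2)))) := by
  have N_pos : 0 < N := Nat.zero_lt_of_lt hN
  have limit_eq : (N + 1) / (2 * N * (N + 2)) =
      1 / (2 * (N : ℝ)) + -(1 / (2 * N * (N + 2))) := by
    field_simp
    ring
  rw [limit_eq]
  refine (tendsto_mul_sub_one_div_sq (tendsto_sharpRadius_ellipsoid hN)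
    (tendsto_average_sqrt_one_add_saddleForm hN)).congr' ?_
  filter_upwards [nhdsWithin_le_nhds eventually_abs_le_half] with t ht
  rw [perDeficit_ellipsoid N_pos ht]

lemma tendsto_fkDeficit_ellipsoid (hN : 2 ≤ N)
    (hz : IsFirstZero (besselClifford (besselOrder N)) z) :
    Tendsto (fun t => fkDeficit N (ellipsoid N t) / t ^ 2) (𝓝[>] 0)
      (𝓝 (2 * (4 * z - N) / (N ^ 2 * (N + 2)))) := by
  have : (N : ℝ) ≠ 0 := by positivity
  have limit_eq : 2 * (4 * z - N) / (N ^ 2 * (N + 2)) =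
      eigenvalueCoeff (besselOrder N + 1) z + (1 / (2 * N) + 1 / (2 * N)) := by
    rw [eigenvalueCoeff, besselOrder, sub_add_cancel]
    field_simp
    ring
  rw [limit_eq]
  have radius := tendsto_sharpRadius_ellipsoid hN
  refine (tendsto_mul_sub_one_div_sq (tendsto_firstEigenvalue_ellipsoid hN hz)
    (tendsto_mul_sub_one_div_sq radius radius)).congr' ?_
  filter_upwards [nhdsWithin_le_nhds eventually_abs_le_half] with t ht
  have radius_pos : 0 < sharpRadius N (ellipsoid N t) := by
    rw [sharpRadius_ellipsoid hN ht]
    exact Real.rpow_pos_of_pos (by nlinarith [abs_le.1 ht]) _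
  rw [fkDeficit, firstEigenvalue_ball hN hz radius_pos]
  field_simp

lemma eventually_pos_of_tendsto_div_sq {a : ℝ → ℝ} {α : ℝ} (hα : 0 < α)
    (ha : Tendsto (fun t => a t / t ^ 2) (𝓝[>] 0) (𝓝 α)) : ∀ᶠ t in 𝓝[>] 0, 0 < a t := by
  filter_upwards [ha.eventually_const_lt hα] with t ht
  exact pos_of_mul_pos_left (div_eq_mul_inv (a t) _ ▸ ht) (by positivity)

lemma eventually_deficits_pos_ellipsoid (hN : 2 ≤ N) :
    ∀ᶠ t in 𝓝[>] 0, 0 < perDeficit N (ellipsoid N t) ∧ 0 < fkDeficit N (ellipsoid N t) := by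
  obtain ⟨z, hz⟩ := exists_isFirstZero_besselClifford (besselOrder_nonneg hN)
  have : 0 < 4 * z - N := sub_pos.2 (natCast_lt_four_mul_of_isFirstZero hN hz)
  have : 0 < (N : ℝ) := by positivity
  exact (eventually_pos_of_tendsto_div_sq (by positivity) (tendsto_perDeficit_ellipsoid hN)).and
    (eventually_pos_of_tendsto_div_sq (by positivity) (tendsto_fkDeficit_ellipsoid hN hz))

lemma tendsto_perDeficit_div_fkDeficit_ellipsoid (hN : 2 ≤ N) :
    Tendsto (fun t => perDeficit N (ellipsoid N t) / fkDeficit N (ellipsoid N t)) (𝓝[>] 0)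
      (𝓝 (CN N)) := by
  obtain ⟨z, hz⟩ := exists_isFirstZero_besselClifford (besselOrder_nonneg hN)
  have : 0 < 4 * z - N := sub_pos.2 (natCast_lt_four_mul_of_isFirstZero hN hz)
  have : 0 < (N : ℝ) := by positivity
  have limit_eq : CN N = (N + 1) / (2 * N * (N + 2)) / (2 * (4 * z - N) / (N ^ 2 * (N + 2))) := by
    rw [CN_eq hN hz]
    field_simp
    norm_num
  rw [limit_eq]
  refine ((tendsto_perDeficit_ellipsoid hN).div (tendsto_fkDeficit_ellipsoid hN hz)
    (by positivity)).congr' ?_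
  filter_upwards [self_mem_nhdsWithin] with t ht
  exact div_div_div_cancel_right₀ (pow_ne_zero 2 (mem_Ioi.1 ht).ne') _ _

end DeficitAsymptotics

/-- **Theorem 1.2 (optimality).**  For `N ≥ 2` there is a one-parameter family of open bounded
sets of `ℝ^N` smoothly converging to the unit ball, with positive deficits for small `t > 0`,
along which `δP(Ω(t))/δλ(Ω(t)) → C_N`; hence the constant `C_N` is optimal. -/
theorem faber_krahn_deficit_constant_optimal (N : ℕ) (hN : 2 ≤ N) :
    ∃ (Ωf : ℝ → Set (euc N)) (h : SmoothlyConverges N Ωf (ball (0 : euc N) 1)),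
      (∀ t ∈ Ico (0 : ℝ) h.δ, IsOpen (Ωf t)) ∧
      (∀ t ∈ Ico (0 : ℝ) h.δ, Bornology.IsBounded (Ωf t)) ∧
      (∀ t ∈ Ioo (0 : ℝ) h.δ, 0 < perDeficit N (Ωf t)) ∧
      (∀ t ∈ Ioo (0 : ℝ) h.δ, 0 < fkDeficit N (Ωf t)) ∧
      Tendsto (fun t => perDeficit N (Ωf t) / fkDeficit N (Ωf t)) (𝓝[>] (0 : ℝ))
        (𝓝 (CN N)) := by
  obtain ⟨ε, ε_pos, deficits_pos⟩ :=
    mem_nhdsGT_iff_exists_Ioo_subset.1 (eventually_deficits_pos_ellipsoid hN)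
  have δ_pos : 0 < min ε (1 / 2) := lt_min ε_pos one_half_pos
  have lt_ε {t : ℝ} (ht : t ∈ Ioo 0 (min ε (1 / 2))) : t ∈ Ioo 0 ε :=
    ⟨ht.1, ht.2.trans_le (min_le_left _ _)⟩
  refine ⟨ellipsoid N, ellipsoidSmoothlyConverges N δ_pos (min_le_right _ _),
    fun t _ => isOpen_ellipsoid N t, fun t ht => isBounded_ellipsoid ?_,
    fun t ht => (deficits_pos (lt_ε ht)).1, fun t ht => (deficits_pos (lt_ε ht)).2,
    tendsto_perDeficit_div_fkDeficit_ellipsoid hN⟩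
  exact (abs_of_nonneg ht.1).trans_le (ht.2.le.trans (min_le_right _ _))
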